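/- arXiv:1908.00514 — 2 statements merged into one kernel-verified Lean document; each statement's English description precedes it below -/
import Mathlib

section
/- For all constants L > 0, γ > 1, μ > 0, ρ̄ > 0, ℓ₀ > 0, J̲ > 0, J̄ > 0, m₀ ≥ 0, E₀ ≥ 0, K₀ ≥ 0, T > 0 there exists a constant C > 0 with the following property. Let ρ₀ ∈ C¹([0,L]) with 0 < ρ₀ ≤ ρ̄, and let (J, v, π) be a sufficiently smooth classical solution of (E1)–(E3) on [0,L]×[0,T] with boundary condition v(0,t) = v(L,t) = 0, such that π₀ ≥ 0, J̲ ≤ J₀ ≤ J̄, ∫₀ᴸ J₀ dy = ℓ₀, ∫₀ᴸ ρ₀ dy = m₀, ∫₀ᴸ ( ρ₀ v₀²/2 + J₀ π₀/(γ−1) ) dy = E₀, and ‖G₀‖₂ ≤ K₀ where G₀ := μ(∂_y v₀)/J₀ − π₀. Then: sup_{0≤t≤T} ( ‖π(·,t)‖_∞ + ‖J(·,t)‖_∞ ) ≤ C ( 1 + J̄ + ‖π₀‖_∞ ). -/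
open Set MeasureTheory

/-- A classical solution `(J, v, π)` of the Lagrangian 1D non-heat-conductive compressible
Navier–Stokes system (E1)–(E3) on `[0,L] × [0,T]`, together with its partial derivatives
`Jt = ∂ₜJ`, `vy = ∂_y v`, `vt = ∂ₜv`, `w = ∂_y((∂_y v)/J)`, `πy = ∂_y π`, `πt = ∂ₜπ`,
all continuous on `[0,L] × [0,T]`, and `J > 0` everywhere. -/
structure ClassicalSolution (L T μ γ : ℝ) (ρ₀ : ℝ → ℝ)
    (J v π Jt vy vt w πy πt : ℝ → ℝ → ℝ) : Prop where
  Jpos : ∀ y ∈ Set.Icc (0:ℝ) L, ∀ t ∈ Set.Icc (0:ℝ) T, 0 < J y t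
  contJ : ContinuousOn (fun p : ℝ × ℝ => J p.1 p.2) (Set.Icc 0 L ×ˢ Set.Icc 0 T)
  contv : ContinuousOn (fun p : ℝ × ℝ => v p.1 p.2) (Set.Icc 0 L ×ˢ Set.Icc 0 T)
  contPi : ContinuousOn (fun p : ℝ × ℝ => π p.1 p.2) (Set.Icc 0 L ×ˢ Set.Icc 0 T)
  hJt : ∀ y ∈ Set.Icc (0:ℝ) L, ∀ t ∈ Set.Icc (0:ℝ) T,
    HasDerivWithinAt (fun s => J y s) (Jt y t) (Set.Icc 0 T) t
  hvy : ∀ y ∈ Set.Icc (0:ℝ) L, ∀ t ∈ Set.Icc (0:ℝ) T,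
    HasDerivWithinAt (fun x => v x t) (vy y t) (Set.Icc 0 L) y
  hvt : ∀ y ∈ Set.Icc (0:ℝ) L, ∀ t ∈ Set.Icc (0:ℝ) T,
    HasDerivWithinAt (fun s => v y s) (vt y t) (Set.Icc 0 T) t
  hw : ∀ y ∈ Set.Icc (0:ℝ) L, ∀ t ∈ Set.Icc (0:ℝ) T,
    HasDerivWithinAt (fun x => vy x t / J x t) (w y t) (Set.Icc 0 L) y
  hPiy : ∀ y ∈ Set.Icc (0:ℝ) L, ∀ t ∈ Set.Icc (0:ℝ) T,
    HasDerivWithinAt (fun x => π x t) (πy y t) (Set.Icc 0 L) y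
  hPit : ∀ y ∈ Set.Icc (0:ℝ) L, ∀ t ∈ Set.Icc (0:ℝ) T,
    HasDerivWithinAt (fun s => π y s) (πt y t) (Set.Icc 0 T) t
  contJt : ContinuousOn (fun p : ℝ × ℝ => Jt p.1 p.2) (Set.Icc 0 L ×ˢ Set.Icc 0 T)
  contvy : ContinuousOn (fun p : ℝ × ℝ => vy p.1 p.2) (Set.Icc 0 L ×ˢ Set.Icc 0 T)
  contvt : ContinuousOn (fun p : ℝ × ℝ => vt p.1 p.2) (Set.Icc 0 L ×ˢ Set.Icc 0 T)
  contw : ContinuousOn (fun p : ℝ × ℝ => w p.1 p.2) (Set.Icc 0 L ×ˢ Set.Icc 0 T)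
  contPiy : ContinuousOn (fun p : ℝ × ℝ => πy p.1 p.2) (Set.Icc 0 L ×ˢ Set.Icc 0 T)
  contPit : ContinuousOn (fun p : ℝ × ℝ => πt p.1 p.2) (Set.Icc 0 L ×ˢ Set.Icc 0 T)
  eq1 : ∀ y ∈ Set.Icc (0:ℝ) L, ∀ t ∈ Set.Icc (0:ℝ) T, Jt y t = vy y t
  eq2 : ∀ y ∈ Set.Icc (0:ℝ) L, ∀ t ∈ Set.Icc (0:ℝ) T,
    ρ₀ y * vt y t - μ * w y t + πy y t = 0
  eq3 : ∀ y ∈ Set.Icc (0:ℝ) L, ∀ t ∈ Set.Icc (0:ℝ) T,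
    πt y t + γ * (vy y t / J y t) * π y t = μ * (γ - 1) * (vy y t / J y t) ^ 2

/-!
The proof rests on the effective viscous flux `G = μ v_y / J - π`, for which the momentum equation
reads `G_y = ρ₀ v_t` and the pressure equation reads `(J π)_t = (γ - 1) G v_y`.

*Lower bound of `J`.* The flux has a potential `ψ` with `ψ_y = ρ₀ v` and `ψ_t = G`. Then
`μ (log J)_t = ψ_t + π ≥ ψ_t`, so it is enough to bound the decrease of `ψ` in time. Its oscillation
in `y` is at most `∫ ρ₀ |v|`, and `∫ J ψ` has derivative `-∫ (ρ₀ v² + J π)` while `∫ J` is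
conserved; both integrals are controlled by the conserved energy.

*Flux energy.* The energy `F = ∫ J G² / 2` satisfies
`F' = -μ ∫ ρ₀ v_t² + (2γ - 1) ∫ ρ₀ G v v_t`. An Agmon inequality bounds `‖G‖_∞²` by `F` and a small
multiple of `∫ ρ₀ v_t²`, so the second term is absorbed and `F` grows at most exponentially.

*Upper bounds.* The logarithmic derivative of `J (1 + π)` is at most `(2γ / μ) (1 + G²)`, whose time
integral is finite by the dissipation of the flux energy. Dividing by the lower bound of `J` bounds
`π`.
-/

open Filter Topology Function

section Calculus

variable {a b t₀ t₁ t : ℝ}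

lemma integral_mono_of_continuousOn {f g : ℝ → ℝ} (hab : a ≤ b) (hf : ContinuousOn f (Icc a b))
    (hg : ContinuousOn g (Icc a b)) (hfg : ∀ x ∈ Icc a b, f x ≤ g x) :
    ∫ x in a..b, f x ≤ ∫ x in a..b, g x :=
  intervalIntegral.integral_mono_on hab (hf.intervalIntegrable_of_Icc hab)
    (hg.intervalIntegrable_of_Icc hab) hfg

lemma integral_congr_Icc {f g : ℝ → ℝ} (hab : a ≤ b) (hfg : ∀ x ∈ Icc a b, f x = g x) :
    ∫ x in a..b, f x = ∫ x in a..b, g x :=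
  intervalIntegral.integral_congr (by rwa [uIcc_of_le hab])

lemma integral_const_mul_add_const_mul {f g : ℝ → ℝ} (hab : a ≤ b) (hf : ContinuousOn f (Icc a b))
    (hg : ContinuousOn g (Icc a b)) (c d : ℝ) :
    ∫ x in a..b, (c * f x + d * g x) = c * (∫ x in a..b, f x) + d * ∫ x in a..b, g x := by
  rw [intervalIntegral.integral_add ((hf.intervalIntegrable_of_Icc hab).const_mul c)
    ((hg.intervalIntegrable_of_Icc hab).const_mul d), intervalIntegral.integral_const_mul,
    intervalIntegral.integral_const_mul]

lemma integral_mul_le_const_mul_integral {f g : ℝ → ℝ} {C : ℝ} (hab : a ≤ b)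
    (hf : ContinuousOn f (Icc a b)) (hg : ContinuousOn g (Icc a b))
    (hf_nonneg : ∀ x ∈ Icc a b, 0 ≤ f x) (hgC : ∀ x ∈ Icc a b, g x ≤ C) :
    ∫ x in a..b, f x * g x ≤ C * ∫ x in a..b, f x := by
  rw [← intervalIntegral.integral_const_mul]
  exact integral_mono_of_continuousOn hab (hf.mul hg) (hf.const_mul C) fun x hx => by
    simpa only [mul_comm C] using mul_le_mul_of_nonneg_left (hgC x hx) (hf_nonneg x hx)

lemma integral_eq_sub_of_hasDerivWithinAt_Icc {f f' : ℝ → ℝ} {x y : ℝ}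
    (hf : ∀ z ∈ Icc a b, HasDerivWithinAt f (f' z) (Icc a b) z)
    (hf' : ContinuousOn f' (Icc a b)) (hx : x ∈ Icc a b) (hy : y ∈ Icc a b) :
    ∫ z in x..y, f' z = f y - f x := by
  have hsub : uIcc x y ⊆ Icc a b := uIcc_subset_Icc hx hy
  simpa using intervalIntegral.integral_deriv_mul_eq_sub_of_hasDerivWithinAt
    (fun z hz => (hf z (hsub hz)).mono hsub) (fun z _ => hasDerivWithinAt_const z _ (1 : ℝ))
    (hf'.mono hsub).intervalIntegrable intervalIntegrable_const

lemma sub_le_integral_abs_deriv {f f' : ℝ → ℝ} {x y : ℝ}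
    (hf : ∀ z ∈ Icc a b, HasDerivWithinAt f (f' z) (Icc a b) z)
    (hf' : ContinuousOn f' (Icc a b)) (hx : x ∈ Icc a b) (hy : y ∈ Icc a b) :
    f x - f y ≤ ∫ z in a..b, |f' z| := by
  have hab : a ≤ b := hx.1.trans hx.2
  rw [← integral_eq_sub_of_hasDerivWithinAt_Icc hf hf' hy hx]
  calc ∫ z in y..x, f' z ≤ |∫ z in y..x, ‖f' z‖| :=
        (Real.le_norm_self _).trans intervalIntegral.norm_integral_le_abs_integral_norm
    _ ≤ |∫ z in a..b, ‖f' z‖| := by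
        refine intervalIntegral.abs_integral_mono_interval ?_ (.of_forall fun z => abs_nonneg _)
          (hf'.abs.intervalIntegrable_of_Icc hab)
        rw [uIoc_of_le hab]
        exact Ioc_subset_Ioc (le_min hy.1 hx.1) (max_le hy.2 hx.2)
    _ = ∫ z in a..b, |f' z| :=
        abs_of_nonneg (intervalIntegral.integral_nonneg hab fun z _ => abs_nonneg _)

lemma integral_mul_deriv_eq_neg_of_boundary_eq_zero {f f' g g' : ℝ → ℝ} (hab : a ≤ b)
    (hf : ∀ x ∈ Icc a b, HasDerivWithinAt f (f' x) (Icc a b) x)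
    (hg : ∀ x ∈ Icc a b, HasDerivWithinAt g (g' x) (Icc a b) x)
    (hf' : ContinuousOn f' (Icc a b)) (hg' : ContinuousOn g' (Icc a b))
    (hga : g a = 0) (hgb : g b = 0) :
    ∫ x in a..b, f x * g' x = -∫ x in a..b, f' x * g x := by
  rw [← uIcc_of_le hab] at hf hg
  rw [intervalIntegral.integral_mul_deriv_eq_deriv_mul_of_hasDerivWithinAt hf hg
    (hf'.intervalIntegrable_of_Icc hab) (hg'.intervalIntegrable_of_Icc hab), hga, hgb]
  ring

lemma hasDerivWithinAt_integral_Icc {f : ℝ → ℝ} (hf : ContinuousOn f (Icc a b)) {x : ℝ}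
    (hx : x ∈ Icc a b) :
    HasDerivWithinAt (fun u => ∫ y in a..u, f y) (f x) (Icc a b) x := by
  have : Fact (x ∈ Icc a b) := ⟨hx⟩
  exact intervalIntegral.integral_hasDerivWithinAt_right
    ((hf.mono (Icc_subset_Icc_right hx.2)).intervalIntegrable_of_Icc hx.1)
    (hf.stronglyMeasurableAtFilter_nhdsWithin measurableSet_Icc x) (hf x hx)

lemma le_gronwallBound_of_hasDerivWithinAt_le {f f' : ℝ → ℝ} {K ε : ℝ}
    (hf : ∀ s ∈ Icc t₀ t₁, HasDerivWithinAt f (f' s) (Icc t₀ t₁) s)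
    (hf' : ∀ s ∈ Icc t₀ t₁, f' s ≤ K * f s + ε) (ht : t ∈ Icc t₀ t₁) :
    f t ≤ gronwallBound (f t₀) K ε (t - t₀) :=
  le_gronwallBound_of_liminf_deriv_right_le (fun s hs => (hf s hs).continuousWithinAt)
    (fun s hs _ hr => ((hf s (Ico_subset_Icc_self hs)).mono_of_mem_nhdsWithin
      (Icc_mem_nhdsGE_of_mem hs)).liminf_right_slope_le hr)
    le_rfl (fun s hs => hf' s (Ico_subset_Icc_self hs)) t ht

lemma le_mul_exp_of_hasDerivWithinAt_le {f f' : ℝ → ℝ} {K : ℝ}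
    (hf : ∀ s ∈ Icc t₀ t₁, HasDerivWithinAt f (f' s) (Icc t₀ t₁) s)
    (hf' : ∀ s ∈ Icc t₀ t₁, f' s ≤ K * f s) (ht : t ∈ Icc t₀ t₁) :
    f t ≤ f t₀ * Real.exp (K * (t - t₀)) := by
  simpa only [gronwallBound_ε0] using
    le_gronwallBound_of_hasDerivWithinAt_le hf (ε := 0) (by simpa using hf') ht

lemma le_add_mul_of_hasDerivWithinAt_le {f f' : ℝ → ℝ} {C : ℝ}
    (hf : ∀ s ∈ Icc t₀ t₁, HasDerivWithinAt f (f' s) (Icc t₀ t₁) s)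
    (hf' : ∀ s ∈ Icc t₀ t₁, f' s ≤ C) (ht : t ∈ Icc t₀ t₁) :
    f t ≤ f t₀ + C * (t - t₀) := by
  simpa only [gronwallBound_K0] using
    le_gronwallBound_of_hasDerivWithinAt_le hf (K := 0) (by simpa using hf') ht

lemma apply_left_le_of_hasDerivWithinAt_nonneg {f f' : ℝ → ℝ}
    (hf : ∀ s ∈ Icc t₀ t₁, HasDerivWithinAt f (f' s) (Icc t₀ t₁) s)
    (hf' : ∀ s ∈ Icc t₀ t₁, 0 ≤ f' s) (ht : t ∈ Icc t₀ t₁) : f t₀ ≤ f t := by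
  have h := le_add_mul_of_hasDerivWithinAt_le (C := 0) (fun s hs => (hf s hs).neg)
    (fun s hs => neg_nonpos.2 (hf' s hs)) ht
  simpa using h

lemma eq_apply_left_of_hasDerivWithinAt_zero {f : ℝ → ℝ}
    (hf : ∀ s ∈ Icc t₀ t₁, HasDerivWithinAt f 0 (Icc t₀ t₁) s) (ht : t ∈ Icc t₀ t₁) :
    f t = f t₀ :=
  constant_of_derivWithin_zero (fun s hs => (hf s hs).differentiableWithinAt)
    (fun s hs => (hf s (Ico_subset_Icc_self hs)).derivWithin
      (uniqueDiffOn_Icc (hs.1.trans_lt hs.2) s (Ico_subset_Icc_self hs))) t ht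

lemma hasDerivWithinAt_of_sub_between {f p r : ℝ → ℝ} {l : ℝ} {s : Set ℝ}
    (hp : Tendsto p (𝓝[s \ {t}] t) (𝓝 l)) (hr : Tendsto r (𝓝[s \ {t}] t) (𝓝 l))
    (hpf : ∀ x ∈ s, (x - t) * p x ≤ f x - f t) (hfr : ∀ x ∈ s, f x - f t ≤ (x - t) * r x) :
    HasDerivWithinAt f l s t := by
  rw [hasDerivWithinAt_iff_tendsto_slope]
  have hmin := hp.min hr
  have hmax := hp.max hr
  rw [min_self] at hmin
  rw [max_self] at hmax
  have slope_mem : ∀ x ∈ s \ {t}, min (p x) (r x) ≤ slope f t x ∧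
      slope f t x ≤ max (p x) (r x) := by
    rintro x ⟨hxs, hxt⟩
    have hpx := hpf x hxs
    have hrx := hfr x hxs
    rw [slope_def_field]
    rcases lt_or_gt_of_ne hxt with hlt | hgt
    · exact ⟨min_le_of_right_le ((le_div_iff_of_neg (sub_neg.2 hlt)).2 (by linarith)),
        le_max_of_le_left ((div_le_iff_of_neg (sub_neg.2 hlt)).2 (by linarith))⟩
    · exact ⟨min_le_of_left_le ((le_div_iff₀ (sub_pos.2 hgt)).2 (by linarith)),
        le_max_of_le_right ((div_le_iff₀ (sub_pos.2 hgt)).2 (by linarith))⟩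
  refine tendsto_of_tendsto_of_tendsto_of_le_of_le' hmin hmax ?_ ?_
  all_goals filter_upwards [self_mem_nhdsWithin] with x hx
  exacts [(slope_mem x hx).1, (slope_mem x hx).2]

end Calculus

section Rectangle

variable {a b t₀ t₁ t : ℝ} {f f' : ℝ → ℝ → ℝ}

lemma norm_slope_le_of_norm_hasDerivWithinAt_le {f f' : ℝ → ℝ} {s : Set ℝ} {C x y : ℝ}
    (hs : Convex ℝ s) (hf : ∀ x ∈ s, HasDerivWithinAt f (f' x) s x) (hC : ∀ x ∈ s, ‖f' x‖ ≤ C)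
    (hx : x ∈ s) (hy : y ∈ s) (hxy : y ≠ x) : ‖slope f x y‖ ≤ C := by
  rw [slope_def_field, norm_div, div_le_iff₀ (norm_pos_iff.2 (sub_ne_zero.2 hxy))]
  exact hs.norm_image_sub_le_of_norm_hasDerivWithin_le hf hC hx hy

lemma sub_mul_integral_mul_slope (α : ℝ → ℝ) (f : ℝ → ℝ → ℝ) (t s : ℝ) :
    (s - t) * ∫ y in a..b, α y * slope (f y) t s = ∫ y in a..b, α y * (f y s - f y t) := by
  rw [← intervalIntegral.integral_const_mul]
  congr 1 with y
  rw [mul_left_comm, ← smul_eq_mul (s - t), sub_smul_slope, vsub_eq_sub]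

lemma tendsto_integral_mul_slope {α : ℝ → ℝ → ℝ} {σ : ℝ → ℝ} (hab : a ≤ b)
    (hα : ContinuousOn (uncurry α) (Icc a b ×ˢ Icc t₀ t₁))
    (hf : ContinuousOn (uncurry f) (Icc a b ×ˢ Icc t₀ t₁))
    (hf' : ContinuousOn (uncurry f') (Icc a b ×ˢ Icc t₀ t₁))
    (hff' : ∀ y ∈ Icc a b, ∀ s ∈ Icc t₀ t₁, HasDerivWithinAt (f y) (f' y s) (Icc t₀ t₁) s)
    (ht : t ∈ Icc t₀ t₁) (hσ : Tendsto σ (𝓝[Icc t₀ t₁ \ {t}] t) (𝓝[Icc t₀ t₁] t)) :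
    Tendsto (fun s => ∫ y in a..b, α y (σ s) * slope (f y) t s) (𝓝[Icc t₀ t₁ \ {t}] t)
      (𝓝 (∫ y in a..b, α y t * f' y t)) := by
  obtain ⟨A, hA⟩ := (isCompact_Icc.prod isCompact_Icc).exists_bound_of_continuousOn hα
  obtain ⟨C, hC⟩ := (isCompact_Icc.prod isCompact_Icc).exists_bound_of_continuousOn hf'
  have hσ_mem : ∀ᶠ s in 𝓝[Icc t₀ t₁ \ {t}] t, s ∈ Icc t₀ t₁ \ {t} ∧ σ s ∈ Icc t₀ t₁ :=
    eventually_mem_nhdsWithin.and (hσ.eventually eventually_mem_nhdsWithin)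
  refine intervalIntegral.tendsto_integral_filter_of_dominated_convergence (fun _ => A * C)
    ?_ ?_ intervalIntegrable_const ?_
  · filter_upwards [hσ_mem] with s hs
    have hcont : ContinuousOn (fun y => α y (σ s) * slope (f y) t s) (Icc a b) := by
      simp only [slope_def_field]
      exact (hα.uncurry_right _ hs.2).mul
        (((hf.uncurry_right _ hs.1.1).sub (hf.uncurry_right _ ht)).div_const _)
    rw [uIoc_of_le hab]
    exact (hcont.mono Ioc_subset_Icc_self).aestronglyMeasurable measurableSet_Ioc
  · filter_upwards [hσ_mem] with s hs
    refine .of_forall fun y hy => ?_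
    have hy : y ∈ Icc a b := Ioc_subset_Icc_self (uIoc_of_le hab ▸ hy)
    have hαy : ‖α y (σ s)‖ ≤ A := hA (y, σ s) ⟨hy, hs.2⟩
    rw [norm_mul]
    exact mul_le_mul hαy (norm_slope_le_of_norm_hasDerivWithinAt_le (convex_Icc _ _) (hff' y hy)
      (fun r hr => hC (y, r) ⟨hy, hr⟩) ht hs.1.1 hs.1.2) (norm_nonneg _)
      ((norm_nonneg _).trans hαy)
  · refine .of_forall fun y hy => ?_
    have hy : y ∈ Icc a b := Ioc_subset_Icc_self (uIoc_of_le hab ▸ hy)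
    exact ((hα.uncurry_left y hy t ht).tendsto.comp hσ).mul
      (hasDerivWithinAt_iff_tendsto_slope.1 (hff' y hy t ht))

lemma hasDerivWithinAt_integral_of_continuousOn (hab : a ≤ b)
    (hf : ContinuousOn (uncurry f) (Icc a b ×ˢ Icc t₀ t₁))
    (hf' : ContinuousOn (uncurry f') (Icc a b ×ˢ Icc t₀ t₁))
    (hff' : ∀ y ∈ Icc a b, ∀ s ∈ Icc t₀ t₁, HasDerivWithinAt (f y) (f' y s) (Icc t₀ t₁) s)
    (ht : t ∈ Icc t₀ t₁) :
    HasDerivWithinAt (fun s => ∫ y in a..b, f y s) (∫ y in a..b, f' y t) (Icc t₀ t₁) t := by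
  have hslope := tendsto_integral_mul_slope (α := fun _ _ => 1) hab continuousOn_const hf hf' hff'
    ht (tendsto_const_nhdsWithin ht)
  simp only [one_mul] at hslope
  rw [hasDerivWithinAt_iff_tendsto_slope]
  refine hslope.congr' ?_
  filter_upwards [self_mem_nhdsWithin] with s hs
  simp only [slope_def_field]
  rw [intervalIntegral.integral_div, intervalIntegral.integral_sub
    ((hf.uncurry_right s hs.1).intervalIntegrable_of_Icc hab)
    ((hf.uncurry_right t ht).intervalIntegrable_of_Icc hab)]

lemma continuousOn_uncurry_of_hasDerivWithinAt
    (hf : ∀ s ∈ Icc t₀ t₁, ContinuousOn (f · s) (Icc a b))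
    (hf' : ContinuousOn (uncurry f') (Icc a b ×ˢ Icc t₀ t₁))
    (hff' : ∀ y ∈ Icc a b, ∀ s ∈ Icc t₀ t₁, HasDerivWithinAt (f y) (f' y s) (Icc t₀ t₁) s) :
    ContinuousOn (uncurry f) (Icc a b ×ˢ Icc t₀ t₁) := by
  obtain ⟨C, hC⟩ := (isCompact_Icc.prod isCompact_Icc).exists_bound_of_continuousOn hf'
  refine continuousOn_prod_of_continuousOn_lipschitzOnWith' _ C.toNNReal (fun y hy => ?_) hf
  exact (convex_Icc t₀ t₁).lipschitzOnWith_of_nnnorm_hasDerivWithin_le (hff' y hy)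
    fun s hs => NNReal.coe_le_coe.1 ((hC (y, s) ⟨hy, hs⟩).trans (Real.le_coe_toNNReal C))

lemma exists_potential_of_hasDerivWithinAt {p q r : ℝ → ℝ → ℝ} (hab : a ≤ b)
    (hp : ContinuousOn (uncurry p) (Icc a b ×ˢ Icc t₀ t₁))
    (hq : ContinuousOn (uncurry q) (Icc a b ×ˢ Icc t₀ t₁))
    (hr : ContinuousOn (uncurry r) (Icc a b ×ˢ Icc t₀ t₁))
    (hpt : ∀ y ∈ Icc a b, ∀ t ∈ Icc t₀ t₁, HasDerivWithinAt (p y) (r y t) (Icc t₀ t₁) t)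
    (hqy : ∀ y ∈ Icc a b, ∀ t ∈ Icc t₀ t₁, HasDerivWithinAt (q · t) (r y t) (Icc a b) y) :
    ∃ ψ : ℝ → ℝ → ℝ, ContinuousOn (uncurry ψ) (Icc a b ×ˢ Icc t₀ t₁) ∧
      (∀ y ∈ Icc a b, ∀ t ∈ Icc t₀ t₁, HasDerivWithinAt (ψ · t) (p y t) (Icc a b) y) ∧
      (∀ y ∈ Icc a b, ∀ t ∈ Icc t₀ t₁, HasDerivWithinAt (ψ y) (q y t) (Icc t₀ t₁) t) := by
  have ha : a ∈ Icc a b := left_mem_Icc.2 hab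
  let ψ : ℝ → ℝ → ℝ := fun y t => (∫ x in a..y, p x t) + ∫ s in t₀..t, q a s
  have hψy : ∀ y ∈ Icc a b, ∀ t ∈ Icc t₀ t₁,
      HasDerivWithinAt (ψ · t) (p y t) (Icc a b) y := fun y hy t ht =>
    (hasDerivWithinAt_integral_Icc (hp.uncurry_right t ht) hy).add_const _
  have hψt : ∀ y ∈ Icc a b, ∀ t ∈ Icc t₀ t₁,
      HasDerivWithinAt (ψ y) (q y t) (Icc t₀ t₁) t := by
    intro y hy t ht
    have hsub : Icc a y ⊆ Icc a b := Icc_subset_Icc_right hy.2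
    have hsub2 : Icc a y ×ˢ Icc t₀ t₁ ⊆ Icc a b ×ˢ Icc t₀ t₁ := prod_mono_left hsub
    have hint : HasDerivWithinAt (fun s => ∫ x in a..y, p x s) (∫ x in a..y, r x t)
        (Icc t₀ t₁) t :=
      hasDerivWithinAt_integral_of_continuousOn hy.1 (hp.mono hsub2) (hr.mono hsub2)
        (fun x hx => hpt x (hsub hx)) ht
    have hftc : ∫ x in a..y, r x t = q y t - q a t :=
      integral_eq_sub_of_hasDerivWithinAt_Icc (fun x hx => hqy x hx t ht)
        (hr.uncurry_right t ht) ha hy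
    exact (hint.add (hasDerivWithinAt_integral_Icc (hq.uncurry_left a ha) ht)).congr_deriv
      (by rw [hftc]; ring)
  exact ⟨ψ, continuousOn_uncurry_of_hasDerivWithinAt
    (fun t ht y hy => (hψy y hy t ht).continuousWithinAt) hq hψt, hψy, hψt⟩

end Rectangle

section WeightedInequalities

variable {a b η : ℝ} {g g' : ℝ → ℝ}

lemma abs_two_mul_mul_le (hη : 0 < η) (x y : ℝ) :
    |2 * x * y| ≤ 1 / η * x ^ 2 + η * y ^ 2 := by
  have hminus : 1 / η * x ^ 2 + η * y ^ 2 - 2 * x * y = (x - η * y) ^ 2 / η := by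
    field_simp; ring
  have hplus : 1 / η * x ^ 2 + η * y ^ 2 + 2 * x * y = (x + η * y) ^ 2 / η := by
    field_simp; ring
  have hminus_nonneg : 0 ≤ (x - η * y) ^ 2 / η := by positivity
  have hplus_nonneg : 0 ≤ (x + η * y) ^ 2 / η := by positivity
  rw [abs_le]
  constructor <;> linarith

lemma sq_sub_sq_le_integral (hη : 0 < η)
    (hg : ∀ y ∈ Icc a b, HasDerivWithinAt g (g' y) (Icc a b) y)
    (hg' : ContinuousOn g' (Icc a b)) {x y : ℝ} (hx : x ∈ Icc a b) (hy : y ∈ Icc a b) :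
    g x ^ 2 - g y ^ 2 ≤ 1 / η * (∫ z in a..b, g z ^ 2) + η * ∫ z in a..b, g' z ^ 2 := by
  have hgc : ContinuousOn g (Icc a b) := fun z hz => (hg z hz).continuousWithinAt
  have hab : a ≤ b := hx.1.trans hx.2
  calc g x ^ 2 - g y ^ 2 ≤ ∫ z in a..b, |2 * g z * g' z| :=
        sub_le_integral_abs_deriv (f := fun z => g z ^ 2)
          (fun z hz => ((hg z hz).pow 2).congr_deriv (by simp)) (by fun_prop) hx hy
    _ ≤ ∫ z in a..b, (1 / η * g z ^ 2 + η * g' z ^ 2) :=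
        integral_mono_of_continuousOn hab (by fun_prop) (by fun_prop)
          fun z _ => abs_two_mul_mul_le hη _ _
    _ = 1 / η * (∫ z in a..b, g z ^ 2) + η * ∫ z in a..b, g' z ^ 2 :=
        integral_const_mul_add_const_mul hab (by fun_prop) (by fun_prop) _ _

lemma sq_le_integral_sq_add_integral_deriv_sq (hab : a < b) (hη : 0 < η)
    (hg : ∀ y ∈ Icc a b, HasDerivWithinAt g (g' y) (Icc a b) y)
    (hg' : ContinuousOn g' (Icc a b)) {x : ℝ} (hx : x ∈ Icc a b) :
    g x ^ 2 ≤ (1 / (b - a) + 1 / η) * (∫ y in a..b, g y ^ 2) + η * ∫ y in a..b, g' y ^ 2 := by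
  have hgc : ContinuousOn g (Icc a b) := fun z hz => (hg z hz).continuousWithinAt
  have hlen : 0 < b - a := sub_pos.2 hab
  set I := 1 / η * (∫ z in a..b, g z ^ 2) + η * ∫ z in a..b, g' z ^ 2 with hI
  have hmean : (b - a) * (g x ^ 2 - I) ≤ ∫ y in a..b, g y ^ 2 := by
    rw [← smul_eq_mul, ← intervalIntegral.integral_const]
    exact integral_mono_of_continuousOn hab.le continuousOn_const (hgc.pow 2) fun y hy => by
      linarith [sq_sub_sq_le_integral hη hg hg' hx hy]
  rw [← le_div_iff₀' hlen] at hmean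
  calc g x ^ 2 ≤ (∫ y in a..b, g y ^ 2) / (b - a) + I := by linarith
    _ = _ := by rw [hI]; ring

lemma mul_integral_mul_le {ρ v w : ℝ → ℝ} {κ s : ℝ} (hab : a ≤ b) (hκ : 0 < κ)
    (hρ : ContinuousOn ρ (Icc a b)) (hg : ContinuousOn g (Icc a b)) (hv : ContinuousOn v (Icc a b))
    (hw : ContinuousOn w (Icc a b)) (hρ_nonneg : ∀ x ∈ Icc a b, 0 ≤ ρ x)
    (hs : ∀ x ∈ Icc a b, g x ^ 2 ≤ s) (A : ℝ) :
    A * ∫ x in a..b, ρ x * (g x * v x * w x) ≤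
      A ^ 2 / κ * s * (∫ x in a..b, ρ x * v x ^ 2) + κ / 4 * ∫ x in a..b, ρ x * w x ^ 2 := by
  rw [← intervalIntegral.integral_const_mul, ← integral_const_mul_add_const_mul
    (f := fun x => ρ x * v x ^ 2) (g := fun x => ρ x * w x ^ 2) hab (by fun_prop) (by fun_prop)]
  refine integral_mono_of_continuousOn hab (by fun_prop) (by fun_prop) fun x hx => ?_
  have hρx := hρ_nonneg x hx
  have hyoung : A * (g x * v x * w x) ≤ A ^ 2 / κ * g x ^ 2 * v x ^ 2 + κ / 4 * w x ^ 2 :=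
    calc A * (g x * v x * w x) = 2 * (A * (g x * v x) / 2) * w x := by ring
      _ ≤ 1 / (κ / 4) * (A * (g x * v x) / 2) ^ 2 + κ / 4 * w x ^ 2 :=
        (le_abs_self _).trans (abs_two_mul_mul_le (by positivity) _ _)
      _ = _ := by field_simp; ring
  calc A * (ρ x * (g x * v x * w x)) = ρ x * (A * (g x * v x * w x)) := by ring
    _ ≤ ρ x * (A ^ 2 / κ * s * v x ^ 2 + κ / 4 * w x ^ 2) := by
      gcongr
      exact hyoung.trans (by gcongr; exact hs x hx)
    _ = _ := by ring

end WeightedInequalities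

section SupNorm

variable {X : Type*} {f : X → ℝ} {s : Set X} {M : ℝ} {x : X}

lemma sSup_abs_image_le (hs : s.Nonempty) (hf : ∀ x ∈ s, |f x| ≤ M) :
    sSup ((fun x => |f x|) '' s) ≤ M :=
  csSup_le (hs.image _) (forall_mem_image.2 hf)

lemma abs_le_sSup_abs_image [TopologicalSpace X] (hs : IsCompact s) (hf : ContinuousOn f s)
    (hx : x ∈ s) : |f x| ≤ sSup ((fun x => |f x|) '' s) :=
  le_csSup (hs.image_of_continuousOn hf.abs).bddAbove (mem_image_of_mem _ hx)

end SupNorm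

/-- The effective viscous flux `G = μ v_y / J - π`. The momentum equation reads `G_y = ρ₀ v_t`. -/
noncomputable def effectiveViscousFlux (μ : ℝ) (J vy π : ℝ → ℝ → ℝ) (y t : ℝ) : ℝ :=
  μ * vy y t / J y t - π y t

/-- The total (kinetic plus internal) energy at time `t`. -/
noncomputable def totalEnergy (L γ : ℝ) (ρ₀ : ℝ → ℝ) (J v π : ℝ → ℝ → ℝ) (t : ℝ) : ℝ :=
  ∫ y in 0..L, (ρ₀ y * v y t ^ 2 / 2 + J y t * π y t / (γ - 1))

/-- The weighted `L²` energy `∫ J G² / 2` of the effective viscous flux at time `t`. -/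
noncomputable def fluxEnergy (L μ : ℝ) (J vy π : ℝ → ℝ → ℝ) (t : ℝ) : ℝ :=
  ∫ y in 0..L, J y t * effectiveViscousFlux μ J vy π y t ^ 2 / 2

/-- The quantity `∫ ρ₀ v_t²` dissipated by the flux energy at time `t`. -/
noncomputable def fluxDissipation (L : ℝ) (ρ₀ : ℝ → ℝ) (vt : ℝ → ℝ → ℝ) (t : ℝ) : ℝ :=
  ∫ y in 0..L, ρ₀ y * vt y t ^ 2

namespace ClassicalSolution

variable {L T μ γ ρbar : ℝ} {ρ₀ : ℝ → ℝ} {J v π Jt vy vt w πy πt : ℝ → ℝ → ℝ} {y t : ℝ}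

local notation "G" => effectiveViscousFlux μ J vy π

/-! ### Pointwise identities -/

section Pointwise

variable (S : ClassicalSolution L T μ γ ρ₀ J v π Jt vy vt w πy πt)
include S

lemma hasDerivWithinAt_jacobian (hy : y ∈ Icc 0 L) (ht : t ∈ Icc 0 T) :
    HasDerivWithinAt (J y) (vy y t) (Icc 0 T) t :=
  (S.hJt y hy t ht).congr_deriv (S.eq1 y hy t ht)

lemma continuousOn_flux : ContinuousOn (uncurry G) (Icc 0 L ×ˢ Icc 0 T) :=
  ((continuousOn_const.mul S.contvy).div S.contJ fun p hp => (S.Jpos p.1 hp.1 p.2 hp.2).ne').sub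
    S.contPi

lemma continuousOn_density_mul_acceleration :
    ContinuousOn (uncurry fun y t => ρ₀ y * vt y t) (Icc 0 L ×ˢ Icc 0 T) :=
  ((S.contw.const_mul μ).sub S.contPiy).congr fun p hp => by
    simp only [uncurry, Pi.sub_apply]
    linarith [S.eq2 p.1 hp.1 p.2 hp.2]

lemma hasDerivWithinAt_flux (hy : y ∈ Icc 0 L) (ht : t ∈ Icc 0 T) :
    HasDerivWithinAt (G · t) (ρ₀ y * vt y t) (Icc 0 L) y := by
  simp only [effectiveViscousFlux, mul_div_assoc]
  exact (((S.hw y hy t ht).const_mul μ).sub (S.hPiy y hy t ht)).congr_deriv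
    (by linarith [S.eq2 y hy t ht])

lemma viscosity_mul_deriv_eq (hy : y ∈ Icc 0 L) (ht : t ∈ Icc 0 T) :
    μ * vy y t = J y t * (G y t + π y t) := by
  have hJ := (S.Jpos y hy t ht).ne'
  simp only [effectiveViscousFlux]
  field_simp
  ring

lemma hasDerivWithinAt_jacobian_mul_pressure (hy : y ∈ Icc 0 L) (ht : t ∈ Icc 0 T) :
    HasDerivWithinAt (fun s => J y s * π y s) ((γ - 1) * (G y t * vy y t)) (Icc 0 T) t := by
  refine ((S.hasDerivWithinAt_jacobian hy ht).mul (S.hPit y hy t ht)).congr_deriv ?_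
  have hJ := (S.Jpos y hy t ht).ne'
  have hπt := S.eq3 y hy t ht
  rw [← eq_sub_iff_add_eq] at hπt
  rw [hπt, effectiveViscousFlux]
  field_simp
  ring

lemma pressure_nonneg (hγ : 1 ≤ γ) (hμ : 0 ≤ μ) (hπ₀ : 0 ≤ π y 0) (hy : y ∈ Icc 0 L)
    (ht : t ∈ Icc 0 T) : 0 ≤ π y t := by
  have hderiv : ∀ s ∈ Icc 0 T, HasDerivWithinAt (fun s => J y s ^ γ * π y s)
      (J y s ^ γ * (μ * (γ - 1) * (vy y s / J y s) ^ 2)) (Icc 0 T) s := fun s hs => by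
    refine (((S.hasDerivWithinAt_jacobian hy hs).rpow_const (p := γ)
      (.inl (S.Jpos y hy s hs).ne')).mul (S.hPit y hy s hs)).congr_deriv ?_
    rw [Real.rpow_sub_one (S.Jpos y hy s hs).ne', ← S.eq3 y hy s hs]
    ring
  have h0 : (0 : ℝ) ∈ Icc 0 T := ⟨le_rfl, ht.1.trans ht.2⟩
  have hrpow : ∀ s ∈ Icc 0 T, 0 < J y s ^ γ := fun s hs => Real.rpow_pos_of_pos (S.Jpos y hy s hs) γ
  have hmono := apply_left_le_of_hasDerivWithinAt_nonneg hderiv (fun s hs =>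
    mul_nonneg (hrpow s hs).le (mul_nonneg (mul_nonneg hμ (sub_nonneg.2 hγ)) (sq_nonneg _))) ht
  exact nonneg_of_mul_nonneg_right ((mul_nonneg (hrpow 0 h0).le hπ₀).trans hmono) (hrpow t ht)

end Pointwise

/-! ### Conservation laws -/

section Conservation

variable (S : ClassicalSolution L T μ γ ρ₀ J v π Jt vy vt w πy πt) (hL : 0 ≤ L)
  (hv : ∀ t ∈ Icc 0 T, v 0 t = 0 ∧ v L t = 0)
include S hL hv

lemma integral_flux_mul_deriv_velocity (ht : t ∈ Icc 0 T) :
    ∫ y in 0..L, G y t * vy y t = -∫ y in 0..L, ρ₀ y * vt y t * v y t :=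
  integral_mul_deriv_eq_neg_of_boundary_eq_zero hL (fun _ hy => S.hasDerivWithinAt_flux hy ht)
    (fun y hy => S.hvy y hy t ht) (S.continuousOn_density_mul_acceleration.uncurry_right t ht)
    (S.contvy.uncurry_right t ht) (hv t ht).1 (hv t ht).2

lemma integral_jacobian_eq (ht : t ∈ Icc 0 T) :
    ∫ y in 0..L, J y t = ∫ y in 0..L, J y 0 := by
  refine eq_apply_left_of_hasDerivWithinAt_zero (f := fun s => ∫ y in 0..L, J y s)
    (fun s hs => ?_) ht
  refine (hasDerivWithinAt_integral_of_continuousOn hL S.contJ S.contvy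
    (fun y hy r hr => S.hasDerivWithinAt_jacobian hy hr) hs).congr_deriv ?_
  rw [integral_eq_sub_of_hasDerivWithinAt_Icc (fun y hy => S.hvy y hy s hs)
    (S.contvy.uncurry_right s hs) (left_mem_Icc.2 hL) (right_mem_Icc.2 hL), (hv s hs).1,
    (hv s hs).2, sub_self]

lemma totalEnergy_eq (hγ : γ ≠ 1) (hρ : ContinuousOn ρ₀ (Icc 0 L)) (ht : t ∈ Icc 0 T) :
    totalEnergy L γ ρ₀ J v π t = totalEnergy L γ ρ₀ J v π 0 := by
  have hρ' : ContinuousOn (fun p : ℝ × ℝ => ρ₀ p.1) (Icc 0 L ×ˢ Icc 0 T) :=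
    hρ.comp continuousOn_fst fun _ hp => hp.1
  have henergy : ContinuousOn (uncurry fun y s => ρ₀ y * v y s ^ 2 / 2 + J y s * π y s / (γ - 1))
      (Icc 0 L ×ˢ Icc 0 T) :=
    ((hρ'.mul (S.contv.pow 2)).div_const 2).add ((S.contJ.mul S.contPi).div_const (γ - 1))
  have hpower := S.continuousOn_density_mul_acceleration.mul S.contv
  have hwork := S.continuousOn_flux.mul S.contvy
  refine eq_apply_left_of_hasDerivWithinAt_zero (fun s hs => ?_) ht
  refine (hasDerivWithinAt_integral_of_continuousOn
    (f' := fun y s => ρ₀ y * vt y s * v y s + G y s * vy y s) hL henergy (hpower.add hwork)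
    (fun y hy r hr => ?_) hs).congr_deriv ?_
  · refine (((((S.hvt y hy r hr).pow 2).const_mul (ρ₀ y)).div_const 2).add
      ((S.hasDerivWithinAt_jacobian_mul_pressure hy hr).div_const (γ - 1))).congr_deriv ?_
    rw [mul_div_cancel_left₀ _ (sub_ne_zero.2 hγ)]
    push_cast
    ring
  · rw [intervalIntegral.integral_add, S.integral_flux_mul_deriv_velocity hL hv hs, add_neg_cancel]
    · exact (hpower.uncurry_right (f := fun y s => ρ₀ y * vt y s * v y s) s
        hs).intervalIntegrable_of_Icc hL
    · exact (hwork.uncurry_right (f := fun y s => G y s * vy y s) s hs).intervalIntegrable_of_Icc hL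

end Conservation

section EnergyBounds

variable (S : ClassicalSolution L T μ γ ρ₀ J v π Jt vy vt w πy πt) (hL : 0 ≤ L)
  (hρ : ContinuousOn ρ₀ (Icc 0 L)) (ht : t ∈ Icc 0 T)
include S hL hρ ht

lemma integral_le_mul_totalEnergy {f : ℝ → ℝ} {C : ℝ} (hf : ContinuousOn f (Icc 0 L))
    (hfC : ∀ y ∈ Icc 0 L, f y ≤ C * (ρ₀ y * v y t ^ 2 / 2 + J y t * π y t / (γ - 1))) :
    ∫ y in 0..L, f y ≤ C * totalEnergy L γ ρ₀ J v π t := by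
  have hv := S.contv.uncurry_right t ht
  have hJ := S.contJ.uncurry_right t ht
  have hπ := S.contPi.uncurry_right t ht
  rw [totalEnergy, ← intervalIntegral.integral_const_mul]
  exact integral_mono_of_continuousOn hL hf (by fun_prop) hfC

variable (hγ : 1 < γ) (hρ_nonneg : ∀ y ∈ Icc 0 L, 0 ≤ ρ₀ y) (hπ : ∀ y ∈ Icc 0 L, 0 ≤ π y t)

include hγ hπ in
lemma integral_density_mul_velocity_sq_le :
    ∫ y in 0..L, ρ₀ y * v y t ^ 2 ≤ 2 * totalEnergy L γ ρ₀ J v π t := by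
  refine S.integral_le_mul_totalEnergy hL hρ ht (hρ.mul ((S.contv.uncurry_right t ht).pow 2))
    fun y hy => ?_
  have hinternal : 0 ≤ J y t * π y t / (γ - 1) :=
    div_nonneg (mul_nonneg (S.Jpos y hy t ht).le (hπ y hy)) (sub_nonneg.2 hγ.le)
  linarith

include hγ hρ_nonneg hπ in
lemma integral_momentum_flux_le :
    ∫ y in 0..L, (ρ₀ y * v y t ^ 2 + J y t * π y t) ≤
      (γ + 1) * totalEnergy L γ ρ₀ J v π t := by
  refine S.integral_le_mul_totalEnergy hL hρ ht ((hρ.mul ((S.contv.uncurry_right t ht).pow 2)).add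
    ((S.contJ.uncurry_right t ht).mul (S.contPi.uncurry_right t ht))) fun y hy => ?_
  have hγ' : 0 < γ - 1 := sub_pos.2 hγ
  have hkinetic : 0 ≤ (γ - 1) * (ρ₀ y * v y t ^ 2) :=
    mul_nonneg hγ'.le (mul_nonneg (hρ_nonneg y hy) (sq_nonneg _))
  have hinternal : 0 ≤ J y t * π y t / (γ - 1) :=
    div_nonneg (mul_nonneg (S.Jpos y hy t ht).le (hπ y hy)) hγ'.le
  have hsplit : J y t * π y t = (γ - 1) * (J y t * π y t / (γ - 1)) :=
    (mul_div_cancel₀ _ hγ'.ne').symm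
  linarith

include hγ hρ_nonneg hπ in
lemma integral_abs_momentum_le :
    ∫ y in 0..L, |ρ₀ y * v y t| ≤ (∫ y in 0..L, ρ₀ y) / 2 + totalEnergy L γ ρ₀ J v π t := by
  have hvc := S.contv.uncurry_right t ht
  calc ∫ y in 0..L, |ρ₀ y * v y t|
      ≤ ∫ y in 0..L, (1 / 2 * ρ₀ y + 1 / 2 * (ρ₀ y * v y t ^ 2)) := by
        refine integral_mono_of_continuousOn hL (by fun_prop) (by fun_prop) fun y hy => ?_
        rw [abs_mul, abs_of_nonneg (hρ_nonneg y hy), ← sq_abs (v y t)]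
        nlinarith [mul_nonneg (hρ_nonneg y hy) (sq_nonneg (|v y t| - 1))]
    _ = 1 / 2 * (∫ y in 0..L, ρ₀ y) + 1 / 2 * ∫ y in 0..L, ρ₀ y * v y t ^ 2 :=
        integral_const_mul_add_const_mul hL hρ (hρ.mul (hvc.pow 2)) _ _
    _ ≤ (∫ y in 0..L, ρ₀ y) / 2 + totalEnergy L γ ρ₀ J v π t := by
        linarith [S.integral_density_mul_velocity_sq_le hL hρ ht hγ hπ]

end EnergyBounds

/-! ### Lower bound of the Jacobian -/

section LowerBound

/-- The lower bound of `J` on `[0, T]`: `Jlow` is the initial lower bound, `ℓ₀ = ∫ J₀`, `m₀ = ∫ ρ₀`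
is the mass and `E₀` the total energy. -/
noncomputable def jacobianLowerBound (μ γ ℓ₀ Jlow m₀ E₀ T : ℝ) : ℝ :=
  Jlow * Real.exp (-(2 * (m₀ / 2 + E₀) + (γ + 1) * E₀ * T / ℓ₀) / μ)

variable (S : ClassicalSolution L T μ γ ρ₀ J v π Jt vy vt w πy πt)
include S

lemma jacobian_mul_exp_potential_le {ψ : ℝ → ℝ → ℝ} (hμ : 0 < μ)
    (hψt : ∀ t ∈ Icc 0 T, HasDerivWithinAt (ψ y) (G y t) (Icc 0 T) t)
    (hπ : ∀ t ∈ Icc 0 T, 0 ≤ π y t) (hy : y ∈ Icc 0 L) (ht : t ∈ Icc 0 T) :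
    J y 0 * Real.exp (-(ψ y 0 - ψ y t) / μ) ≤ J y t := by
  have hderiv : ∀ s ∈ Icc 0 T, HasDerivWithinAt (fun s => J y s * Real.exp (-ψ y s / μ))
      (Real.exp (-ψ y s / μ) * (J y s * π y s / μ)) (Icc 0 T) s := fun s hs => by
    refine ((S.hasDerivWithinAt_jacobian hy hs).mul
      (((hψt s hs).neg.div_const μ).exp)).congr_deriv ?_
    have hvy : vy y s = J y s * (G y s + π y s) / μ := by
      rw [← S.viscosity_mul_deriv_eq hy hs, mul_div_cancel_left₀ _ hμ.ne']
    rw [hvy, Pi.neg_apply]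
    ring
  have hmono := apply_left_le_of_hasDerivWithinAt_nonneg hderiv (fun s hs =>
    mul_nonneg (Real.exp_pos _).le
      (div_nonneg (mul_nonneg (S.Jpos y hy s hs).le (hπ s hs)) hμ.le)) ht
  calc J y 0 * Real.exp (-(ψ y 0 - ψ y t) / μ)
      = J y 0 * Real.exp (-ψ y 0 / μ) * Real.exp (ψ y t / μ) := by
        rw [mul_assoc, ← Real.exp_add]
        ring_nf
    _ ≤ J y t * Real.exp (-ψ y t / μ) * Real.exp (ψ y t / μ) :=
        mul_le_mul_of_nonneg_right hmono (Real.exp_pos _).le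
    _ = J y t := by rw [mul_assoc, ← Real.exp_add, neg_div, neg_add_cancel, Real.exp_zero, mul_one]

variable (hL : 0 ≤ L) (hρ : ContinuousOn ρ₀ (Icc 0 L))
include hL hρ

lemma exists_momentum_potential :
    ∃ ψ : ℝ → ℝ → ℝ, ContinuousOn (uncurry ψ) (Icc 0 L ×ˢ Icc 0 T) ∧
      (∀ y ∈ Icc 0 L, ∀ t ∈ Icc 0 T, HasDerivWithinAt (ψ · t) (ρ₀ y * v y t) (Icc 0 L) y) ∧
      (∀ y ∈ Icc 0 L, ∀ t ∈ Icc 0 T, HasDerivWithinAt (ψ y) (G y t) (Icc 0 T) t) :=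
  exists_potential_of_hasDerivWithinAt hL
    ((hρ.comp continuousOn_fst fun _ hp => hp.1).mul S.contv) S.continuousOn_flux
    S.continuousOn_density_mul_acceleration
    (fun y hy t ht => (S.hvt y hy t ht).const_mul (ρ₀ y))
    (fun _ hy _ ht => S.hasDerivWithinAt_flux hy ht)

variable {ψ : ℝ → ℝ → ℝ} (hψ : ContinuousOn (uncurry ψ) (Icc 0 L ×ˢ Icc 0 T))
  (hψy : ∀ y ∈ Icc 0 L, ∀ t ∈ Icc 0 T, HasDerivWithinAt (ψ · t) (ρ₀ y * v y t) (Icc 0 L) y)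

include hψ hψy in
lemma hasDerivWithinAt_integral_jacobian_mul_potential
    (hψt : ∀ y ∈ Icc 0 L, ∀ t ∈ Icc 0 T, HasDerivWithinAt (ψ y) (G y t) (Icc 0 T) t)
    (hv : ∀ t ∈ Icc 0 T, v 0 t = 0 ∧ v L t = 0) (ht : t ∈ Icc 0 T) :
    HasDerivWithinAt (fun s => ∫ y in 0..L, J y s * ψ y s)
      (-∫ y in 0..L, (ρ₀ y * v y t ^ 2 + J y t * π y t)) (Icc 0 T) t := by
  have hvc := S.contv.uncurry_right t ht
  have hvyc := S.contvy.uncurry_right t ht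
  have hJc := S.contJ.uncurry_right t ht
  have hπc := S.contPi.uncurry_right t ht
  have hψc := hψ.uncurry_right t ht
  refine (hasDerivWithinAt_integral_of_continuousOn (f := fun y s => J y s * ψ y s)
    (f' := fun y s => vy y s * ψ y s + J y s * G y s) (t₀ := 0) (t₁ := T) hL (S.contJ.mul hψ)
    ((S.contvy.mul hψ).add (S.contJ.mul S.continuousOn_flux))
    (fun y hy s hs => (S.hasDerivWithinAt_jacobian hy hs).mul (hψt y hy s hs)) ht).congr_deriv ?_
  have hparts : ∫ y in 0..L, (ψ y t + μ) * vy y t = -∫ y in 0..L, ρ₀ y * v y t * v y t :=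
    integral_mul_deriv_eq_neg_of_boundary_eq_zero hL (fun y hy => (hψy y hy t ht).add_const μ)
      (fun y hy => S.hvy y hy t ht) (hρ.mul hvc) hvyc (hv t ht).1 (hv t ht).2
  calc ∫ y in 0..L, (vy y t * ψ y t + J y t * G y t)
      = ∫ y in 0..L, ((ψ y t + μ) * vy y t - J y t * π y t) :=
        integral_congr_Icc hL fun y hy => by linarith [S.viscosity_mul_deriv_eq hy ht]
    _ = -(∫ y in 0..L, ρ₀ y * v y t * v y t) - ∫ y in 0..L, J y t * π y t := by
        rw [← hparts, intervalIntegral.integral_sub]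
        exacts [ContinuousOn.intervalIntegrable_of_Icc hL (by fun_prop),
          (hJc.mul hπc).intervalIntegrable_of_Icc hL]
    _ = -∫ y in 0..L, (ρ₀ y * v y t ^ 2 + J y t * π y t) := by
        simp only [sq, ← mul_assoc]
        rw [intervalIntegral.integral_add, neg_add']
        exacts [ContinuousOn.intervalIntegrable_of_Icc hL (by fun_prop),
          (hJc.mul hπc).intervalIntegrable_of_Icc hL]

include hψ hψy in
lemma potential_sub_le {ℓ M K : ℝ}
    (hψt : ∀ y ∈ Icc 0 L, ∀ t ∈ Icc 0 T, HasDerivWithinAt (ψ y) (G y t) (Icc 0 T) t)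
    (hv : ∀ t ∈ Icc 0 T, v 0 t = 0 ∧ v L t = 0) (hℓ : 0 < ℓ)
    (hJ : ∀ t ∈ Icc 0 T, ∫ y in 0..L, J y t = ℓ)
    (hM : ∀ t ∈ Icc 0 T, ∫ y in 0..L, |ρ₀ y * v y t| ≤ M)
    (hK : ∀ t ∈ Icc 0 T, ∫ y in 0..L, (ρ₀ y * v y t ^ 2 + J y t * π y t) ≤ K)
    (hy : y ∈ Icc 0 L) (ht : t ∈ Icc 0 T) :
    ψ y 0 - ψ y t ≤ 2 * M + K * t / ℓ := by
  have h0 : (0 : ℝ) ∈ Icc 0 T := ⟨le_rfl, ht.1.trans ht.2⟩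
  have hosc : ∀ s ∈ Icc 0 T, ∀ x ∈ Icc 0 L, ∀ z ∈ Icc 0 L, ψ x s - ψ z s ≤ M :=
    fun s hs x hx z hz => (sub_le_integral_abs_deriv (fun u hu => hψy u hu s hs)
      (hρ.mul (S.contv.uncurry_right s hs)) hx hz).trans (hM s hs)
  have hmean : -(∫ x in 0..L, J x t * ψ x t) ≤ -(∫ x in 0..L, J x 0 * ψ x 0) + K * t := by
    simpa only [sub_zero] using le_add_mul_of_hasDerivWithinAt_le
      (f := fun s => -∫ x in 0..L, J x s * ψ x s) (fun s hs =>
      (S.hasDerivWithinAt_integral_jacobian_mul_potential hL hρ hψ hψy hψt hv hs).neg)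
      (fun s hs => by simpa only [neg_neg] using hK s hs) ht
  have hupper : ∫ x in 0..L, J x t * ψ x t ≤ (ψ y t + M) * ℓ := hJ t ht ▸
    integral_mul_le_const_mul_integral hL (S.contJ.uncurry_right t ht) (hψ.uncurry_right t ht)
      (fun x hx => (S.Jpos x hx t ht).le) (fun x hx => by linarith [hosc t ht x hx y hy])
  have hlower : ∫ x in 0..L, J x 0 * -ψ x 0 ≤ (M - ψ y 0) * ℓ := hJ 0 h0 ▸
    integral_mul_le_const_mul_integral hL (S.contJ.uncurry_right 0 h0)
      (hψ.uncurry_right 0 h0).neg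
      (fun x hx => (S.Jpos x hx 0 h0).le) (fun x hx => by linarith [hosc 0 h0 y hy x hx])
  simp only [mul_neg, intervalIntegral.integral_neg] at hlower
  rw [← sub_le_iff_le_add', le_div_iff₀ hℓ]
  linarith

lemma jacobianLowerBound_le {ℓ₀ Jlow m₀ E₀ : ℝ} (hγ : 1 < γ) (hμ : 0 < μ) (hℓ₀ : 0 < ℓ₀)
    (hρ_nonneg : ∀ y ∈ Icc 0 L, 0 ≤ ρ₀ y) (hv : ∀ t ∈ Icc 0 T, v 0 t = 0 ∧ v L t = 0)
    (hπ : ∀ y ∈ Icc 0 L, ∀ t ∈ Icc 0 T, 0 ≤ π y t) (hJ₀ : ∀ y ∈ Icc 0 L, Jlow ≤ J y 0)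
    (hJ : ∀ t ∈ Icc 0 T, ∫ y in 0..L, J y t = ℓ₀) (hm : ∫ y in 0..L, ρ₀ y = m₀)
    (hE : ∀ t ∈ Icc 0 T, totalEnergy L γ ρ₀ J v π t = E₀) (hE₀ : 0 ≤ E₀)
    (hy : y ∈ Icc 0 L) (ht : t ∈ Icc 0 T) :
    jacobianLowerBound μ γ ℓ₀ Jlow m₀ E₀ T ≤ J y t := by
  subst hm
  obtain ⟨ψ, hψ, hψy, hψt⟩ := S.exists_momentum_potential hL hρ
  have hsub := S.potential_sub_le hL hρ hψ hψy hψt hv hℓ₀ hJ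
    (fun s hs => hE s hs ▸ S.integral_abs_momentum_le hL hρ hs hγ hρ_nonneg (hπ · · s hs))
    (fun s hs => hE s hs ▸ S.integral_momentum_flux_le hL hρ hs hγ hρ_nonneg (hπ · · s hs))
    hy ht
  have htT : (γ + 1) * E₀ * t / ℓ₀ ≤ (γ + 1) * E₀ * T / ℓ₀ := by
    gcongr
    exact ht.2
  refine le_trans ?_ (S.jacobian_mul_exp_potential_le hμ (hψt y hy) (hπ y hy) hy ht)
  unfold jacobianLowerBound
  gcongr
  · exact (S.Jpos y hy 0 ⟨le_rfl, ht.1.trans ht.2⟩).le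
  · exact hJ₀ y hy
  · linarith

end LowerBound

/-! ### Energy identity for the effective viscous flux -/

section FluxEnergy

/-- The weak form of the difference quotient of the flux energy between the times `t` and `s`, with
the flux evaluated at time `τ`: formally `∫ (G(τ) (J G)_t - G(τ)² J_t / 2)`, where the derivative
`v_ty` in `(J G)_t = μ v_ty - (J π)_t` has been moved onto `G(τ)`. -/
noncomputable def fluxQuotient (L μ : ℝ) (ρ₀ : ℝ → ℝ) (J v π vy vt : ℝ → ℝ → ℝ) (τ t s : ℝ) : ℝ :=
  -μ * (∫ y in 0..L, ρ₀ y * vt y τ * slope (v y) t s)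
    - (∫ y in 0..L, effectiveViscousFlux μ J vy π y τ * slope (fun r => J y r * π y r) t s)
    - (∫ y in 0..L, effectiveViscousFlux μ J vy π y τ ^ 2 * slope (J y) t s) / 2

variable (S : ClassicalSolution L T μ γ ρ₀ J v π Jt vy vt w πy πt) (hL : 0 ≤ L)
  (hv : ∀ t ∈ Icc 0 T, v 0 t = 0 ∧ v L t = 0)
include S

lemma continuousOn_fluxEnergy_integrand (ht : t ∈ Icc 0 T) :
    ContinuousOn (fun y => J y t * G y t ^ 2 / 2) (Icc 0 L) :=
  ((S.contJ.uncurry_right t ht).mul ((S.continuousOn_flux.uncurry_right t ht).pow 2)).div_const 2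

include hL hv

lemma integral_flux_sq_mul_deriv_velocity (ht : t ∈ Icc 0 T) :
    ∫ y in 0..L, G y t ^ 2 * vy y t = -2 * ∫ y in 0..L, ρ₀ y * (G y t * v y t * vt y t) := by
  have hGc := S.continuousOn_flux.uncurry_right t ht
  have hGy := S.continuousOn_density_mul_acceleration.uncurry_right t ht
  rw [integral_mul_deriv_eq_neg_of_boundary_eq_zero (f := fun y => G y t ^ 2)
    (f' := fun y => 2 * G y t * (ρ₀ y * vt y t)) hL
    (fun y hy => ((S.hasDerivWithinAt_flux hy ht).pow 2).congr_deriv (by simp))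
    (fun y hy => S.hvy y hy t ht) ((hGc.const_mul 2).mul hGy) (S.contvy.uncurry_right t ht)
    (hv t ht).1 (hv t ht).2, neg_mul, ← intervalIntegral.integral_const_mul]
  congr! 3
  ring

lemma sub_mul_fluxQuotient {τ s : ℝ} (hτ : τ ∈ Icc 0 T) (ht : t ∈ Icc 0 T) (hs : s ∈ Icc 0 T) :
    (s - t) * fluxQuotient L μ ρ₀ J v π vy vt τ t s =
      ∫ y in 0..L, (G y τ * (J y s * G y s - J y t * G y t) - G y τ ^ 2 * (J y s - J y t) / 2) := by
  have hparts : ∫ y in 0..L, G y τ * (vy y s - vy y t) =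
      -∫ y in 0..L, ρ₀ y * vt y τ * (v y s - v y t) :=
    integral_mul_deriv_eq_neg_of_boundary_eq_zero hL (fun y hy => S.hasDerivWithinAt_flux hy hτ)
      (fun y hy => (S.hvy y hy s hs).sub (S.hvy y hy t ht))
      (S.continuousOn_density_mul_acceleration.uncurry_right τ hτ)
      ((S.contvy.uncurry_right s hs).sub (S.contvy.uncurry_right t ht))
      (by simp [(hv s hs).1, (hv t ht).1]) (by simp [(hv s hs).2, (hv t ht).2])
  have hGτ := S.continuousOn_flux.uncurry_right τ hτ
  have hJs := S.contJ.uncurry_right s hs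
  have hJt := S.contJ.uncurry_right t ht
  have hπs := S.contPi.uncurry_right s hs
  have hπt := S.contPi.uncurry_right t ht
  have hvys := S.contvy.uncurry_right s hs
  have hvyt := S.contvy.uncurry_right t ht
  calc (s - t) * fluxQuotient L μ ρ₀ J v π vy vt τ t s
      = -μ * (∫ y in 0..L, ρ₀ y * vt y τ * (v y s - v y t))
        - (∫ y in 0..L, G y τ * (J y s * π y s - J y t * π y t))
        - (∫ y in 0..L, G y τ ^ 2 * (J y s - J y t)) / 2 := by
        simp only [← sub_mul_integral_mul_slope, fluxQuotient]
        rw [← sub_mul_integral_mul_slope (G · τ) (fun y r => J y r * π y r)]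
        ring
    _ = ∫ y in 0..L, (μ * (G y τ * (vy y s - vy y t)) - G y τ * (J y s * π y s - J y t * π y t)
        - G y τ ^ 2 * (J y s - J y t) / 2) := by
        rw [intervalIntegral.integral_sub, intervalIntegral.integral_sub,
          intervalIntegral.integral_const_mul, intervalIntegral.integral_div, hparts, mul_neg,
          neg_mul]
        all_goals exact ContinuousOn.intervalIntegrable_of_Icc hL (by fun_prop)
    _ = _ := integral_congr_Icc hL fun y hy => by
        linear_combination G y τ * S.viscosity_mul_deriv_eq hy hs -
          G y τ * S.viscosity_mul_deriv_eq hy ht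

lemma fluxEnergy_sub_between {s : ℝ} (ht : t ∈ Icc 0 T) (hs : s ∈ Icc 0 T) :
    (s - t) * fluxQuotient L μ ρ₀ J v π vy vt t t s ≤
        fluxEnergy L μ J vy π s - fluxEnergy L μ J vy π t ∧
      fluxEnergy L μ J vy π s - fluxEnergy L μ J vy π t ≤
        (s - t) * fluxQuotient L μ ρ₀ J v π vy vt s t s := by
  have hGs := S.continuousOn_flux.uncurry_right s hs
  have hGt := S.continuousOn_flux.uncurry_right t ht
  have hJs := S.contJ.uncurry_right s hs
  have hJt := S.contJ.uncurry_right t ht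
  rw [S.sub_mul_fluxQuotient hL hv ht ht hs, S.sub_mul_fluxQuotient hL hv hs ht hs, fluxEnergy,
    fluxEnergy, ← intervalIntegral.integral_sub
      ((S.continuousOn_fluxEnergy_integrand hs).intervalIntegrable_of_Icc hL)
      ((S.continuousOn_fluxEnergy_integrand ht).intervalIntegrable_of_Icc hL)]
  constructor
  · refine integral_mono_of_continuousOn hL (by fun_prop) (by fun_prop) fun y hy => ?_
    linarith [mul_nonneg (S.Jpos y hy s hs).le (sq_nonneg (G y s - G y t))]
  · refine integral_mono_of_continuousOn hL (by fun_prop) (by fun_prop) fun y hy => ?_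
    linarith [mul_nonneg (S.Jpos y hy t ht).le (sq_nonneg (G y s - G y t))]

lemma tendsto_fluxQuotient {σ : ℝ → ℝ} (ht : t ∈ Icc 0 T)
    (hσ : Tendsto σ (𝓝[Icc 0 T \ {t}] t) (𝓝[Icc 0 T] t)) :
    Tendsto (fun s => fluxQuotient L μ ρ₀ J v π vy vt (σ s) t s) (𝓝[Icc 0 T \ {t}] t)
      (𝓝 (-μ * fluxDissipation L ρ₀ vt t +
        (2 * γ - 1) * ∫ y in 0..L, ρ₀ y * (G y t * v y t * vt y t))) := by
  have hvel := tendsto_integral_mul_slope hL S.continuousOn_density_mul_acceleration S.contv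
    S.contvt S.hvt ht hσ
  have hπ := tendsto_integral_mul_slope (f := fun y s => J y s * π y s)
    (f' := fun y s => (γ - 1) * (G y s * vy y s)) hL S.continuousOn_flux (S.contJ.mul S.contPi)
    ((S.continuousOn_flux.mul S.contvy).const_mul (γ - 1))
    (fun y hy s hs => S.hasDerivWithinAt_jacobian_mul_pressure hy hs) ht hσ
  have hJ := tendsto_integral_mul_slope (α := fun y s => G y s ^ 2) (t₀ := 0) (t₁ := T) hL
    (S.continuousOn_flux.fun_pow 2) S.contJ S.contvy
    (fun y hy s hs => S.hasDerivWithinAt_jacobian hy hs) ht hσ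
  have hdiss : ∫ y in 0..L, ρ₀ y * vt y t * vt y t = fluxDissipation L ρ₀ vt t := by
    simp only [fluxDissipation, sq, mul_assoc]
  have hwork : ∫ y in 0..L, G y t * ((γ - 1) * (G y t * vy y t)) =
      (γ - 1) * ∫ y in 0..L, G y t ^ 2 * vy y t := by
    rw [← intervalIntegral.integral_const_mul]
    congr 1 with y
    ring
  have hlim := ((hvel.const_mul (-μ)).sub hπ).sub (hJ.div_const 2)
  rw [hdiss, hwork, S.integral_flux_sq_mul_deriv_velocity hL hv ht] at hlim
  refine hlim.trans (le_of_eq (congrArg 𝓝 ?_))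
  ring

-- `G` has no time derivative, but `(P, J) ↦ P² / (2 J)` is convex with gradient `(G, -G² / 2)` at
-- `P = J G`, so its increments lie between the pairings with the gradients at the two endpoints.
lemma hasDerivWithinAt_fluxEnergy (ht : t ∈ Icc 0 T) :
    HasDerivWithinAt (fluxEnergy L μ J vy π) (-μ * fluxDissipation L ρ₀ vt t +
      (2 * γ - 1) * ∫ y in 0..L, ρ₀ y * (G y t * v y t * vt y t)) (Icc 0 T) t :=
  hasDerivWithinAt_of_sub_between
    (S.tendsto_fluxQuotient hL hv ht (tendsto_const_nhdsWithin ht))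
    (S.tendsto_fluxQuotient hL hv ht (tendsto_id.mono_left (nhdsWithin_mono t sdiff_subset)))
    (fun _ hs => (S.fluxEnergy_sub_between hL hv ht hs).1)
    (fun _ hs => (S.fluxEnergy_sub_between hL hv ht hs).2)

end FluxEnergy

/-! ### Growth of the flux energy -/

section FluxGrowth

/-- The constant `k` in the bound `(2γ - 1) ∫ ρ₀ G v v_t ≤ k ‖G‖_∞² + (μ / 4) ∫ ρ₀ v_t²`, for a
solution of total energy `E₀`. -/
noncomputable def fluxCoupling (μ γ E₀ : ℝ) : ℝ :=
  (2 * γ - 1) ^ 2 / μ * (2 * E₀)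

/-- The exponential growth rate of the flux energy for a solution with density at most `ρbar`,
Jacobian at least `c` and total energy `E₀`. It is `k (1 / L + 1 / η) (2 / c)` where
`k = fluxCoupling μ γ E₀` and `η = μ / (4 ρbar (k + 1))` is small enough for the dissipation to
absorb `k η ρbar ∫ ρ₀ v_t²`. -/
noncomputable def fluxGrowthRate (L μ γ ρbar c E₀ : ℝ) : ℝ :=
  fluxCoupling μ γ E₀ *
    ((1 / L + 1 / (μ / (4 * ρbar * (fluxCoupling μ γ E₀ + 1)))) * (2 / c))

lemma fluxCoupling_nonneg {E₀ : ℝ} (hμ : 0 < μ) (hE₀ : 0 ≤ E₀) : 0 ≤ fluxCoupling μ γ E₀ := by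
  unfold fluxCoupling
  positivity

lemma fluxGrowthRate_nonneg {c E₀ : ℝ} (hL : 0 < L) (hμ : 0 < μ) (hρbar : 0 < ρbar) (hc : 0 < c)
    (hE₀ : 0 ≤ E₀) : 0 ≤ fluxGrowthRate L μ γ ρbar c E₀ := by
  have hk := fluxCoupling_nonneg (γ := γ) hμ hE₀
  unfold fluxGrowthRate
  positivity

lemma fluxDissipation_nonneg (hL : 0 ≤ L) (hρ_nonneg : ∀ y ∈ Icc 0 L, 0 ≤ ρ₀ y) :
    0 ≤ fluxDissipation L ρ₀ vt t :=
  intervalIntegral.integral_nonneg hL fun y hy => mul_nonneg (hρ_nonneg y hy) (sq_nonneg _)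

variable (S : ClassicalSolution L T μ γ ρ₀ J v π Jt vy vt w πy πt)
include S

lemma fluxEnergy_nonneg (hL : 0 ≤ L) (ht : t ∈ Icc 0 T) : 0 ≤ fluxEnergy L μ J vy π t :=
  intervalIntegral.integral_nonneg hL fun y hy =>
    div_nonneg (mul_nonneg (S.Jpos y hy t ht).le (sq_nonneg _)) zero_le_two

lemma fluxEnergy_le_mul_integral_sq {C : ℝ} (hL : 0 ≤ L) (hJ : ∀ y ∈ Icc 0 L, J y t ≤ C)
    (ht : t ∈ Icc 0 T) : fluxEnergy L μ J vy π t ≤ C / 2 * ∫ y in 0..L, G y t ^ 2 := by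
  have hG := S.continuousOn_flux.uncurry_right t ht
  rw [fluxEnergy, ← intervalIntegral.integral_const_mul]
  refine integral_mono_of_continuousOn hL (S.continuousOn_fluxEnergy_integrand ht) (by fun_prop)
    fun y hy => ?_
  linarith [mul_le_mul_of_nonneg_right (hJ y hy) (sq_nonneg (G y t))]

lemma integral_flux_sq_le {c : ℝ} (hL : 0 ≤ L) (hc : 0 < c) (hJ : ∀ y ∈ Icc 0 L, c ≤ J y t)
    (ht : t ∈ Icc 0 T) : ∫ y in 0..L, G y t ^ 2 ≤ 2 / c * fluxEnergy L μ J vy π t := by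
  have hG := S.continuousOn_flux.uncurry_right t ht
  rw [fluxEnergy, ← intervalIntegral.integral_const_mul]
  refine integral_mono_of_continuousOn hL (by fun_prop)
    ((S.continuousOn_fluxEnergy_integrand ht).const_mul _) fun y hy => ?_
  calc G y t ^ 2 = 2 / c * (c * G y t ^ 2 / 2) := by field_simp
    _ ≤ 2 / c * (J y t * G y t ^ 2 / 2) := by gcongr; exact hJ y hy

lemma integral_density_mul_acceleration_sq_le (hL : 0 ≤ L) (hρ : ContinuousOn ρ₀ (Icc 0 L))
    (hρ₀ : ∀ y ∈ Icc 0 L, 0 ≤ ρ₀ y ∧ ρ₀ y ≤ ρbar) (ht : t ∈ Icc 0 T) :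
    ∫ y in 0..L, (ρ₀ y * vt y t) ^ 2 ≤ ρbar * fluxDissipation L ρ₀ vt t := by
  have hvt := S.contvt.uncurry_right t ht
  rw [fluxDissipation, ← intervalIntegral.integral_const_mul]
  refine integral_mono_of_continuousOn hL (by fun_prop) (by fun_prop) fun y hy => ?_
  have hmul := mul_le_mul_of_nonneg_right (hρ₀ y hy).2
    (mul_nonneg (hρ₀ y hy).1 (sq_nonneg (vt y t)))
  linarith

lemma flux_sq_le {c η : ℝ} (hL : 0 < L) (hc : 0 < c) (hη : 0 < η)
    (hρ : ContinuousOn ρ₀ (Icc 0 L)) (hρ₀ : ∀ y ∈ Icc 0 L, 0 ≤ ρ₀ y ∧ ρ₀ y ≤ ρbar)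
    (hJ : ∀ y ∈ Icc 0 L, c ≤ J y t) (hy : y ∈ Icc 0 L) (ht : t ∈ Icc 0 T) :
    G y t ^ 2 ≤ (1 / L + 1 / η) * (2 / c) * fluxEnergy L μ J vy π t +
      η * ρbar * fluxDissipation L ρ₀ vt t := by
  have hagmon := sq_le_integral_sq_add_integral_deriv_sq hL hη
    (fun z hz => S.hasDerivWithinAt_flux hz ht)
    (S.continuousOn_density_mul_acceleration.uncurry_right t ht) hy
  rw [sub_zero] at hagmon
  calc G y t ^ 2
      ≤ (1 / L + 1 / η) * (∫ z in 0..L, G z t ^ 2) + η * ∫ z in 0..L, (ρ₀ z * vt z t) ^ 2 := hagmon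
    _ ≤ (1 / L + 1 / η) * (2 / c * fluxEnergy L μ J vy π t) +
        η * (ρbar * fluxDissipation L ρ₀ vt t) := by
        gcongr
        · exact S.integral_flux_sq_le hL.le hc hJ ht
        · exact S.integral_density_mul_acceleration_sq_le hL.le hρ hρ₀ ht
    _ = _ := by ring

lemma mul_integral_flux_mul_power_le {E₀ s : ℝ} (hL : 0 ≤ L) (hμ : 0 < μ)
    (hρ : ContinuousOn ρ₀ (Icc 0 L)) (hρ_nonneg : ∀ y ∈ Icc 0 L, 0 ≤ ρ₀ y)
    (hE : ∫ y in 0..L, ρ₀ y * v y t ^ 2 ≤ 2 * E₀) (hs : ∀ y ∈ Icc 0 L, G y t ^ 2 ≤ s)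
    (ht : t ∈ Icc 0 T) :
    (2 * γ - 1) * ∫ y in 0..L, ρ₀ y * (G y t * v y t * vt y t) ≤
      fluxCoupling μ γ E₀ * s + μ / 4 * fluxDissipation L ρ₀ vt t := by
  have hs_nonneg : 0 ≤ s := (sq_nonneg _).trans (hs 0 (left_mem_Icc.2 hL))
  calc (2 * γ - 1) * ∫ y in 0..L, ρ₀ y * (G y t * v y t * vt y t)
      ≤ (2 * γ - 1) ^ 2 / μ * s * (∫ y in 0..L, ρ₀ y * v y t ^ 2) +
        μ / 4 * fluxDissipation L ρ₀ vt t :=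
        mul_integral_mul_le hL hμ hρ (S.continuousOn_flux.uncurry_right t ht)
          (S.contv.uncurry_right t ht) (S.contvt.uncurry_right t ht) hρ_nonneg hs _
    _ ≤ (2 * γ - 1) ^ 2 / μ * s * (2 * E₀) + μ / 4 * fluxDissipation L ρ₀ vt t := by gcongr
    _ = fluxCoupling μ γ E₀ * s + μ / 4 * fluxDissipation L ρ₀ vt t := by
        rw [fluxCoupling]
        ring

lemma deriv_fluxEnergy_le {c E₀ : ℝ} (hL : 0 < L) (hμ : 0 < μ) (hρbar : 0 < ρbar) (hc : 0 < c)
    (hE₀ : 0 ≤ E₀) (hρ : ContinuousOn ρ₀ (Icc 0 L))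
    (hρ₀ : ∀ y ∈ Icc 0 L, 0 ≤ ρ₀ y ∧ ρ₀ y ≤ ρbar) (hJ : ∀ y ∈ Icc 0 L, c ≤ J y t)
    (hE : ∫ y in 0..L, ρ₀ y * v y t ^ 2 ≤ 2 * E₀) (ht : t ∈ Icc 0 T) :
    -μ * fluxDissipation L ρ₀ vt t + (2 * γ - 1) * ∫ y in 0..L, ρ₀ y * (G y t * v y t * vt y t) ≤
      -(μ / 2) * fluxDissipation L ρ₀ vt t +
        fluxGrowthRate L μ γ ρbar c E₀ * fluxEnergy L μ J vy π t := by
  have hk := fluxCoupling_nonneg (γ := γ) hμ hE₀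
  rw [fluxGrowthRate]
  set k := fluxCoupling μ γ E₀
  set η := μ / (4 * ρbar * (k + 1)) with hη
  have hη_pos : 0 < η := by positivity
  have hD := fluxDissipation_nonneg (vt := vt) (t := t) hL.le fun y hy => (hρ₀ y hy).1
  have hpower := S.mul_integral_flux_mul_power_le hL.le hμ hρ (fun y hy => (hρ₀ y hy).1) hE
    (fun y hy => S.flux_sq_le hL hc hη_pos hρ hρ₀ hJ hy ht) ht
  have habsorb : k * (η * ρbar) ≤ μ / 4 := by
    calc k * (η * ρbar) = μ / 4 * (k / (k + 1)) := by rw [hη]; field_simp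
      _ ≤ μ / 4 * 1 := by gcongr; exact div_le_one_of_le₀ (by linarith) (by linarith)
      _ = μ / 4 := mul_one _
  linarith [mul_le_mul_of_nonneg_right habsorb hD]

lemma fluxEnergy_le {c E₀ : ℝ} (hL : 0 < L) (hμ : 0 < μ) (hρbar : 0 < ρbar) (hc : 0 < c)
    (hE₀ : 0 ≤ E₀) (hv : ∀ t ∈ Icc 0 T, v 0 t = 0 ∧ v L t = 0) (hρ : ContinuousOn ρ₀ (Icc 0 L))
    (hρ₀ : ∀ y ∈ Icc 0 L, 0 ≤ ρ₀ y ∧ ρ₀ y ≤ ρbar)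
    (hJ : ∀ y ∈ Icc 0 L, ∀ t ∈ Icc 0 T, c ≤ J y t)
    (hE : ∀ t ∈ Icc 0 T, ∫ y in 0..L, ρ₀ y * v y t ^ 2 ≤ 2 * E₀) (ht : t ∈ Icc 0 T) :
    fluxEnergy L μ J vy π t ≤
      fluxEnergy L μ J vy π 0 * Real.exp (fluxGrowthRate L μ γ ρbar c E₀ * T) := by
  have hgronwall := le_mul_exp_of_hasDerivWithinAt_le
    (fun s hs => S.hasDerivWithinAt_fluxEnergy hL.le hv hs)
    (K := fluxGrowthRate L μ γ ρbar c E₀) (fun s hs => by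
      have hD := fluxDissipation_nonneg (vt := vt) (t := s) hL.le fun y hy => (hρ₀ y hy).1
      linarith [S.deriv_fluxEnergy_le hL hμ hρbar hc hE₀ hρ hρ₀ (fun y hy => hJ y hy s hs) (hE s hs)
        hs, mul_nonneg hμ.le hD]) ht
  have hF₀ := S.fluxEnergy_nonneg hL.le (left_mem_Icc.2 (ht.1.trans ht.2))
  have hrate := fluxGrowthRate_nonneg (γ := γ) hL hμ hρbar hc hE₀
  refine hgronwall.trans ?_
  rw [sub_zero]
  gcongr
  exact ht.2

end FluxGrowth

/-! ### Upper bounds -/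

section UpperBound

/-- The factor by which `J (1 + π)` grows at most on `[0, T]`, for a solution with density at most
`ρbar`, Jacobian at least `c`, total energy `E₀` and initial flux energy at most `F₀`. It is the
exponential of `K F₀ + C T`, where `K = 4γρbar / μ²` and `C` bounds the time derivative of
`log (J (1 + π)) + K ∫ J G² / 2`. -/
noncomputable def growthFactor (L μ γ ρbar c E₀ F₀ T : ℝ) : ℝ :=
  Real.exp (4 * γ * ρbar / μ ^ 2 * F₀ + (2 * γ / μ + (2 * γ / μ * ((1 / L + 1) * (2 / c)) +
    4 * γ * ρbar / μ ^ 2 * fluxGrowthRate L μ γ ρbar c E₀) *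
      (F₀ * Real.exp (fluxGrowthRate L μ γ ρbar c E₀ * T))) * T)

lemma add_mul_one_add_mul_le {g p : ℝ} (hγ : 1 < γ) (hp : 0 ≤ p) :
    (g + p) * (1 + (γ - 1) * g) ≤ 2 * γ * (1 + g ^ 2) * (1 + p) := by
  have hγ' : 0 < γ - 1 := sub_pos.2 hγ
  have hconst : g * (1 + (γ - 1) * g) ≤ 2 * γ * (1 + g ^ 2) := by
    nlinarith [sq_nonneg (g - 1), sq_nonneg g]
  have hcoeff : 1 + (γ - 1) * g ≤ 2 * γ * (1 + g ^ 2) := by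
    nlinarith [mul_nonneg hγ'.le (sq_nonneg (g - 1)), mul_nonneg hγ'.le (sq_nonneg g), sq_nonneg g]
  linarith [mul_le_mul_of_nonneg_right hcoeff hp]

variable (S : ClassicalSolution L T μ γ ρ₀ J v π Jt vy vt w πy πt)
include S

lemma logDeriv_jacobian_mul_one_add_pressure_le (hγ : 1 < γ) (hμ : 0 < μ) (hπ : 0 ≤ π y t)
    (hy : y ∈ Icc 0 L) (ht : t ∈ Icc 0 T) :
    (vy y t + (γ - 1) * (G y t * vy y t)) / (J y t * (1 + π y t)) ≤
      2 * γ / μ * (1 + G y t ^ 2) := by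
  have hJ := S.Jpos y hy t ht
  have hvy : vy y t = J y t * (G y t + π y t) / μ := by
    rw [← S.viscosity_mul_deriv_eq hy ht, mul_div_cancel_left₀ _ hμ.ne']
  rw [div_le_iff₀ (by positivity)]
  calc vy y t + (γ - 1) * (G y t * vy y t)
      = J y t / μ * ((G y t + π y t) * (1 + (γ - 1) * G y t)) := by rw [hvy]; ring
    _ ≤ J y t / μ * (2 * γ * (1 + G y t ^ 2) * (1 + π y t)) :=
        mul_le_mul_of_nonneg_left (add_mul_one_add_mul_le hγ hπ) (by positivity)
    _ = 2 * γ / μ * (1 + G y t ^ 2) * (J y t * (1 + π y t)) := by ring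

lemma hasDerivWithinAt_log_jacobian_mul_one_add_pressure (hπ : 0 ≤ π y t) (hy : y ∈ Icc 0 L)
    (ht : t ∈ Icc 0 T) :
    HasDerivWithinAt (fun s => Real.log (J y s * (1 + π y s)))
      ((vy y t + (γ - 1) * (G y t * vy y t)) / (J y t * (1 + π y t))) (Icc 0 T) t := by
  have hJ := S.Jpos y hy t ht
  have hderiv := (S.hasDerivWithinAt_jacobian hy ht).add
    (S.hasDerivWithinAt_jacobian_mul_pressure hy ht)
  refine HasDerivWithinAt.log (f := fun s => J y s * (1 + π y s))
    (hderiv.congr_of_mem (fun s _ => ?_) ht) (by positivity)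
  simp only [Pi.add_apply]
  ring

variable {c E₀ F₀ : ℝ} (hL : 0 < L) (hγ : 1 < γ) (hμ : 0 < μ) (hρbar : 0 < ρbar) (hc : 0 < c)
  (hE₀ : 0 ≤ E₀) (hρ : ContinuousOn ρ₀ (Icc 0 L))
  (hρ₀ : ∀ y ∈ Icc 0 L, 0 ≤ ρ₀ y ∧ ρ₀ y ≤ ρbar)
  (hJ : ∀ y ∈ Icc 0 L, ∀ t ∈ Icc 0 T, c ≤ J y t)
  (hπ : ∀ y ∈ Icc 0 L, ∀ t ∈ Icc 0 T, 0 ≤ π y t)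
  (hE : ∀ t ∈ Icc 0 T, ∫ y in 0..L, ρ₀ y * v y t ^ 2 ≤ 2 * E₀)
include hL hγ hμ hρbar hc hE₀ hρ hρ₀ hJ hπ hE

-- The dissipation of `K F` absorbs the term `∫ ρ₀ v_t²` coming from the sup bound of `G²`.
lemma deriv_log_add_fluxEnergy_le (hy : y ∈ Icc 0 L) (ht : t ∈ Icc 0 T) :
    (vy y t + (γ - 1) * (G y t * vy y t)) / (J y t * (1 + π y t)) +
        4 * γ * ρbar / μ ^ 2 * (-μ * fluxDissipation L ρ₀ vt t +
          (2 * γ - 1) * ∫ y in 0..L, ρ₀ y * (G y t * v y t * vt y t)) ≤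
      2 * γ / μ + (2 * γ / μ * ((1 / L + 1) * (2 / c)) +
        4 * γ * ρbar / μ ^ 2 * fluxGrowthRate L μ γ ρbar c E₀) * fluxEnergy L μ J vy π t := by
  have : 0 < γ := one_pos.trans hγ
  have hsup := S.flux_sq_le hL hc one_pos hρ hρ₀ (fun y hy => hJ y hy t ht) hy ht
  have hflux := S.deriv_fluxEnergy_le hL hμ hρbar hc hE₀ hρ hρ₀ (fun y hy => hJ y hy t ht) (hE t ht)
    ht
  rw [div_one, one_mul] at hsup
  set F := fluxEnergy L μ J vy π t
  set D := fluxDissipation L ρ₀ vt t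
  set R := fluxGrowthRate L μ γ ρbar c E₀
  calc _ ≤ 2 * γ / μ * (1 + G y t ^ 2) + 4 * γ * ρbar / μ ^ 2 * (-(μ / 2) * D + R * F) :=
        add_le_add (S.logDeriv_jacobian_mul_one_add_pressure_le hγ hμ (hπ y hy t ht) hy ht)
          (mul_le_mul_of_nonneg_left hflux (by positivity))
    _ ≤ 2 * γ / μ * (1 + ((1 / L + 1) * (2 / c) * F + ρbar * D)) +
          4 * γ * ρbar / μ ^ 2 * (-(μ / 2) * D + R * F) := by gcongr
    _ = _ := by field_simp; ring

lemma jacobian_mul_one_add_pressure_le (hv : ∀ t ∈ Icc 0 T, v 0 t = 0 ∧ v L t = 0)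
    (hF₀ : fluxEnergy L μ J vy π 0 ≤ F₀) (hy : y ∈ Icc 0 L) (ht : t ∈ Icc 0 T) :
    J y t * (1 + π y t) ≤ J y 0 * (1 + π y 0) * growthFactor L μ γ ρbar c E₀ F₀ T := by
  have : 0 < γ := one_pos.trans hγ
  have h0 : 0 ∈ Icc 0 T := left_mem_Icc.2 (ht.1.trans ht.2)
  have hpos : ∀ s ∈ Icc 0 T, 0 < J y s * (1 + π y s) := fun s hs =>
    mul_pos (S.Jpos y hy s hs) (by linarith [hπ y hy s hs])
  have hF_nonneg := fun s hs => S.fluxEnergy_nonneg (t := s) hL.le hs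
  have hF₀_nonneg := (hF_nonneg 0 h0).trans hF₀
  have hR := fluxGrowthRate_nonneg (γ := γ) hL hμ hρbar hc hE₀
  rw [growthFactor]
  set R := fluxGrowthRate L μ γ ρbar c E₀
  set K := 4 * γ * ρbar / μ ^ 2
  have hK_nonneg : 0 ≤ K := by positivity
  set C := 2 * γ / μ + (2 * γ / μ * ((1 / L + 1) * (2 / c)) + K * R) * (F₀ * Real.exp (R * T))
    with hC
  have hgrowth := le_add_mul_of_hasDerivWithinAt_le (C := C) (fun s hs =>
    (S.hasDerivWithinAt_log_jacobian_mul_one_add_pressure (hπ y hy s hs) hy hs).add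
      ((S.hasDerivWithinAt_fluxEnergy hL.le hv hs).const_mul K)) (fun s hs => by
    refine (S.deriv_log_add_fluxEnergy_le hL hγ hμ hρbar hc hE₀ hρ hρ₀ hJ hπ hE hy hs).trans ?_
    rw [hC]
    gcongr
    exact (S.fluxEnergy_le hL hμ hρbar hc hE₀ hv hρ hρ₀ hJ hE hs).trans (by gcongr)) ht
  have hC_nonneg : 0 ≤ C := by positivity
  have hlog : Real.log (J y t * (1 + π y t)) ≤
      Real.log (J y 0 * (1 + π y 0)) + (K * F₀ + C * T) := by
    simp only [Pi.add_apply, sub_zero] at hgrowth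
    linarith [mul_nonneg hK_nonneg (hF_nonneg t ht), mul_le_mul_of_nonneg_left hF₀ hK_nonneg,
      mul_le_mul_of_nonneg_left ht.2 hC_nonneg]
  rwa [← Real.exp_le_exp, Real.exp_add, Real.exp_log (hpos t ht), Real.exp_log (hpos 0 h0)] at hlog

end UpperBound

section SupBounds

variable (S : ClassicalSolution L T μ γ ρ₀ J v π Jt vy vt w πy πt)
include S

lemma fluxEnergy_le_of_sqrt_integral_le {C K : ℝ} (hL : 0 ≤ L) (hC : 0 ≤ C) (hK : 0 ≤ K)
    (hJ : ∀ y ∈ Icc 0 L, J y t ≤ C) (hG : √(∫ y in 0..L, G y t ^ 2) ≤ K) (ht : t ∈ Icc 0 T) :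
    fluxEnergy L μ J vy π t ≤ C / 2 * K ^ 2 :=
  (S.fluxEnergy_le_mul_integral_sq hL hJ ht).trans
    (mul_le_mul_of_nonneg_left ((Real.sqrt_le_left hK).1 hG) (by positivity))

lemma sSup_pressure_add_sSup_jacobian_le {c B : ℝ} (hL : 0 ≤ L) (hT : 0 ≤ T) (hc : 0 < c)
    (hJ : ∀ y ∈ Icc 0 L, ∀ t ∈ Icc 0 T, c ≤ J y t)
    (hπ : ∀ y ∈ Icc 0 L, ∀ t ∈ Icc 0 T, 0 ≤ π y t)
    (hB : ∀ y ∈ Icc 0 L, ∀ t ∈ Icc 0 T, J y t * (1 + π y t) ≤ B) :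
    sSup ((fun t => sSup ((fun y => |π y t|) '' Icc 0 L) + sSup ((fun y => |J y t|) '' Icc 0 L)) ''
      Icc 0 T) ≤ (1 + 1 / c) * B := by
  refine csSup_le ((nonempty_Icc.2 hT).image _) (forall_mem_image.2 fun t ht => ?_)
  have hπ_le : sSup ((fun y => |π y t|) '' Icc 0 L) ≤ B / c :=
    sSup_abs_image_le (nonempty_Icc.2 hL) fun y hy => by
      rw [abs_of_nonneg (hπ y hy t ht), le_div_iff₀ hc]
      linarith [hB y hy t ht, S.Jpos y hy t ht,
        mul_le_mul_of_nonneg_left (hJ y hy t ht) (hπ y hy t ht)]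
  have hJ_le : sSup ((fun y => |J y t|) '' Icc 0 L) ≤ B :=
    sSup_abs_image_le (nonempty_Icc.2 hL) fun y hy => by
      rw [abs_of_pos (S.Jpos y hy t ht)]
      linarith [hB y hy t ht, mul_nonneg (S.Jpos y hy t ht).le (hπ y hy t ht)]
  calc _ ≤ B / c + B := add_le_add hπ_le hJ_le
    _ = (1 + 1 / c) * B := by ring

lemma jacobian_mul_one_add_pressure_initial_le {Jbar : ℝ} (hT : 0 ≤ T) (hJ : J y 0 ≤ Jbar)
    (hπ : 0 ≤ π y 0) (hy : y ∈ Icc 0 L) :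
    J y 0 * (1 + π y 0) ≤ Jbar * (1 + sSup ((fun y => |π y 0|) '' Icc 0 L)) := by
  have h0 : 0 ∈ Icc 0 T := left_mem_Icc.2 hT
  have hπ_le : π y 0 ≤ sSup ((fun y => |π y 0|) '' Icc 0 L) := (le_abs_self _).trans
    (abs_le_sSup_abs_image isCompact_Icc (S.contPi.uncurry_right 0 h0) hy)
  gcongr
  exact (S.Jpos y hy 0 h0).le.trans hJ

lemma jacobian_bounds_of_initial {ℓ₀ Jlow Jbar m₀ E₀ F₀ : ℝ} (hL : 0 < L) (hγ : 1 < γ) (hμ : 0 < μ)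
    (hρbar : 0 < ρbar) (hℓ₀ : 0 < ℓ₀) (hJlow : 0 < Jlow) (hE₀ : 0 ≤ E₀)
    (hρ : ContinuousOn ρ₀ (Icc 0 L)) (hρ₀ : ∀ y ∈ Icc 0 L, 0 ≤ ρ₀ y ∧ ρ₀ y ≤ ρbar)
    (hv : ∀ t ∈ Icc 0 T, v 0 t = 0 ∧ v L t = 0) (hπ : ∀ y ∈ Icc 0 L, ∀ t ∈ Icc 0 T, 0 ≤ π y t)
    (hJ₀ : ∀ y ∈ Icc 0 L, Jlow ≤ J y 0 ∧ J y 0 ≤ Jbar) (hℓ : ∫ y in 0..L, J y 0 = ℓ₀)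
    (hm : ∫ y in 0..L, ρ₀ y = m₀) (hE : totalEnergy L γ ρ₀ J v π 0 = E₀)
    (hF₀ : fluxEnergy L μ J vy π 0 ≤ F₀) (hy : y ∈ Icc 0 L) (ht : t ∈ Icc 0 T) :
    jacobianLowerBound μ γ ℓ₀ Jlow m₀ E₀ T ≤ J y t ∧
      J y t * (1 + π y t) ≤ Jbar * (1 + sSup ((fun y => |π y 0|) '' Icc 0 L)) *
        growthFactor L μ γ ρbar (jacobianLowerBound μ γ ℓ₀ Jlow m₀ E₀ T) E₀ F₀ T := by
  have hT : 0 ≤ T := ht.1.trans ht.2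
  have hEt : ∀ s ∈ Icc 0 T, totalEnergy L γ ρ₀ J v π s = E₀ := fun s hs =>
    (S.totalEnergy_eq hL.le hv hγ.ne' hρ hs).trans hE
  have hkinetic : ∀ s ∈ Icc 0 T, ∫ y in 0..L, ρ₀ y * v y s ^ 2 ≤ 2 * E₀ := fun s hs =>
    hEt s hs ▸ S.integral_density_mul_velocity_sq_le hL.le hρ hs hγ fun z hz => hπ z hz s hs
  have hlower : ∀ z ∈ Icc 0 L, ∀ s ∈ Icc 0 T, jacobianLowerBound μ γ ℓ₀ Jlow m₀ E₀ T ≤ J z s :=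
    fun z hz s hs => S.jacobianLowerBound_le hL.le hρ hγ hμ hℓ₀ (fun y hy => (hρ₀ y hy).1) hv hπ
      (fun y hy => (hJ₀ y hy).1) (fun r hr => (S.integral_jacobian_eq hL.le hv hr).trans hℓ) hm hEt
      hE₀ hz hs
  refine ⟨hlower y hy t ht, (S.jacobian_mul_one_add_pressure_le hL hγ hμ hρbar
    (mul_pos hJlow (Real.exp_pos _)) hE₀ hρ hρ₀ hlower hπ hkinetic hv hF₀ hy ht).trans ?_⟩
  exact mul_le_mul_of_nonneg_right (S.jacobian_mul_one_add_pressure_initial_le hT (hJ₀ y hy).2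
    (hπ y hy 0 (left_mem_Icc.2 hT)) hy) (Real.exp_pos _).le

end SupBounds

end ClassicalSolution

theorem upper_bounds_J_pi_general
    (L γ μ ρbar ℓ₀ Jlow Jbar m₀ E₀ K₀ T : ℝ)
    (hL : 0 < L) (hγ : 1 < γ) (hμ : 0 < μ) (hρbar : 0 < ρbar) (hℓ₀ : 0 < ℓ₀)
    (hJlow : 0 < Jlow) (hJbar : 0 < Jbar) (hE₀ : 0 ≤ E₀) (hK₀ : 0 ≤ K₀) (hT : 0 < T) :
    ∃ C > 0, ∀ (ρ₀ : ℝ → ℝ) (J v π Jt vy vt w πy πt : ℝ → ℝ → ℝ),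
      ContinuousOn ρ₀ (Icc 0 L) →
      (∀ y ∈ Icc 0 L, 0 ≤ ρ₀ y ∧ ρ₀ y ≤ ρbar) →
      ClassicalSolution L T μ γ ρ₀ J v π Jt vy vt w πy πt →
      (∀ t ∈ Icc 0 T, v 0 t = 0 ∧ v L t = 0) →
      (∀ y ∈ Icc 0 L, 0 ≤ π y 0) →
      (∀ y ∈ Icc 0 L, Jlow ≤ J y 0 ∧ J y 0 ≤ Jbar) →
      (∫ y in 0..L, J y 0) = ℓ₀ →
      (∫ y in 0..L, ρ₀ y) = m₀ →
      (∫ y in 0..L, (ρ₀ y * (v y 0) ^ 2 / 2 + J y 0 * π y 0 / (γ - 1))) = E₀ →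
      Real.sqrt (∫ y in 0..L, (μ * vy y 0 / J y 0 - π y 0) ^ 2) ≤ K₀ →
      sSup ((fun t => sSup ((fun y => |π y t|) '' Icc 0 L)
              + sSup ((fun y => |J y t|) '' Icc 0 L)) '' Icc 0 T)
        ≤ C * (1 + Jbar + sSup ((fun y => |π y 0|) '' Icc 0 L)) := by
  set c := ClassicalSolution.jacobianLowerBound μ γ ℓ₀ Jlow m₀ E₀ T
  set C := ClassicalSolution.growthFactor L μ γ ρbar c E₀ (Jbar / 2 * K₀ ^ 2) T
  have hc : 0 < c := mul_pos hJlow (Real.exp_pos _)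
  have hC : 0 < C := Real.exp_pos _
  refine ⟨(1 + 1 / c) * C * (Jbar + 1), by positivity, ?_⟩
  intro ρ₀ J v π Jt vy vt w πy πt hρ hρ₀ S hv hπ₀ hJ₀ hℓ hm hE hG
  have hπ : ∀ y ∈ Icc 0 L, ∀ t ∈ Icc 0 T, 0 ≤ π y t := fun y hy t ht =>
    S.pressure_nonneg hγ.le hμ.le (hπ₀ y hy) hy ht
  have hF₀ : fluxEnergy L μ J vy π 0 ≤ Jbar / 2 * K₀ ^ 2 :=
    S.fluxEnergy_le_of_sqrt_integral_le hL.le hJbar.le hK₀ (fun y hy => (hJ₀ y hy).2) hG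
      (left_mem_Icc.2 hT.le)
  have hbounds := fun y hy t ht => S.jacobian_bounds_of_initial (y := y) (t := t) hL hγ hμ hρbar hℓ₀
    hJlow hE₀ hρ hρ₀ hv hπ hJ₀ hℓ hm hE hF₀ hy ht
  set P := sSup ((fun y => |π y 0|) '' Icc 0 L)
  have hP : 0 ≤ P := Real.sSup_nonneg (forall_mem_image.2 fun y _ => abs_nonneg (π y 0))
  calc _ ≤ (1 + 1 / c) * (Jbar * (1 + P) * C) :=
        S.sSup_pressure_add_sSup_jacobian_le hL.le hT.le hc
          (fun y hy t ht => (hbounds y hy t ht).1) hπ fun y hy t ht => (hbounds y hy t ht).2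
    _ = (1 + 1 / c) * C * (Jbar * (1 + P)) := by ring
    _ ≤ (1 + 1 / c) * C * ((Jbar + 1) * (1 + Jbar + P)) := by gcongr <;> linarith
    _ = (1 + 1 / c) * C * (Jbar + 1) * (1 + Jbar + P) := by ring

/-- (Proposition 2.5: uniform upper bounds of `J` and `π`.) The constant
`C` depends only on `γ, μ, ρ̄, ℓ₀, J̲, m₀, E₀, ‖G₀‖₂` and `T`. -/
theorem upper_bounds_J_pi
    (L γ μ ρbar ℓ₀ Jlow Jbar m₀ E₀ K₀ T : ℝ)
    (hL : 0 < L) (hγ : 1 < γ) (hμ : 0 < μ) (hρbar : 0 < ρbar) (hℓ₀ : 0 < ℓ₀)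
    (hJlow : 0 < Jlow) (hJbar : 0 < Jbar) (hm₀ : 0 ≤ m₀) (hE₀ : 0 ≤ E₀)
    (hK₀ : 0 ≤ K₀) (hT : 0 < T) :
    ∃ C > 0, ∀ (ρ₀ ρ₀d : ℝ → ℝ) (J v π Jt vy vt w πy πt : ℝ → ℝ → ℝ),
      (∀ y ∈ Icc (0:ℝ) L, HasDerivWithinAt ρ₀ (ρ₀d y) (Icc 0 L) y) →
      ContinuousOn ρ₀d (Icc 0 L) →
      (∀ y ∈ Icc (0:ℝ) L, 0 < ρ₀ y ∧ ρ₀ y ≤ ρbar) →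
      ClassicalSolution L T μ γ ρ₀ J v π Jt vy vt w πy πt →
      (∀ t ∈ Icc (0:ℝ) T, v 0 t = 0 ∧ v L t = 0) →
      (∀ y ∈ Icc (0:ℝ) L, 0 ≤ π y 0) →
      (∀ y ∈ Icc (0:ℝ) L, Jlow ≤ J y 0 ∧ J y 0 ≤ Jbar) →
      (∫ y in (0:ℝ)..L, J y 0) = ℓ₀ →
      (∫ y in (0:ℝ)..L, ρ₀ y) = m₀ →
      (∫ y in (0:ℝ)..L, (ρ₀ y * (v y 0) ^ 2 / 2 + J y 0 * π y 0 / (γ - 1))) = E₀ →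
      Real.sqrt (∫ y in (0:ℝ)..L, (μ * vy y 0 / J y 0 - π y 0) ^ 2) ≤ K₀ →
      sSup ((fun t => sSup ((fun y => |π y t|) '' Icc (0:ℝ) L)
              + sSup ((fun y => |J y t|) '' Icc (0:ℝ) L)) '' Icc (0:ℝ) T)
        ≤ C * (1 + Jbar + sSup ((fun y => |π y 0|) '' Icc (0:ℝ) L)) := by
  obtain ⟨C, hC, hbound⟩ := upper_bounds_J_pi_general L γ μ ρbar ℓ₀ Jlow Jbar m₀ E₀ K₀ T hL hγ hμ
    hρbar hℓ₀ hJlow hJbar hE₀ hK₀ hT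
  exact ⟨C, hC, fun ρ₀ _ J v π Jt vy vt w πy πt hρd _ hρ₀ => hbound ρ₀ J v π Jt vy vt w πy πt
    (fun y hy => (hρd y hy).continuousWithinAt) fun y hy => ⟨(hρ₀ y hy).1.le, (hρ₀ y hy).2⟩⟩
end

section
/- For all constants L > 0, γ > 1, μ > 0, ρ̄ > 0, ℓ₀ > 0, J̲ > 0, J̄ > 0, m₀ ≥ 0, P₀ ≥ 0, E₀ ≥ 0, K₀ ≥ 0, T > 0 there exists a constant C > 0 with the following property. Let ρ₀ ∈ C¹([0,L]) with 0 < ρ₀ ≤ ρ̄, and let (J, v, π) be a sufficiently smooth classical solution of (E1)–(E3) on [0,L]×[0,T] with boundary condition v(0,t) = v(L,t) = 0, such that π₀ ≥ 0, ‖π₀‖_∞ ≤ P₀, J̲ ≤ J₀ ≤ J̄, ∫₀ᴸ J₀ dy = ℓ₀, ∫₀ᴸ ρ₀ dy = m₀, ∫₀ᴸ ( ρ₀ v₀²/2 + J₀ π₀/(γ−1) ) dy = E₀, and ‖G₀‖₂ ≤ K₀ where G₀ := μ(∂_y v₀)/J₀ − π₀. Then: sup_{0≤t≤T} ( ‖∂_y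 J(·,t)‖₂ + ‖∂_y π(·,t)‖₂ ) ≤ C ( 1 + ‖∂_y J₀‖₂ + ‖∂_y π₀‖₂ ). -/
open Set MeasureTheory

/-!
Everything is controlled by the effective viscous flux `G = μ ∂_y v / J - π`, which satisfies
`∂_y G = ρ₀ ∂ₜv`. In terms of `G` the equations become `∂ₜ log J = (G + π) / μ` and an ordinary
differential equation for `π` at each `y`; in particular `J ^ γ π` is nondecreasing, so `π ≥ 0`.
Conservation of energy and of the length `∫ J`, with an integrated form of the momentum equation,
bound `J` from below.

The key quantity is `Φ = ∫ J G²`. With `D = ∫ ρ₀ (∂ₜv)²` one has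
`Φ' = -2 μ D - (2 γ - 1) ∫ (∂_y v) G²`, and `G² ≤ B + η Φ + M D / η` for every `η > 0`, because `G`
takes its `J`-weighted mean value `-∫ J π / ∫ J` somewhere. The functional
`log (1 + Φ) + ∫ ρ₀ v² / 2` then grows at most linearly: the kinetic energy loses `Φ / μ` per unit
time, which absorbs the growth of the logarithm by Young's inequality. Hence `Φ` is bounded, `D` is
integrable in time, and `sup G² ≲ 1 + D`. This bounds `J` and `π` from above, and finally
`∫ (∂_y log J)² + (∂_y π)²` satisfies a Grönwall inequality with rate `≲ 1 + D`.
-/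

section Calculus

open Filter Topology

variable {a b c d t y : ℝ}

lemma tendsto_intervalIntegral_mul_slope {A u u' : ℝ → ℝ → ℝ} (hab : a ≤ b)
    (hA : Continuous fun q : ℝ × ℝ => A q.1 q.2) (hu : Continuous fun q : ℝ × ℝ => u q.1 q.2)
    (hu' : Continuous fun q : ℝ × ℝ => u' q.1 q.2)
    (hderiv : ∀ y ∈ Ioo a b, ∀ t ∈ Ioo c d, HasDerivAt (u y) (u' y t) t) (ht : t ∈ Ioo c d) :
    Tendsto (fun r => ∫ y in a..b, A y r * slope (u y) t r) (𝓝[≠] t)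
      (𝓝 (∫ y in a..b, A y t * u' y t)) := by
  obtain ⟨MA, hMA⟩ := (isCompact_Icc.prod isCompact_Icc).exists_bound_of_continuousOn
    (s := Icc a b ×ˢ Icc c d) hA.continuousOn
  obtain ⟨Mu, hMu⟩ := (isCompact_Icc.prod isCompact_Icc).exists_bound_of_continuousOn
    (s := Icc a b ×ˢ Icc c d) hu'.continuousOn
  have mem_Ioo_ae : ∀ᵐ y : ℝ, y ∈ uIoc a b → y ∈ Ioo a b := by
    filter_upwards [Measure.ae_ne volume b] with y hyb hy
    rw [uIoc_of_le hab] at hy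
    exact ⟨hy.1, hy.2.lt_of_ne hyb⟩
  have mem_Ioo_near : ∀ᶠ r in 𝓝[≠] t, r ∈ Ioo c d :=
    mem_nhdsWithin_of_mem_nhds (Ioo_mem_nhds ht.1 ht.2)
  refine intervalIntegral.tendsto_integral_filter_of_dominated_convergence (fun _ => MA * Mu)
    ?_ ?_ intervalIntegrable_const ?_
  · filter_upwards with r
    simp only [slope_def_field]
    exact Continuous.aestronglyMeasurable (by fun_prop)
  · filter_upwards [mem_Ioo_near, self_mem_nhdsWithin] with r hr hrt
    filter_upwards [mem_Ioo_ae] with y hy hyab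
    have hyI : y ∈ Icc a b := Ioo_subset_Icc_self (hy hyab)
    have hAr : ‖A y r‖ ≤ MA := hMA (y, r) ⟨hyI, Ioo_subset_Icc_self hr⟩
    have hdiff : ‖u y r - u y t‖ ≤ Mu * ‖r - t‖ :=
      (convex_Ioo c d).norm_image_sub_le_of_norm_hasDerivWithin_le
        (fun x hx => (hderiv y (hy hyab) x hx).hasDerivWithinAt)
        (fun x hx => hMu (y, x) ⟨hyI, Ioo_subset_Icc_self hx⟩) ht hr
    have hslope : ‖slope (u y) t r‖ ≤ Mu := by
      rwa [slope_def_field, norm_div, div_le_iff₀ (norm_pos_iff.2 (sub_ne_zero.2 hrt))]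
    exact (norm_mul_le _ _).trans
      (mul_le_mul hAr hslope (norm_nonneg _) ((norm_nonneg _).trans hAr))
  · filter_upwards [mem_Ioo_ae] with y hy hyab
    have hAy : Continuous (A y) := by fun_prop
    exact ((hAy.tendsto t).mono_left nhdsWithin_le_nhds).mul
      (hasDerivAt_iff_tendsto_slope.1 (hderiv y (hy hyab) t ht))

lemma hasDerivAt_intervalIntegral_of_continuous {u u' : ℝ → ℝ → ℝ} (hab : a ≤ b)
    (hu : Continuous fun q : ℝ × ℝ => u q.1 q.2) (hu' : Continuous fun q : ℝ × ℝ => u' q.1 q.2)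
    (hderiv : ∀ y ∈ Ioo a b, ∀ t ∈ Ioo c d, HasDerivAt (u y) (u' y t) t) (ht : t ∈ Ioo c d) :
    HasDerivAt (fun t => ∫ y in a..b, u y t) (∫ y in a..b, u' y t) t := by
  have hlim := tendsto_intervalIntegral_mul_slope (A := fun _ _ => 1) hab (by fun_prop)
    hu hu' hderiv ht
  simp only [one_mul, slope_def_field] at hlim
  refine hasDerivAt_iff_tendsto_slope.2 (hlim.congr fun r => ?_)
  rw [slope_def_field, intervalIntegral.integral_div, intervalIntegral.integral_sub] <;>
    exact Continuous.intervalIntegrable (by fun_prop) _ _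

lemma hasDerivAt_intervalIntegral_of_uIcc_subset {u u' : ℝ → ℝ → ℝ} {S : Set ℝ}
    (hu : Continuous fun q : ℝ × ℝ => u q.1 q.2) (hu' : Continuous fun q : ℝ × ℝ => u' q.1 q.2)
    (hS : uIcc a b ⊆ S) (hderiv : ∀ y ∈ S, ∀ t ∈ Ioo c d, HasDerivAt (u y) (u' y t) t)
    (ht : t ∈ Ioo c d) :
    HasDerivAt (fun t => ∫ y in a..b, u y t) (∫ y in a..b, u' y t) t := by
  rcases le_total a b with hab | hba
  · exact hasDerivAt_intervalIntegral_of_continuous hab hu hu'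
      (fun y hy => hderiv y (hS (Icc_subset_uIcc (Ioo_subset_Icc_self hy)))) ht
  · simp_rw [intervalIntegral.integral_symm b a]
    exact (hasDerivAt_intervalIntegral_of_continuous hba hu hu'
      (fun y hy => hderiv y (hS (Icc_subset_uIcc' (Ioo_subset_Icc_self hy)))) ht).neg

lemma hasDerivAt_intervalIntegral_right {f : ℝ → ℝ} (hf : Continuous f) (a x : ℝ) :
    HasDerivAt (fun x => ∫ y in a..x, f y) (f x) x :=
  intervalIntegral.integral_hasDerivAt_right (hf.intervalIntegrable _ _)
    (hf.stronglyMeasurableAtFilter _ _) hf.continuousAt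

/- Integrating `∂ₜf = ft` in time and differentiating under the integral sign shows that `fy` is a
primitive of `fty`, so no regularity of `fy` is needed. -/
lemma hasDerivAt_mixed_partial {f ft fy fty : ℝ → ℝ → ℝ}
    (hft : Continuous fun q : ℝ × ℝ => ft q.1 q.2)
    (hfty : Continuous fun q : ℝ × ℝ => fty q.1 q.2)
    (deriv_t : ∀ y ∈ Ioo a b, ∀ t ∈ Ioo c d, HasDerivAt (f y) (ft y t) t)
    (deriv_y : ∀ y ∈ Ioo a b, ∀ t ∈ Ioo c d, HasDerivAt (f · t) (fy y t) y)
    (deriv_ty : ∀ y ∈ Ioo a b, ∀ t ∈ Ioo c d, HasDerivAt (ft · t) (fty y t) y)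
    (hy : y ∈ Ioo a b) (ht : t ∈ Ioo c d) : HasDerivAt (fy y) (fty y t) t := by
  have fy_eq : ∀ r ∈ Ioo c d, fy y r = fy y t + ∫ x in t..r, fty y x := by
    intro r hr
    have hsub : uIcc t r ⊆ Ioo c d := ordConnected_Ioo.uIcc_subset ht hr
    have f_eq : ∀ x ∈ Ioo a b, f x r = f x t + ∫ z in t..r, ft x z := by
      intro x hx
      rw [intervalIntegral.integral_eq_sub_of_hasDerivAt (fun z hz => deriv_t x hx z (hsub hz))
        (Continuous.intervalIntegrable (by fun_prop) _ _), add_sub_cancel]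
    have integral_deriv : HasDerivAt (fun x => ∫ z in t..r, ft x z) (∫ z in t..r, fty y z) y :=
      hasDerivAt_intervalIntegral_of_uIcc_subset (u := fun z x => ft x z)
        (u' := fun z x => fty x z) (by fun_prop) (by fun_prop) hsub
        (fun z hz x hx => deriv_ty x hx z hz) hy
    refine (deriv_y y hy r hr).unique
      (((deriv_y y hy t ht).add integral_deriv).congr_of_eventuallyEq ?_)
    filter_upwards [Ioo_mem_nhds hy.1 hy.2] with x hx using f_eq x hx
  have hfty_y : Continuous (fty y) := by fun_prop
  refine ((hasDerivAt_intervalIntegral_right hfty_y t t).const_add (fy y t)).congr_of_eventuallyEq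
    ?_
  filter_upwards [Ioo_mem_nhds ht.1 ht.2] with r hr using fy_eq r hr

lemma intervalIntegral_eq_sub {f f' : ℝ → ℝ} (hab : a ≤ b) (hf : Continuous f)
    (hf' : Continuous f') (hderiv : ∀ y ∈ Ioo a b, HasDerivAt f (f' y) y) :
    ∫ y in a..b, f' y = f b - f a :=
  intervalIntegral.integral_eq_sub_of_hasDerivAt_of_le hab hf.continuousOn hderiv
    (hf'.intervalIntegrable _ _)

lemma sub_le_intervalIntegral_of_hasDerivAt_le {f f' φ : ℝ → ℝ} (hab : a ≤ b)
    (hf : Continuous f) (hφ : Continuous φ) (hderiv : ∀ x ∈ Ioo a b, HasDerivAt f (f' x) x)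
    (hle : ∀ x ∈ Ioo a b, f' x ≤ φ x) : f b - f a ≤ ∫ x in a..b, φ x :=
  intervalIntegral.sub_le_integral_of_hasDeriv_right_of_le hab hf.continuousOn
    (fun x hx => (hderiv x hx).hasDerivWithinAt) hφ.integrableOn_Icc hle

lemma abs_sub_le_intervalIntegral_of_abs_hasDerivAt_le {f f' h : ℝ → ℝ} {x : ℝ}
    (hf : Continuous f) (hh : Continuous h) (hderiv : ∀ x ∈ Ioo a b, HasDerivAt f (f' x) x)
    (hle : ∀ x ∈ Ioo a b, |f' x| ≤ h x) (hh0 : ∀ x, 0 ≤ h x) (hx : x ∈ Icc a b)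
    (hy : y ∈ Icc a b) : |f x - f y| ≤ ∫ z in a..b, h z := by
  wlog hyx : y ≤ x generalizing x y
  · rw [abs_sub_comm]
    exact this hy hx (le_of_not_ge hyx)
  have hsub : Ioo y x ⊆ Ioo a b := Ioo_subset_Ioo hy.1 hx.2
  have upper : f x - f y ≤ ∫ z in y..x, h z :=
    sub_le_intervalIntegral_of_hasDerivAt_le hyx hf hh (fun z hz => hderiv z (hsub hz))
      fun z hz => (abs_le.1 (hle z (hsub hz))).2
  have lower : -f x - -f y ≤ ∫ z in y..x, h z :=
    sub_le_intervalIntegral_of_hasDerivAt_le hyx hf.neg hh (fun z hz => (hderiv z (hsub hz)).neg)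
      fun z hz => neg_le.1 (abs_le.1 (hle z (hsub hz))).1
  calc |f x - f y| ≤ ∫ z in y..x, h z := abs_le.2 ⟨by linarith, upper⟩
    _ ≤ ∫ z in a..b, h z := intervalIntegral.integral_mono_interval hy.1 hyx hx.2
        (ae_of_all _ hh0) (hh.intervalIntegrable _ _)

lemma eq_left_of_hasDerivAt_zero {f : ℝ → ℝ} (hf : Continuous f)
    (hderiv : ∀ x ∈ Ioo a b, HasDerivAt f 0 x) (ht : t ∈ Icc a b) : f t = f a := by
  have := intervalIntegral_eq_sub ht.1 hf continuous_const
    fun x hx => hderiv x ⟨hx.1, hx.2.trans_le ht.2⟩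
  rwa [intervalIntegral.integral_zero, eq_comm, sub_eq_zero] at this

lemma intervalIntegral_mul_deriv_eq_neg {f g f' g' : ℝ → ℝ} (hab : a ≤ b)
    (hf : Continuous f) (hg : Continuous g) (hf' : Continuous f') (hg' : Continuous g')
    (hff' : ∀ y ∈ Ioo a b, HasDerivAt f (f' y) y) (hgg' : ∀ y ∈ Ioo a b, HasDerivAt g (g' y) y)
    (hfa : f a = 0) (hfb : f b = 0) :
    ∫ y in a..b, f y * g' y = -∫ y in a..b, f' y * g y := by
  rw [intervalIntegral.integral_mul_deriv_eq_deriv_mul_of_hasDerivAt hf.continuousOn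
    hg.continuousOn (by rwa [min_eq_left hab, max_eq_right hab])
    (by rwa [min_eq_left hab, max_eq_right hab]) (hf'.intervalIntegrable _ _)
    (hg'.intervalIntegrable _ _), hfa, hfb]
  ring

end Calculus

section Extension

lemma coe_projIcc_of_mem {α : Type*} [LinearOrder α] {a b x : α} {hab : a ≤ b}
    (hx : x ∈ Icc a b) : (projIcc a b hab x : α) = x := by
  rw [projIcc_of_mem hab hx]

variable {E : Type*} [NormedAddCommGroup E] [NormedSpace ℝ E] {a b : ℝ} {hab : a ≤ b}

lemma continuous_comp_projIcc_projIcc {X : Type*} [TopologicalSpace X] {c d : ℝ} {hcd : c ≤ d}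
    {f : ℝ → ℝ → X} (hf : ContinuousOn (fun q : ℝ × ℝ => f q.1 q.2) (Icc a b ×ˢ Icc c d)) :
    Continuous fun q : ℝ × ℝ => f (projIcc a b hab q.1) (projIcc c d hcd q.2) :=
  hf.comp_continuous (f := fun q : ℝ × ℝ => ((projIcc a b hab q.1 : ℝ), (projIcc c d hcd q.2 : ℝ)))
    (by fun_prop) fun _ => ⟨Subtype.prop _, Subtype.prop _⟩

lemma hasDerivAt_comp_projIcc {f : ℝ → E} {f' : E} {x : ℝ}
    (hf : HasDerivWithinAt f f' (Icc a b) (projIcc a b hab x)) (hx : x ∈ Ioo a b) :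
    HasDerivAt (fun r => f (projIcc a b hab r)) f' x := by
  rw [coe_projIcc_of_mem (Ioo_subset_Icc_self hx)] at hf
  refine (hf.hasDerivAt (Icc_mem_nhds hx.1 hx.2)).congr_of_eventuallyEq ?_
  filter_upwards [Icc_mem_nhds hx.1 hx.2] with r hr
  rw [coe_projIcc_of_mem hr]

lemma integral_comp_projIcc_eq (f : ℝ → E) :
    ∫ y in a..b, f (projIcc a b hab y) = ∫ y in a..b, f y :=
  intervalIntegral.integral_congr fun y hy => by
    rw [uIcc_of_le hab] at hy
    simp only [coe_projIcc_of_mem hy]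

end Extension

section Inequalities

/- Young's inequality in the form `κ N ≤ Ψ / μ + κ² μ N² / (4 Ψ)` with `Ψ = 1 + Φ`; the size of `η`
makes the contribution of `D` to the last term at most `μ D / Ψ`. -/
lemma mul_sqrt_interpolation_le {μ κ B M η Φ D : ℝ} (hμ : 0 < μ) (hB : 0 ≤ B) (hM : 0 ≤ M)
    (hη : 0 < η) (hκη : κ ^ 2 * M / 4 ≤ η) (hΦ : 0 ≤ Φ) (hD : 0 ≤ D) :
    κ * Real.sqrt (B + η * Φ + M * D / η) ≤
      (1 + Φ) / μ + κ ^ 2 * μ / 4 * (B + η) + μ * D / (1 + Φ) := by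
  set N := Real.sqrt (B + η * Φ + M * D / η)
  have hN2 : N ^ 2 = B + η * Φ + M * D / η := Real.sq_sqrt (by positivity)
  have young : κ * N ≤ (1 + Φ) / μ + κ ^ 2 * μ / 4 * (N ^ 2 / (1 + Φ)) := by
    have hsq : (1 + Φ) / μ + κ ^ 2 * μ / 4 * (N ^ 2 / (1 + Φ)) - κ * N =
        ((1 + Φ) - κ * N * μ / 2) ^ 2 / (μ * (1 + Φ)) := by
      field_simp
      ring
    exact sub_nonneg.1 (hsq ▸ by positivity)
  have hquot : N ^ 2 / (1 + Φ) ≤ B + η + M * D / η / (1 + Φ) := by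
    rw [hN2, add_div _ (M * D / η)]
    gcongr
    rw [div_le_iff₀ (by positivity)]
    nlinarith [mul_nonneg hB hΦ]
  have habsorb : κ ^ 2 * μ / 4 * (M * D / η / (1 + Φ)) ≤ μ * D / (1 + Φ) := by
    calc κ ^ 2 * μ / 4 * (M * D / η / (1 + Φ))
        = κ ^ 2 * M / 4 / η * (μ * D / (1 + Φ)) := by ring
      _ ≤ 1 * (μ * D / (1 + Φ)) := by
          gcongr
          exact (div_le_one hη).2 hκη
      _ = μ * D / (1 + Φ) := one_mul _
  calc κ * N ≤ (1 + Φ) / μ + κ ^ 2 * μ / 4 * (B + η + M * D / η / (1 + Φ)) :=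
        young.trans (by gcongr)
    _ ≤ (1 + Φ) / μ + κ ^ 2 * μ / 4 * (B + η) + μ * D / (1 + Φ) := by
        rw [mul_add]
        linarith

lemma quadratic_gradient_terms_le {γ p a q G g P : ℝ} (hγ : 1 < γ) (hp : 0 ≤ p) (hpP : p ≤ P) :
    2 * a * (g + q) + 2 * q * (-(2 * p * q) + (γ - 2) * (g * p + G * q) + 2 * (γ - 1) * G * g)
      ≤ (2 + γ * P + 3 * γ) * ((1 + G ^ 2) * (a ^ 2 + q ^ 2) + g ^ 2) := by
  have hP : 0 ≤ P := hp.trans hpP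
  have : 0 < γ := by linarith
  have hγ2 : |γ - 2| ≤ γ := abs_le.2 ⟨by linarith, by linarith⟩
  have abs_two_mul_le (x y : ℝ) : |2 * (x * y)| ≤ x ^ 2 + y ^ 2 :=
    abs_le.2 ⟨by linarith [sq_nonneg (x + y)], by linarith [sq_nonneg (x - y)]⟩
  have hag : 2 * (a * g) ≤ a ^ 2 + g ^ 2 := (le_abs_self _).trans (abs_two_mul_le a g)
  have haq : 2 * (a * q) ≤ a ^ 2 + q ^ 2 := (le_abs_self _).trans (abs_two_mul_le a q)
  have hpqg : (γ - 2) * p * (2 * (q * g)) ≤ γ * P * (q ^ 2 + g ^ 2) :=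
    calc (γ - 2) * p * (2 * (q * g)) ≤ |(γ - 2) * p * (2 * (q * g))| := le_abs_self _
      _ = |γ - 2| * p * |2 * (q * g)| := by rw [abs_mul, abs_mul, abs_of_nonneg hp]
      _ ≤ γ * P * (q ^ 2 + g ^ 2) := by gcongr; exact abs_two_mul_le q g
  have hGqq : (γ - 2) * (2 * (1 * G)) * q ^ 2 ≤ γ * (1 ^ 2 + G ^ 2) * q ^ 2 :=
    calc (γ - 2) * (2 * (1 * G)) * q ^ 2 ≤ |(γ - 2) * (2 * (1 * G))| * q ^ 2 := by
          gcongr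
          exact le_abs_self _
      _ = |γ - 2| * |2 * (1 * G)| * q ^ 2 := by rw [abs_mul]
      _ ≤ γ * (1 ^ 2 + G ^ 2) * q ^ 2 := by gcongr; exact abs_two_mul_le 1 G
  have hGqg : 2 * (γ - 1) * (2 * (G * q * g)) ≤ 2 * γ * ((G * q) ^ 2 + g ^ 2) :=
    calc 2 * (γ - 1) * (2 * (G * q * g)) ≤ 2 * (γ - 1) * ((G * q) ^ 2 + g ^ 2) :=
          mul_le_mul_of_nonneg_left ((le_abs_self _).trans (abs_two_mul_le _ g)) (by linarith)
      _ ≤ 2 * γ * ((G * q) ^ 2 + g ^ 2) := by gcongr; linarith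
  have hpqq : 0 ≤ 4 * p * q ^ 2 := by positivity
  have hrest : 0 ≤ 2 * G ^ 2 * a ^ 2 + q ^ 2 + 2 * G ^ 2 * q ^ 2 + g ^ 2
      + γ * P * (a ^ 2 + G ^ 2 * a ^ 2 + G ^ 2 * q ^ 2)
      + 3 * γ * (1 + G ^ 2) * a ^ 2 + 2 * γ * q ^ 2 + γ * g ^ 2 := by positivity
  linarith

end Inequalities

/-- A smooth solution of (E1)–(E3) with `v = 0` at both ends and nonnegative initial pressure,
written in terms of the effective viscous flux `G = μ ∂_y v / J - p`; `vt`, `Jy`, `py` are `∂ₜv`,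
`∂_y J`, `∂_y p`, and `∂_y v` is the derived quantity `ViscousFlow.vy`. All fields live on the
whole plane, but the equations hold only for `0 < t < T` (time derivatives) and `0 < y < L` (space
derivatives): a solution on `[0,L] × [0,T]` is extended by projecting onto the rectangle. -/
structure ViscousFlow (L T μ γ : ℝ) where
  (ρ : ℝ → ℝ)
  (J v p G vt Jy py : ℝ → ℝ → ℝ)
  L_pos : 0 < L
  T_pos : 0 < T
  μ_pos : 0 < μ
  one_lt_γ : 1 < γ
  continuous_ρ : Continuous ρ
  continuous_J : Continuous fun q : ℝ × ℝ => J q.1 q.2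
  continuous_v : Continuous fun q : ℝ × ℝ => v q.1 q.2
  continuous_p : Continuous fun q : ℝ × ℝ => p q.1 q.2
  continuous_G : Continuous fun q : ℝ × ℝ => G q.1 q.2
  continuous_vt : Continuous fun q : ℝ × ℝ => vt q.1 q.2
  continuous_Jy : Continuous fun q : ℝ × ℝ => Jy q.1 q.2
  continuous_py : Continuous fun q : ℝ × ℝ => py q.1 q.2
  ρ_pos : ∀ y, 0 < ρ y
  J_pos : ∀ y t, 0 < J y t
  p_zero_nonneg : ∀ y, 0 ≤ p y 0
  v_left : ∀ t, v 0 t = 0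
  v_right : ∀ t, v L t = 0
  hasDerivAt_J_time : ∀ y, ∀ t ∈ Ioo 0 T, HasDerivAt (J y) (J y t * (G y t + p y t) / μ) t
  hasDerivAt_v_time : ∀ y, ∀ t ∈ Ioo 0 T, HasDerivAt (v y) (vt y t) t
  hasDerivAt_p_time : ∀ y, ∀ t ∈ Ioo 0 T, HasDerivAt (p y)
    ((-p y t ^ 2 + (γ - 2) * G y t * p y t + (γ - 1) * G y t ^ 2) / μ) t
  hasDerivAt_v_space : ∀ t, ∀ y ∈ Ioo 0 L, HasDerivAt (v · t) (J y t * (G y t + p y t) / μ) y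
  hasDerivAt_G_space : ∀ t, ∀ y ∈ Ioo 0 L, HasDerivAt (G · t) (ρ y * vt y t) y
  hasDerivAt_J_space : ∀ t, ∀ y ∈ Ioo 0 L, HasDerivAt (J · t) (Jy y t) y
  hasDerivAt_p_space : ∀ t, ∀ y ∈ Ioo 0 L, HasDerivAt (p · t) (py y t) y

namespace ViscousFlow

attribute [fun_prop] continuous_ρ continuous_J continuous_v continuous_p continuous_G
  continuous_vt continuous_Jy continuous_py

variable {L T μ γ : ℝ} (s : ViscousFlow L T μ γ) {t y : ℝ}

section Quantities

/-- The velocity gradient `∂_y v`, recovered from the effective viscous flux. -/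
noncomputable def vy (y t : ℝ) : ℝ := s.J y t * (s.G y t + s.p y t) / μ

/-- Total length `∫ J` of the flow region in Eulerian coordinates. -/
noncomputable def length (t : ℝ) : ℝ := ∫ y in (0 : ℝ)..L, s.J y t

/-- Total mass `∫ ρ₀`. -/
noncomputable def mass : ℝ := ∫ y in (0 : ℝ)..L, s.ρ y

/-- Kinetic energy `∫ ρ₀ v² / 2`. -/
noncomputable def kinetic (t : ℝ) : ℝ := ∫ y in (0 : ℝ)..L, s.ρ y * s.v y t ^ 2 / 2

/-- Total pressure `∫ J p`, which is `γ - 1` times the internal energy. -/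
noncomputable def pressure (t : ℝ) : ℝ := ∫ y in (0 : ℝ)..L, s.J y t * s.p y t

/-- Total energy. -/
noncomputable def energy (t : ℝ) : ℝ := s.kinetic t + s.pressure t / (γ - 1)

/-- Power `∫ G ∂_y v` transferred from kinetic to internal energy. -/
noncomputable def power (t : ℝ) : ℝ := ∫ y in (0 : ℝ)..L, s.vy y t * s.G y t

/-- The weighted norm `∫ J G²` of the effective viscous flux. -/
noncomputable def fluxNorm (t : ℝ) : ℝ := ∫ y in (0 : ℝ)..L, s.J y t * s.G y t ^ 2

/-- The dissipation `∫ ρ₀ (∂ₜv)²`, which controls the oscillation of `G` since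
`∂_y G = ρ₀ ∂ₜv`. -/
noncomputable def dissipation (t : ℝ) : ℝ := ∫ y in (0 : ℝ)..L, s.ρ y * s.vt y t ^ 2

/-- Momentum `∫₀ʸ ρ₀ v` of the fluid to the left of `y`. -/
noncomputable def momentum (y t : ℝ) : ℝ := ∫ z in (0 : ℝ)..y, s.ρ z * s.v z t

/-- The integral `∫ J F` of the momentum `F` over the flow region. -/
noncomputable def weightedMomentum (t : ℝ) : ℝ := ∫ y in (0 : ℝ)..L, s.J y t * s.momentum y t

@[fun_prop] lemma continuous_vy : Continuous fun q : ℝ × ℝ => s.vy q.1 q.2 := by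
  unfold vy; fun_prop

@[fun_prop] lemma continuous_length : Continuous s.length := by unfold length; fun_prop

@[fun_prop] lemma continuous_kinetic : Continuous s.kinetic := by unfold kinetic; fun_prop

@[fun_prop] lemma continuous_pressure : Continuous s.pressure := by unfold pressure; fun_prop

@[fun_prop] lemma continuous_fluxNorm : Continuous s.fluxNorm := by unfold fluxNorm; fun_prop

@[fun_prop] lemma continuous_dissipation : Continuous s.dissipation := by
  unfold dissipation; fun_prop

@[fun_prop] lemma continuous_momentum : Continuous fun q : ℝ × ℝ => s.momentum q.1 q.2 :=
  intervalIntegral.continuous_parametric_intervalIntegral_of_continuous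
    (f := fun (q : ℝ × ℝ) z => s.ρ z * s.v z q.2) (by fun_prop) continuous_fst

@[fun_prop] lemma continuous_weightedMomentum : Continuous s.weightedMomentum := by
  unfold weightedMomentum; fun_prop

lemma kinetic_nonneg (t : ℝ) : 0 ≤ s.kinetic t :=
  intervalIntegral.integral_nonneg s.L_pos.le fun y _ => by have := s.ρ_pos y; positivity

lemma fluxNorm_nonneg (t : ℝ) : 0 ≤ s.fluxNorm t :=
  intervalIntegral.integral_nonneg s.L_pos.le fun y _ => by have := s.J_pos y t; positivity

lemma dissipation_nonneg (t : ℝ) : 0 ≤ s.dissipation t :=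
  intervalIntegral.integral_nonneg s.L_pos.le fun y _ => by have := s.ρ_pos y; positivity

lemma length_pos (t : ℝ) : 0 < s.length t :=
  intervalIntegral.intervalIntegral_pos_of_pos (Continuous.intervalIntegrable (by fun_prop) _ _)
    (s.J_pos · t) s.L_pos

lemma γ_sub_one_pos (s : ViscousFlow L T μ γ) : 0 < γ - 1 := sub_pos.2 s.one_lt_γ

end Quantities

section Energy

-- `J ^ γ * p` is nondecreasing in time, since `∂ₜ(J ^ γ p) = (γ - 1) J ^ γ (G + p)² / μ`.
lemma p_nonneg (y : ℝ) (ht : t ∈ Icc 0 T) : 0 ≤ s.p y t := by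
  have hμ := s.μ_pos
  have hγ := s.γ_sub_one_pos
  have rpow_pos (r : ℝ) : 0 < s.J y r ^ γ := Real.rpow_pos_of_pos (s.J_pos y r) _
  have hderiv : ∀ r ∈ Ioo 0 t, HasDerivAt (fun r => -(s.J y r ^ γ * s.p y r))
      (-(s.J y r ^ γ * ((γ - 1) / μ * (s.G y r + s.p y r) ^ 2))) r := by
    intro r hr
    have hr' : r ∈ Ioo 0 T := ⟨hr.1, hr.2.trans_le ht.2⟩
    have hJ := s.J_pos y r
    refine (((s.hasDerivAt_J_time y r hr').rpow_const (Or.inl hJ.ne')).mul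
      (s.hasDerivAt_p_time y r hr')).neg.congr_deriv ?_
    rw [Real.rpow_sub_one hJ.ne']
    field_simp
    ring
  have hcont : Continuous fun r => -(s.J y r ^ γ * s.p y r) :=
    ((Continuous.rpow_const (by fun_prop) fun r => Or.inl (s.J_pos y r).ne').mul
      (by fun_prop)).neg
  have hmono := sub_le_intervalIntegral_of_hasDerivAt_le (φ := fun _ => 0) ht.1 hcont
    continuous_const hderiv fun r _ => by
      have := rpow_pos r
      exact neg_nonpos.2 (by positivity)
  rw [intervalIntegral.integral_zero] at hmono
  have hinit : 0 ≤ s.J y 0 ^ γ * s.p y 0 := mul_nonneg (rpow_pos 0).le (s.p_zero_nonneg y)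
  exact nonneg_of_mul_nonneg_right (by linarith) (rpow_pos t)

lemma pressure_nonneg (ht : t ∈ Icc 0 T) : 0 ≤ s.pressure t :=
  intervalIntegral.integral_nonneg s.L_pos.le fun y _ =>
    mul_nonneg (s.J_pos y t).le (s.p_nonneg y ht)

lemma integral_v_mul_deriv {g g' : ℝ → ℝ} (hg : Continuous g) (hg' : Continuous g')
    (hgg' : ∀ y ∈ Ioo 0 L, HasDerivAt g (g' y) y) (t : ℝ) :
    ∫ y in (0 : ℝ)..L, s.v y t * g' y = -∫ y in (0 : ℝ)..L, s.vy y t * g y :=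
  intervalIntegral_mul_deriv_eq_neg s.L_pos.le (by fun_prop) hg (by fun_prop) hg'
    (s.hasDerivAt_v_space t) hgg' (s.v_left t) (s.v_right t)

lemma hasDerivAt_kinetic (ht : t ∈ Ioo 0 T) : HasDerivAt s.kinetic (-s.power t) t := by
  have hderiv : ∀ y ∈ Ioo 0 L, ∀ r ∈ Ioo 0 T,
      HasDerivAt (fun r => s.ρ y * s.v y r ^ 2 / 2) (s.v y r * (s.ρ y * s.vt y r)) r :=
    fun y _ r hr => ((((s.hasDerivAt_v_time y r hr).pow 2).const_mul
      (s.ρ y)).div_const 2).congr_deriv (by push_cast; ring)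
  rw [power, ← s.integral_v_mul_deriv (by fun_prop) (by fun_prop) (s.hasDerivAt_G_space t)]
  exact hasDerivAt_intervalIntegral_of_continuous s.L_pos.le (by fun_prop) (by fun_prop) hderiv ht

lemma hasDerivAt_J_mul_p (y : ℝ) (ht : t ∈ Ioo 0 T) :
    HasDerivAt (fun t => s.J y t * s.p y t) ((γ - 1) * (s.vy y t * s.G y t)) t := by
  have := s.μ_pos
  refine ((s.hasDerivAt_J_time y t ht).mul (s.hasDerivAt_p_time y t ht)).congr_deriv ?_
  rw [vy]
  field_simp
  ring

lemma hasDerivAt_pressure (ht : t ∈ Ioo 0 T) : HasDerivAt s.pressure ((γ - 1) * s.power t) t := by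
  rw [power, ← intervalIntegral.integral_const_mul]
  exact hasDerivAt_intervalIntegral_of_continuous s.L_pos.le (by fun_prop) (by fun_prop)
    (fun y _ r hr => s.hasDerivAt_J_mul_p y hr) ht

lemma energy_eq (ht : t ∈ Icc 0 T) : s.energy t = s.energy 0 := by
  refine eq_left_of_hasDerivAt_zero (by unfold energy; fun_prop) (fun r hr => ?_) ht
  refine ((s.hasDerivAt_kinetic hr).add ((s.hasDerivAt_pressure hr).div_const _)).congr_deriv ?_
  rw [mul_div_cancel_left₀ _ s.γ_sub_one_pos.ne', neg_add_cancel]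

lemma kinetic_le_energy (ht : t ∈ Icc 0 T) : s.kinetic t ≤ s.energy 0 := by
  rw [← s.energy_eq ht, energy]
  exact le_add_of_nonneg_right (div_nonneg (s.pressure_nonneg ht) s.γ_sub_one_pos.le)

lemma pressure_le_energy (ht : t ∈ Icc 0 T) : s.pressure t ≤ (γ - 1) * s.energy 0 := by
  rw [← s.energy_eq ht, energy, mul_add, mul_div_cancel₀ _ s.γ_sub_one_pos.ne']
  exact le_add_of_nonneg_left (mul_nonneg s.γ_sub_one_pos.le (s.kinetic_nonneg t))

lemma energy_zero_nonneg : 0 ≤ s.energy 0 :=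
  (s.kinetic_nonneg 0).trans (s.kinetic_le_energy ⟨le_rfl, s.T_pos.le⟩)

lemma integral_vy (t : ℝ) : ∫ y in (0 : ℝ)..L, s.vy y t = 0 := by
  unfold vy
  rw [intervalIntegral_eq_sub s.L_pos.le (by fun_prop) (by fun_prop) (s.hasDerivAt_v_space t),
    s.v_left, s.v_right, sub_zero]

lemma length_eq (ht : t ∈ Icc 0 T) : s.length t = s.length 0 := by
  refine eq_left_of_hasDerivAt_zero (by fun_prop) (fun r hr => ?_) ht
  rw [← s.integral_vy r]
  exact hasDerivAt_intervalIntegral_of_continuous s.L_pos.le (by fun_prop) (by fun_prop)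
    (fun y _ => s.hasDerivAt_J_time y) hr

lemma integral_J_mul_G (t : ℝ) : ∫ y in (0 : ℝ)..L, s.J y t * s.G y t = -s.pressure t := by
  have hμ := s.μ_pos
  have J_mul_G (y : ℝ) : s.J y t * s.G y t = μ * s.vy y t - s.J y t * s.p y t := by
    rw [vy]
    field_simp
    ring
  simp_rw [J_mul_G]
  rw [intervalIntegral.integral_sub, intervalIntegral.integral_const_mul, s.integral_vy, pressure]
  · ring
  all_goals exact Continuous.intervalIntegrable (by fun_prop) _ _

end Energy

section LowerBound

lemma hasDerivAt_momentum_space (t y : ℝ) :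
    HasDerivAt (s.momentum · t) (s.ρ y * s.v y t) y :=
  hasDerivAt_intervalIntegral_right (f := fun y => s.ρ y * s.v y t) (by fun_prop) 0 y

lemma hasDerivAt_momentum_time (hy : y ∈ Icc 0 L) (ht : t ∈ Ioo 0 T) :
    HasDerivAt (s.momentum y) (s.G y t - s.G 0 t) t := by
  rw [← intervalIntegral_eq_sub (f := (s.G · t)) hy.1 (by fun_prop)
    (f' := fun y => s.ρ y * s.vt y t) (by fun_prop)
    fun z hz => s.hasDerivAt_G_space t z ⟨hz.1, hz.2.trans_le hy.2⟩]
  exact hasDerivAt_intervalIntegral_of_continuous hy.1 (by fun_prop) (by fun_prop)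
    (fun z _ r hr => (s.hasDerivAt_v_time z r hr).const_mul (s.ρ z)) ht

lemma abs_momentum_le (hy : y ∈ Icc 0 L) (ht : t ∈ Icc 0 T) :
    |s.momentum y t| ≤ s.mass + s.energy 0 := by
  have integrand_le : ∀ z, |s.ρ z * s.v z t| ≤ s.ρ z + s.ρ z * s.v z t ^ 2 / 2 := by
    intro z
    have hv : |s.v z t| ≤ 1 + s.v z t ^ 2 / 2 := by
      rw [← sq_abs]
      nlinarith [sq_nonneg (|s.v z t| - 1)]
    rw [abs_mul, abs_of_pos (s.ρ_pos z)]
    linarith [mul_le_mul_of_nonneg_left hv (s.ρ_pos z).le]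
  have hcont : Continuous fun z => s.ρ z + s.ρ z * s.v z t ^ 2 / 2 := by fun_prop
  calc |s.momentum y t| ≤ ∫ z in (0 : ℝ)..y, |s.ρ z * s.v z t| :=
        intervalIntegral.abs_integral_le_integral_abs hy.1
    _ ≤ ∫ z in (0 : ℝ)..y, (s.ρ z + s.ρ z * s.v z t ^ 2 / 2) :=
        intervalIntegral.integral_mono hy.1 (Continuous.intervalIntegrable (by fun_prop) _ _)
          (hcont.intervalIntegrable _ _) integrand_le
    _ ≤ ∫ z in (0 : ℝ)..L, (s.ρ z + s.ρ z * s.v z t ^ 2 / 2) :=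
        intervalIntegral.integral_mono_interval le_rfl hy.1 hy.2
          (ae_of_all _ fun z => (abs_nonneg _).trans (integrand_le z))
          (hcont.intervalIntegrable _ _)
    _ = s.mass + s.kinetic t := intervalIntegral.integral_add
        (s.continuous_ρ.intervalIntegrable _ _) (Continuous.intervalIntegrable (by fun_prop) _ _)
    _ ≤ s.mass + s.energy 0 := by gcongr; exact s.kinetic_le_energy ht

lemma abs_weightedMomentum_le (ht : t ∈ Icc 0 T) :
    |s.weightedMomentum t| ≤ s.length 0 * (s.mass + s.energy 0) := by
  calc |s.weightedMomentum t| ≤ ∫ y in (0 : ℝ)..L, |s.J y t * s.momentum y t| :=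
        intervalIntegral.abs_integral_le_integral_abs s.L_pos.le
    _ ≤ ∫ y in (0 : ℝ)..L, s.J y t * (s.mass + s.energy 0) := by
        refine intervalIntegral.integral_mono_on s.L_pos.le
          (Continuous.intervalIntegrable (by fun_prop) _ _)
          (Continuous.intervalIntegrable (by fun_prop) _ _) fun y hy => ?_
        rw [abs_mul, abs_of_pos (s.J_pos y t)]
        exact mul_le_mul_of_nonneg_left (s.abs_momentum_le hy ht) (s.J_pos y t).le
    _ = s.length 0 * (s.mass + s.energy 0) := by
        rw [intervalIntegral.integral_mul_const, ← s.length_eq ht, length]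

lemma hasDerivAt_weightedMomentum (ht : t ∈ Ioo 0 T) : HasDerivAt s.weightedMomentum
    (-(2 * s.kinetic t) - s.pressure t - s.length 0 * s.G 0 t) t := by
  refine (hasDerivAt_intervalIntegral_of_continuous (u := fun y t => s.J y t * s.momentum y t)
    (u' := fun y t => s.vy y t * s.momentum y t + s.J y t * (s.G y t - s.G 0 t)) s.L_pos.le
    (by fun_prop) (by fun_prop) (fun y hy r hr => (s.hasDerivAt_J_time y r hr).mul
      (s.hasDerivAt_momentum_time (Ioo_subset_Icc_self hy) hr)) ht).congr_deriv ?_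
  have convection : ∫ y in (0 : ℝ)..L, s.vy y t * s.momentum y t = -(2 * s.kinetic t) := by
    rw [← neg_eq_iff_eq_neg, ← s.integral_v_mul_deriv (by fun_prop) (by fun_prop)
      fun y _ => s.hasDerivAt_momentum_space t y, kinetic, ← intervalIntegral.integral_const_mul]
    congr 1 with y
    ring
  simp_rw [mul_sub]
  rw [intervalIntegral.integral_add, intervalIntegral.integral_sub, convection,
    s.integral_J_mul_G, intervalIntegral.integral_mul_const,
    ← s.length_eq (Ioo_subset_Icc_self ht), length]
  · ring
  all_goals exact Continuous.intervalIntegrable (by fun_prop) _ _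

lemma hasDerivAt_mul_log_J (y : ℝ) (ht : t ∈ Ioo 0 T) :
    HasDerivAt (fun t => μ * Real.log (s.J y t)) (s.G y t + s.p y t) t := by
  have hμ := s.μ_pos
  have hJ := s.J_pos y t
  refine (((s.hasDerivAt_J_time y t ht).log hJ.ne').const_mul μ).congr_deriv ?_
  field_simp

/- `ℓ F - Q - ℓ μ log J`, with `ℓ` the length, `F` the momentum and `Q = ∫ J F`, has
derivative at most `2 K + ∫ J p`: the unknown boundary value `G(0,t)` cancels. -/
lemma log_J_lower_bound (hy : y ∈ Icc 0 L) (ht : t ∈ Icc 0 T) :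
    s.length 0 * (μ * Real.log (s.J y 0)) - 4 * (s.length 0 * (s.mass + s.energy 0))
      - (γ + 1) * s.energy 0 * T ≤ s.length 0 * (μ * Real.log (s.J y t)) := by
  have hℓ := s.length_pos 0
  have hE := s.energy_zero_nonneg
  have hγ := s.one_lt_γ
  have hderiv : ∀ r ∈ Ioo 0 T, HasDerivAt
      (fun r => s.length 0 * s.momentum y r - s.weightedMomentum r
        - s.length 0 * (μ * Real.log (s.J y r)))
      (2 * s.kinetic r + s.pressure r - s.length 0 * s.p y r) r := fun r hr =>
    ((((s.hasDerivAt_momentum_time hy hr).const_mul _).sub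
      (s.hasDerivAt_weightedMomentum hr)).sub
      ((s.hasDerivAt_mul_log_J y hr).const_mul _)).congr_deriv (by ring)
  have hcmp := sub_le_intervalIntegral_of_hasDerivAt_le (φ := fun _ => (γ + 1) * s.energy 0) ht.1
    (by fun_prop (disch := exact fun r => (s.J_pos y r).ne')) continuous_const
    (fun r hr => hderiv r ⟨hr.1, hr.2.trans_le ht.2⟩) fun r hr => by
      have hr' : r ∈ Icc 0 T := ⟨hr.1.le, hr.2.le.trans ht.2⟩
      linarith [s.kinetic_le_energy hr', s.pressure_le_energy hr',
        mul_nonneg hℓ.le (s.p_nonneg y hr')]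
  rw [intervalIntegral.integral_const, smul_eq_mul, sub_zero] at hcmp
  have h0 : (0 : ℝ) ∈ Icc 0 T := ⟨le_rfl, s.T_pos.le⟩
  have htime : t * ((γ + 1) * s.energy 0) ≤ (γ + 1) * s.energy 0 * T := by
    rw [mul_comm t]
    exact mul_le_mul_of_nonneg_left ht.2 (by positivity)
  have hFt := mul_le_mul_of_nonneg_left (abs_le.1 (s.abs_momentum_le hy ht)).1 hℓ.le
  have hF0 := mul_le_mul_of_nonneg_left (abs_le.1 (s.abs_momentum_le hy h0)).2 hℓ.le
  have hQt := (abs_le.1 (s.abs_weightedMomentum_le ht)).2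
  have hQ0 := (abs_le.1 (s.abs_weightedMomentum_le h0)).1
  linarith

end LowerBound

section FluxNorm

open Filter Topology

lemma integral_mul_slope_v {g g' : ℝ → ℝ} (hg : Continuous g) (hg' : Continuous g')
    (hgg' : ∀ y ∈ Ioo 0 L, HasDerivAt g (g' y) y) (t r : ℝ) :
    ∫ y in (0 : ℝ)..L, g' y * slope (s.v y) t r = -∫ y in (0 : ℝ)..L, g y * slope (s.vy y) t r := by
  simp only [slope_def_field, mul_comm (g' _), mul_comm (g _)]
  exact intervalIntegral_mul_deriv_eq_neg s.L_pos.le (by fun_prop) hg (by fun_prop) hg'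
    (fun y hy => ((s.hasDerivAt_v_space r y hy).sub (s.hasDerivAt_v_space t y hy)).div_const _)
    hgg' (by simp [s.v_left]) (by simp [s.v_right])

lemma slope_J_mul_sq_G (y t r : ℝ) :
    slope (fun r => s.J y r * s.G y r ^ 2) t r = -(s.G y r * s.G y t * slope (s.J y) t r)
      - (s.G y r + s.G y t) * slope (fun r => s.J y r * s.p y r) t r
      + μ * ((s.G y r + s.G y t) * slope (s.vy y) t r) := by
  have := s.μ_pos
  simp only [slope_def_field, vy]
  field_simp
  ring

lemma slope_fluxNorm (t r : ℝ) :
    slope s.fluxNorm t r = -(∫ y in (0 : ℝ)..L, s.G y r * s.G y t * slope (s.J y) t r)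
      - (∫ y in (0 : ℝ)..L, (s.G y r + s.G y t) * slope (fun r => s.J y r * s.p y r) t r)
      - μ * ∫ y in (0 : ℝ)..L, (s.ρ y * s.vt y r + s.ρ y * s.vt y t) * slope (s.v y) t r := by
  have slope_integral : slope s.fluxNorm t r =
      ∫ y in (0 : ℝ)..L, slope (fun r => s.J y r * s.G y r ^ 2) t r := by
    simp only [slope_def_field, fluxNorm]
    rw [intervalIntegral.integral_div, intervalIntegral.integral_sub] <;>
      exact Continuous.intervalIntegrable (by fun_prop) _ _
  rw [slope_integral, s.integral_mul_slope_v (g := fun y => s.G y r + s.G y t) (by fun_prop)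
    (by fun_prop) fun y hy => (s.hasDerivAt_G_space r y hy).add (s.hasDerivAt_G_space t y hy)]
  simp only [s.slope_J_mul_sq_G]
  rw [intervalIntegral.integral_add, intervalIntegral.integral_sub, intervalIntegral.integral_neg,
    intervalIntegral.integral_const_mul]
  · ring
  all_goals
    simp only [slope_def_field]
    exact Continuous.intervalIntegrable (by fun_prop) _ _

/- `G` is not assumed to be differentiable in time, so we pass to the limit in the difference
quotients after integrating by parts. -/
lemma hasDerivAt_fluxNorm (ht : t ∈ Ioo 0 T) : HasDerivAt s.fluxNorm
    (-(2 * μ * s.dissipation t) - (2 * γ - 1) * ∫ y in (0 : ℝ)..L, s.vy y t * s.G y t ^ 2) t := by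
  have lim_J := tendsto_intervalIntegral_mul_slope (A := fun y r => s.G y r * s.G y t)
    s.L_pos.le (by fun_prop) s.continuous_J s.continuous_vy (fun y _ => s.hasDerivAt_J_time y) ht
  have lim_Jp := tendsto_intervalIntegral_mul_slope (A := fun y r => s.G y r + s.G y t)
    s.L_pos.le (by fun_prop) (by fun_prop) (by fun_prop)
    (fun y _ r hr => s.hasDerivAt_J_mul_p y hr) ht
  have lim_v := tendsto_intervalIntegral_mul_slope
    (A := fun y r => s.ρ y * s.vt y r + s.ρ y * s.vt y t) s.L_pos.le (by fun_prop)
    s.continuous_v s.continuous_vt (fun y _ => s.hasDerivAt_v_time y) ht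
  rw [hasDerivAt_iff_tendsto_slope]
  simp only [funext (s.slope_fluxNorm t)]
  convert (lim_J.neg.sub lim_Jp).sub (lim_v.const_mul μ) using 2
  rw [dissipation, ← intervalIntegral.integral_const_mul, ← intervalIntegral.integral_const_mul,
    ← intervalIntegral.integral_const_mul, ← intervalIntegral.integral_neg,
    ← intervalIntegral.integral_neg, ← intervalIntegral.integral_sub,
    ← intervalIntegral.integral_sub, ← intervalIntegral.integral_sub]
  · congr 1 with y
    ring
  all_goals exact Continuous.intervalIntegrable (by fun_prop) _ _

end FluxNorm

section FluxBound

lemma exists_sq_G_le (ht : t ∈ Icc 0 T) :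
    ∃ z ∈ Icc 0 L, s.G z t ^ 2 ≤ ((γ - 1) * s.energy 0 / s.length 0) ^ 2 := by
  have hℓ := s.length_pos 0
  have hJ : Continuous fun y => s.J y t := by fun_prop
  have hG : Continuous fun y => s.G y t := by fun_prop
  obtain ⟨z, hz, hmean⟩ := exists_eq_const_mul_intervalIntegral_of_nonneg
    (a := 0) (b := L) (μ := volume) hG.continuousOn (hJ.intervalIntegrable _ _)
    fun y _ => (s.J_pos y t).le
  rw [uIcc_of_le s.L_pos.le] at hz
  have hGz : s.G z t = -(s.pressure t / s.length 0) := by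
    rw [← neg_div, eq_div_iff hℓ.ne', ← s.length_eq ht, length, ← hmean, ← s.integral_J_mul_G]
    simp only [mul_comm]
  refine ⟨z, hz, ?_⟩
  rw [hGz, neg_sq]
  have := s.pressure_nonneg ht
  gcongr
  exact s.pressure_le_energy ht

/-- Interpolation bound `G² ≤ B + η ∫ J G² + (M / η) ∫ ρ₀ (∂ₜv)²` for every `η > 0`. -/
structure FluxBound (B M : ℝ) : Prop where
  B_nonneg : 0 ≤ B
  M_nonneg : 0 ≤ M
  sq_G_le : ∀ η > 0, ∀ t ∈ Icc 0 T, ∀ y ∈ Icc 0 L,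
    s.G y t ^ 2 ≤ B + η * s.fluxNorm t + M * s.dissipation t / η

lemma abs_deriv_sq_G_le {c ρbar η : ℝ} (hc : 0 < c) (hJ : c ≤ s.J y t) (hρ : s.ρ y ≤ ρbar)
    (hη : 0 < η) : |2 * s.G y t * (s.ρ y * s.vt y t)| ≤
      η * (s.J y t * s.G y t ^ 2) + ρbar / c / η * (s.ρ y * s.vt y t ^ 2) := by
  have hρy := s.ρ_pos y
  calc |2 * s.G y t * (s.ρ y * s.vt y t)|
      = 2 * |s.G y t| * |s.ρ y * s.vt y t| := by rw [abs_mul, abs_mul, abs_two]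
    _ ≤ η * c * |s.G y t| ^ 2 + (η * c)⁻¹ * |s.ρ y * s.vt y t| ^ 2 :=
        two_mul_le_add_mul_sq (mul_pos hη hc)
    _ = η * (c * s.G y t ^ 2) + s.ρ y / c / η * (s.ρ y * s.vt y t ^ 2) := by
        rw [sq_abs, sq_abs]
        field_simp
    _ ≤ η * (s.J y t * s.G y t ^ 2) + ρbar / c / η * (s.ρ y * s.vt y t ^ 2) := by gcongr

-- `G²` is compared with its value at a point where `G` equals its `J`-weighted mean `-∫ J p / ∫ J`.
lemma fluxBound_of_le {c ρbar : ℝ} (hc : 0 < c)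
    (hJ : ∀ t ∈ Icc 0 T, ∀ y ∈ Icc 0 L, c ≤ s.J y t) (hρ : ∀ y, s.ρ y ≤ ρbar) :
    s.FluxBound (((γ - 1) * s.energy 0 / s.length 0) ^ 2) (ρbar / c) where
  B_nonneg := sq_nonneg _
  M_nonneg := div_nonneg ((s.ρ_pos 0).le.trans (hρ 0)) hc.le
  sq_G_le η hη t ht y hy := by
    obtain ⟨z, hz, hGz⟩ := s.exists_sq_G_le ht
    have hosc := abs_sub_le_intervalIntegral_of_abs_hasDerivAt_le (f := fun y => s.G y t ^ 2)
      (f' := fun y => 2 * s.G y t * (s.ρ y * s.vt y t))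
      (h := fun y => η * (s.J y t * s.G y t ^ 2) + ρbar / c / η * (s.ρ y * s.vt y t ^ 2))
      (by fun_prop) (by fun_prop)
      (fun x hx => ((s.hasDerivAt_G_space t x hx).pow 2).congr_deriv (by push_cast; ring))
      (fun x hx => s.abs_deriv_sq_G_le hc (hJ t ht x (Ioo_subset_Icc_self hx)) (hρ x) hη)
      (fun x => by
        have hJx := s.J_pos x t
        have hρx := s.ρ_pos x
        have hρbar := hρx.trans_le (hρ x)
        positivity) hy hz
    rw [intervalIntegral.integral_add, intervalIntegral.integral_const_mul,
      intervalIntegral.integral_const_mul, ← fluxNorm, ← dissipation] at hosc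
    · have hdiv : ρbar / c / η * s.dissipation t = ρbar / c * s.dissipation t / η := by ring
      linarith [(abs_le.1 hosc).2]
    all_goals exact Continuous.intervalIntegrable (by fun_prop) _ _

end FluxBound

section Lyapunov

lemma power_eq (t : ℝ) :
    s.power t = (s.fluxNorm t + ∫ y in (0 : ℝ)..L, s.J y t * s.p y t * s.G y t) / μ := by
  rw [power, fluxNorm, ← intervalIntegral.integral_add, ← intervalIntegral.integral_div]
  · congr 1 with y
    rw [vy]
    ring
  all_goals exact Continuous.intervalIntegrable (by fun_prop) _ _

variable {N : ℝ}

lemma neg_integral_J_mul_p_mul_G_le (ht : t ∈ Icc 0 T) (hN : ∀ y ∈ Icc 0 L, |s.G y t| ≤ N) :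
    -∫ y in (0 : ℝ)..L, s.J y t * s.p y t * s.G y t ≤ (γ - 1) * s.energy 0 * N := by
  have hN0 : 0 ≤ N := (abs_nonneg _).trans (hN 0 ⟨le_rfl, s.L_pos.le⟩)
  calc -∫ y in (0 : ℝ)..L, s.J y t * s.p y t * s.G y t
      = ∫ y in (0 : ℝ)..L, s.J y t * s.p y t * -s.G y t := by
        simp only [mul_neg, intervalIntegral.integral_neg]
    _ ≤ ∫ y in (0 : ℝ)..L, s.J y t * s.p y t * N :=
        intervalIntegral.integral_mono_on s.L_pos.le
          (Continuous.intervalIntegrable (by fun_prop) _ _)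
          (Continuous.intervalIntegrable (by fun_prop) _ _) fun y hy =>
          mul_le_mul_of_nonneg_left (neg_le.1 (abs_le.1 (hN y hy)).1)
            (mul_nonneg (s.J_pos y t).le (s.p_nonneg y ht))
    _ = s.pressure t * N := intervalIntegral.integral_mul_const _ _
    _ ≤ (γ - 1) * s.energy 0 * N := mul_le_mul_of_nonneg_right (s.pressure_le_energy ht) hN0

lemma neg_integral_vy_mul_sq_G_le (ht : t ∈ Icc 0 T) (hN : ∀ y ∈ Icc 0 L, |s.G y t| ≤ N) :
    -∫ y in (0 : ℝ)..L, s.vy y t * s.G y t ^ 2 ≤ N * s.fluxNorm t / μ := by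
  have hμ := s.μ_pos
  rw [fluxNorm, ← intervalIntegral.integral_neg, ← intervalIntegral.integral_const_mul,
    ← intervalIntegral.integral_div]
  refine intervalIntegral.integral_mono_on s.L_pos.le
    (Continuous.intervalIntegrable (by fun_prop) _ _)
    (Continuous.intervalIntegrable (by fun_prop) _ _) fun y hy => ?_
  have hJ := s.J_pos y t
  calc -(s.vy y t * s.G y t ^ 2)
      = (-s.G y t - s.p y t) * (s.J y t * s.G y t ^ 2) / μ := by rw [vy]; ring
    _ ≤ N * (s.J y t * s.G y t ^ 2) / μ := by
        gcongr
        linarith [(abs_le.1 (hN y hy)).1, s.p_nonneg y ht]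

/-- The Lyapunov functional `log (1 + ∫ J G²) + ∫ ρ₀ v² / 2`: the kinetic energy decays at rate
`∫ J G² / μ`, which absorbs the growth of the logarithm. -/
noncomputable def lyapunov (t : ℝ) : ℝ := Real.log (1 + s.fluxNorm t) + s.kinetic t

lemma one_add_fluxNorm_pos (t : ℝ) : 0 < 1 + s.fluxNorm t := by linarith [s.fluxNorm_nonneg t]

@[fun_prop] lemma continuous_lyapunov : Continuous s.lyapunov := by
  unfold lyapunov
  fun_prop (disch := exact fun t => (s.one_add_fluxNorm_pos t).ne')

lemma hasDerivAt_lyapunov (ht : t ∈ Ioo 0 T) : HasDerivAt s.lyapunov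
    ((-(2 * μ * s.dissipation t) - (2 * γ - 1) * ∫ y in (0 : ℝ)..L, s.vy y t * s.G y t ^ 2)
      / (1 + s.fluxNorm t) + -s.power t) t :=
  (((s.hasDerivAt_fluxNorm ht).const_add 1).log (s.one_add_fluxNorm_pos t).ne').add
    (s.hasDerivAt_kinetic ht)

lemma deriv_lyapunov_le (ht : t ∈ Icc 0 T) (hN : ∀ y ∈ Icc 0 L, |s.G y t| ≤ N) :
    (-(2 * μ * s.dissipation t) - (2 * γ - 1) * ∫ y in (0 : ℝ)..L, s.vy y t * s.G y t ^ 2)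
        / (1 + s.fluxNorm t) + -s.power t ≤
      (2 * γ - 1 + (γ - 1) * s.energy 0) / μ * N - s.fluxNorm t / μ
        - 2 * (μ * s.dissipation t / (1 + s.fluxNorm t)) := by
  have hμ := s.μ_pos
  have hγ : 0 ≤ 2 * γ - 1 := by linarith [s.one_lt_γ]
  have hN0 : 0 ≤ N := (abs_nonneg _).trans (hN 0 ⟨le_rfl, s.L_pos.le⟩)
  have hΦ := s.one_add_fluxNorm_pos t
  have hcubic : (-(2 * γ - 1) * ∫ y in (0 : ℝ)..L, s.vy y t * s.G y t ^ 2) / (1 + s.fluxNorm t) ≤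
      (2 * γ - 1) / μ * N := by
    rw [div_le_iff₀ hΦ]
    calc (-(2 * γ - 1) * ∫ y in (0 : ℝ)..L, s.vy y t * s.G y t ^ 2)
        = (2 * γ - 1) * -∫ y in (0 : ℝ)..L, s.vy y t * s.G y t ^ 2 := by ring
      _ ≤ (2 * γ - 1) * (N * s.fluxNorm t / μ) :=
          mul_le_mul_of_nonneg_left (s.neg_integral_vy_mul_sq_G_le ht hN) hγ
      _ = (2 * γ - 1) / μ * N * s.fluxNorm t := by ring
      _ ≤ (2 * γ - 1) / μ * N * (1 + s.fluxNorm t) := by gcongr; linarith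
  have hpower : -s.power t ≤ (γ - 1) * s.energy 0 / μ * N - s.fluxNorm t / μ := by
    rw [s.power_eq, div_mul_eq_mul_div, ← sub_div, ← neg_div]
    gcongr
    linarith [s.neg_integral_J_mul_p_mul_G_le ht hN]
  calc _ = (-(2 * γ - 1) * ∫ y in (0 : ℝ)..L, s.vy y t * s.G y t ^ 2) / (1 + s.fluxNorm t)
        - 2 * (μ * s.dissipation t / (1 + s.fluxNorm t)) + -s.power t := by ring
    _ ≤ (2 * γ - 1) / μ * N - 2 * (μ * s.dissipation t / (1 + s.fluxNorm t))
        + ((γ - 1) * s.energy 0 / μ * N - s.fluxNorm t / μ) := by gcongr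
    _ = _ := by ring

variable {s} {B M κ η : ℝ}

lemma FluxBound.lyapunov_add_integral_le (h : s.FluxBound B M)
    (hκ : (2 * γ - 1 + (γ - 1) * s.energy 0) / μ ≤ κ) (hη : 0 < η) (hκη : κ ^ 2 * M / 4 ≤ η)
    (ht : t ∈ Icc 0 T) :
    s.lyapunov t + ∫ r in (0 : ℝ)..t, μ * s.dissipation r / (1 + s.fluxNorm r) ≤
      s.lyapunov 0 + (1 / μ + κ ^ 2 * μ / 4 * (B + η)) * T := by
  have hμ := s.μ_pos
  have hB := h.B_nonneg
  have hcont : Continuous fun r => μ * s.dissipation r / (1 + s.fluxNorm r) := by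
    fun_prop (disch := exact fun r => (s.one_add_fluxNorm_pos r).ne')
  have hderiv_le : ∀ r ∈ Ioo 0 t,
      (-(2 * μ * s.dissipation r) - (2 * γ - 1) * ∫ y in (0 : ℝ)..L, s.vy y r * s.G y r ^ 2)
        / (1 + s.fluxNorm r) + -s.power r ≤
      (1 / μ + κ ^ 2 * μ / 4 * (B + η)) - μ * s.dissipation r / (1 + s.fluxNorm r) := by
    intro r hr
    have hr' : r ∈ Icc 0 T := ⟨hr.1.le, hr.2.le.trans ht.2⟩
    have hrate := s.deriv_lyapunov_le hr' fun y hy => Real.abs_le_sqrt (h.sq_G_le η hη r hr' y hy)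
    have hyoung := mul_sqrt_interpolation_le hμ hB h.M_nonneg hη hκη (s.fluxNorm_nonneg r)
      (s.dissipation_nonneg r)
    rw [add_div] at hyoung
    linarith [mul_le_mul_of_nonneg_right hκ (Real.sqrt_nonneg
      (B + η * s.fluxNorm r + M * s.dissipation r / η))]
  have hcmp := sub_le_intervalIntegral_of_hasDerivAt_le
    (φ := fun r => (1 / μ + κ ^ 2 * μ / 4 * (B + η)) - μ * s.dissipation r / (1 + s.fluxNorm r))
    ht.1 s.continuous_lyapunov (continuous_const.sub hcont)
    (fun r hr => s.hasDerivAt_lyapunov ⟨hr.1, hr.2.trans_le ht.2⟩) hderiv_le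
  rw [intervalIntegral.integral_sub intervalIntegrable_const (hcont.intervalIntegrable _ _),
    intervalIntegral.integral_const, smul_eq_mul, sub_zero] at hcmp
  have htT : t * (1 / μ + κ ^ 2 * μ / 4 * (B + η)) ≤ (1 / μ + κ ^ 2 * μ / 4 * (B + η)) * T := by
    rw [mul_comm t]
    exact mul_le_mul_of_nonneg_left ht.2 (by positivity)
  linarith

end Lyapunov

section Dissipation

/-- Bounds on the initial data and the density of a flow, by the constants on which the final
estimate is allowed to depend. -/
structure DataBound (ρbar ℓ₀ Jlow Jbar m₀ P₀ E₀ K₀ : ℝ) : Prop where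
  ℓ₀_pos : 0 < ℓ₀
  Jlow_pos : 0 < Jlow
  ρ_le : ∀ y, s.ρ y ≤ ρbar
  le_length : ℓ₀ ≤ s.length 0
  mass_le : s.mass ≤ m₀
  energy_le : s.energy 0 ≤ E₀
  le_J_zero : ∀ y, Jlow ≤ s.J y 0
  J_zero_le : ∀ y, s.J y 0 ≤ Jbar
  p_zero_le : ∀ y, s.p y 0 ≤ P₀
  integral_sq_G_zero_le : ∫ y in (0 : ℝ)..L, s.G y 0 ^ 2 ≤ K₀ ^ 2

/-- Time-integrated bound `M` on the dissipation `D = ∫ ρ₀ (∂ₜv)²`, together with the pointwise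
control `G² ≤ A (1 + D)` of the flux by it. -/
structure DissipationBound (A M : ℝ) : Prop where
  integral_le : ∫ t in (0 : ℝ)..T, s.dissipation t ≤ M
  sq_G_le : ∀ t ∈ Icc 0 T, ∀ y ∈ Icc 0 L, s.G y t ^ 2 ≤ A * (1 + s.dissipation t)

variable {ρbar ℓ₀ Jlow Jbar m₀ P₀ E₀ K₀ : ℝ}

variable {s} in
lemma DataBound.exp_le_J (h : s.DataBound ρbar ℓ₀ Jlow Jbar m₀ P₀ E₀ K₀) (ht : t ∈ Icc 0 T)
    (hy : y ∈ Icc 0 L) :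
    Real.exp (Real.log Jlow - 4 * (m₀ + E₀) / μ - (γ + 1) * E₀ * T / (ℓ₀ * μ)) ≤ s.J y t := by
  have hμ := s.μ_pos
  have hT := s.T_pos
  have hℓ₀ := h.ℓ₀_pos
  have hγ : 0 ≤ γ + 1 := by linarith [s.one_lt_γ]
  have hℓ := s.length_pos 0
  have hE₀ : 0 ≤ E₀ := s.energy_zero_nonneg.trans h.energy_le
  rw [← Real.le_log_iff_exp_le (s.J_pos y t)]
  calc Real.log Jlow - 4 * (m₀ + E₀) / μ - (γ + 1) * E₀ * T / (ℓ₀ * μ)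
      ≤ Real.log (s.J y 0) - 4 * (s.mass + s.energy 0) / μ
          - (γ + 1) * s.energy 0 * T / (s.length 0 * μ) := by
        gcongr
        · exact h.Jlow_pos
        · exact h.le_J_zero y
        · exact h.mass_le
        · exact h.energy_le
        · exact h.energy_le
        · exact h.le_length
    _ = (s.length 0 * (μ * Real.log (s.J y 0)) - 4 * (s.length 0 * (s.mass + s.energy 0))
          - (γ + 1) * s.energy 0 * T) / (s.length 0 * μ) := by
        field_simp
    _ ≤ s.length 0 * (μ * Real.log (s.J y t)) / (s.length 0 * μ) := by
        gcongr
        exact s.log_J_lower_bound hy ht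
    _ = Real.log (s.J y t) := by field_simp

variable (T μ γ ρbar ℓ₀ Jlow Jbar m₀ P₀ E₀ K₀) in
lemma exists_fluxBound : ∃ B M : ℝ, ∀ (L : ℝ) (s : ViscousFlow L T μ γ),
    s.DataBound ρbar ℓ₀ Jlow Jbar m₀ P₀ E₀ K₀ → s.FluxBound B M := by
  refine ⟨((γ - 1) * E₀ / ℓ₀) ^ 2,
    ρbar / Real.exp (Real.log Jlow - 4 * (m₀ + E₀) / μ - (γ + 1) * E₀ * T / (ℓ₀ * μ)),
    fun L s h => ?_⟩
  have hE := s.energy_zero_nonneg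
  have hγ := s.γ_sub_one_pos
  have hℓ₀ := h.ℓ₀_pos
  have hB : ((γ - 1) * s.energy 0 / s.length 0) ^ 2 ≤ ((γ - 1) * E₀ / ℓ₀) ^ 2 := by
    have hℓ := s.length_pos 0
    gcongr
    · exact mul_nonneg hγ.le (hE.trans h.energy_le)
    · exact h.energy_le
    · exact h.le_length
  have hflux := s.fluxBound_of_le (Real.exp_pos _) (fun t ht y hy => h.exp_le_J ht hy) h.ρ_le
  exact ⟨sq_nonneg _, hflux.M_nonneg, fun η hη t ht y hy =>
    (hflux.sq_G_le η hη t ht y hy).trans (by gcongr)⟩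

variable {s}

lemma DataBound.lyapunov_zero_le (h : s.DataBound ρbar ℓ₀ Jlow Jbar m₀ P₀ E₀ K₀) :
    s.lyapunov 0 ≤ Real.log (1 + Jbar * K₀ ^ 2) + E₀ := by
  have hJbar : 0 ≤ Jbar := (s.J_pos 0 0).le.trans (h.J_zero_le 0)
  have hflux : s.fluxNorm 0 ≤ Jbar * K₀ ^ 2 := by
    calc s.fluxNorm 0 ≤ ∫ y in (0 : ℝ)..L, Jbar * s.G y 0 ^ 2 :=
          intervalIntegral.integral_mono s.L_pos.le
            (Continuous.intervalIntegrable (by fun_prop) _ _)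
            (Continuous.intervalIntegrable (by fun_prop) _ _)
            fun y => mul_le_mul_of_nonneg_right (h.J_zero_le y) (sq_nonneg _)
      _ = Jbar * ∫ y in (0 : ℝ)..L, s.G y 0 ^ 2 := intervalIntegral.integral_const_mul _ _
      _ ≤ Jbar * K₀ ^ 2 := mul_le_mul_of_nonneg_left h.integral_sq_G_zero_le hJbar
  unfold lyapunov
  gcongr
  · exact s.one_add_fluxNorm_pos 0
  · exact (s.kinetic_le_energy ⟨le_rfl, s.T_pos.le⟩).trans h.energy_le

variable {B M X η : ℝ}

lemma mul_dissipation_div_nonneg (s : ViscousFlow L T μ γ) (t : ℝ) :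
    0 ≤ μ * s.dissipation t / (1 + s.fluxNorm t) :=
  div_nonneg (mul_nonneg s.μ_pos.le (s.dissipation_nonneg t)) (s.one_add_fluxNorm_pos t).le

lemma one_add_fluxNorm_le_exp (ht : t ∈ Icc 0 T)
    (hX : s.lyapunov t + ∫ r in (0 : ℝ)..t, μ * s.dissipation r / (1 + s.fluxNorm r) ≤ X) :
    1 + s.fluxNorm t ≤ Real.exp X := by
  rw [← Real.log_le_iff_le_exp (s.one_add_fluxNorm_pos t)]
  rw [lyapunov] at hX
  linarith [s.kinetic_nonneg t, intervalIntegral.integral_nonneg (μ := volume) ht.1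
    fun r _ => s.mul_dissipation_div_nonneg r]

lemma integral_dissipation_le (hX : ∀ t ∈ Icc 0 T,
      s.lyapunov t + ∫ r in (0 : ℝ)..t, μ * s.dissipation r / (1 + s.fluxNorm r) ≤ X) :
    ∫ t in (0 : ℝ)..T, s.dissipation t ≤ Real.exp X / μ * X := by
  have hμ := s.μ_pos
  have hcont : Continuous fun r => μ * s.dissipation r / (1 + s.fluxNorm r) := by
    fun_prop (disch := exact fun r => (s.one_add_fluxNorm_pos r).ne')
  have pointwise : ∀ t ∈ Icc 0 T, s.dissipation t ≤
      Real.exp X / μ * (μ * s.dissipation t / (1 + s.fluxNorm t)) := by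
    intro t ht
    have hΦ := s.one_add_fluxNorm_pos t
    calc s.dissipation t
        = (1 + s.fluxNorm t) / μ * (μ * s.dissipation t / (1 + s.fluxNorm t)) := by field_simp
      _ ≤ Real.exp X / μ * (μ * s.dissipation t / (1 + s.fluxNorm t)) := by
          gcongr
          · exact s.mul_dissipation_div_nonneg t
          · exact one_add_fluxNorm_le_exp ht (hX t ht)
  have hint : ∫ r in (0 : ℝ)..T, μ * s.dissipation r / (1 + s.fluxNorm r) ≤ X := by
    have hXT := hX T ⟨s.T_pos.le, le_rfl⟩
    rw [lyapunov] at hXT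
    linarith [s.kinetic_nonneg T, Real.log_nonneg (le_add_of_nonneg_right (s.fluxNorm_nonneg T))]
  calc ∫ t in (0 : ℝ)..T, s.dissipation t
      ≤ ∫ t in (0 : ℝ)..T, Real.exp X / μ * (μ * s.dissipation t / (1 + s.fluxNorm t)) :=
        intervalIntegral.integral_mono_on s.T_pos.le
          (s.continuous_dissipation.intervalIntegrable _ _)
          ((continuous_const.mul hcont).intervalIntegrable _ _) pointwise
    _ = Real.exp X / μ * ∫ t in (0 : ℝ)..T, μ * s.dissipation t / (1 + s.fluxNorm t) :=
        intervalIntegral.integral_const_mul _ _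
    _ ≤ Real.exp X / μ * X := by gcongr

lemma FluxBound.dissipationBound (h : s.FluxBound B M) (hη : 0 < η) (hX : ∀ t ∈ Icc 0 T,
      s.lyapunov t + ∫ r in (0 : ℝ)..t, μ * s.dissipation r / (1 + s.fluxNorm r) ≤ X) :
    s.DissipationBound (B + η * Real.exp X + M / η) (Real.exp X / μ * X) where
  integral_le := integral_dissipation_le hX
  sq_G_le t ht y hy := by
    have hB := h.B_nonneg
    have hM := h.M_nonneg
    have hD := s.dissipation_nonneg t
    have hΦ : s.fluxNorm t ≤ Real.exp X := by linarith [one_add_fluxNorm_le_exp ht (hX t ht)]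
    calc s.G y t ^ 2 ≤ B + η * s.fluxNorm t + M * s.dissipation t / η := h.sq_G_le η hη t ht y hy
      _ ≤ B + η * Real.exp X + M * s.dissipation t / η := by gcongr
      _ ≤ B + η * Real.exp X + M * s.dissipation t / η
          + ((B + η * Real.exp X) * s.dissipation t + M / η) :=
          le_add_of_nonneg_right (by positivity)
      _ = (B + η * Real.exp X + M / η) * (1 + s.dissipation t) := by ring

variable (T μ γ ρbar ℓ₀ Jlow Jbar m₀ P₀ E₀ K₀) in
lemma exists_dissipationBound : ∃ A M : ℝ, ∀ (L : ℝ) (s : ViscousFlow L T μ γ),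
    s.DataBound ρbar ℓ₀ Jlow Jbar m₀ P₀ E₀ K₀ → s.DissipationBound A M := by
  obtain ⟨B, M, hflux⟩ := exists_fluxBound T μ γ ρbar ℓ₀ Jlow Jbar m₀ P₀ E₀ K₀
  let κ := (2 * γ - 1 + (γ - 1) * E₀) / μ
  let η := κ ^ 2 * M / 4 + 1
  let X := Real.log (1 + Jbar * K₀ ^ 2) + E₀ + (1 / μ + κ ^ 2 * μ / 4 * (B + η)) * T
  refine ⟨B + η * Real.exp X + M / η, Real.exp X / μ * X, fun L s h => ?_⟩
  have hBM := hflux L s h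
  have hη : 0 < η := by
    have := hBM.M_nonneg
    positivity
  have hκ : (2 * γ - 1 + (γ - 1) * s.energy 0) / μ ≤ κ := by
    have hμ := s.μ_pos
    have hγ := s.γ_sub_one_pos
    have hE := h.energy_le
    simp only [κ]
    gcongr
  refine hBM.dissipationBound hη fun t ht => ?_
  exact (hBM.lyapunov_add_integral_le hκ hη (lt_add_one _).le ht).trans
    (add_le_add_left h.lyapunov_zero_le _)

end Dissipation

section UpperBound

variable {s} {A M P : ℝ}

lemma DissipationBound.A_nonneg (h : s.DissipationBound A M) : 0 ≤ A :=
  nonneg_of_mul_nonneg_left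
    ((sq_nonneg _).trans (h.sq_G_le 0 ⟨le_rfl, s.T_pos.le⟩ 0 ⟨le_rfl, s.L_pos.le⟩))
    (by linarith [s.dissipation_nonneg 0])

lemma DissipationBound.le_add_of_hasDerivAt_le (h : s.DissipationBound A M) {f f' : ℝ → ℝ} {k : ℝ}
    (hf : Continuous f) (hderiv : ∀ r ∈ Ioo 0 T, HasDerivAt f (f' r) r) (hk : 0 ≤ k)
    (hle : ∀ r ∈ Ioo 0 T, f' r ≤ k * (1 + s.dissipation r)) (ht : t ∈ Icc 0 T) :
    f t ≤ f 0 + k * (T + M) := by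
  have hcont : Continuous fun r => 1 + s.dissipation r := by fun_prop
  have hsub : Ioo 0 t ⊆ Ioo 0 T := Ioo_subset_Ioo_right ht.2
  have hcmp := sub_le_intervalIntegral_of_hasDerivAt_le (φ := fun r => k * (1 + s.dissipation r))
    ht.1 hf (continuous_const.mul hcont) (fun r hr => hderiv r (hsub hr))
    fun r hr => hle r (hsub hr)
  have hint : ∫ r in (0 : ℝ)..t, (1 + s.dissipation r) ≤ T + M :=
    calc ∫ r in (0 : ℝ)..t, (1 + s.dissipation r) ≤ ∫ r in (0 : ℝ)..T, (1 + s.dissipation r) :=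
          intervalIntegral.integral_mono_interval le_rfl ht.1 ht.2
            (ae_of_all _ fun r => add_nonneg zero_le_one (s.dissipation_nonneg r))
            (hcont.intervalIntegrable _ _)
      _ = T + ∫ r in (0 : ℝ)..T, s.dissipation r := by
          rw [intervalIntegral.integral_add intervalIntegrable_const
            (s.continuous_dissipation.intervalIntegrable _ _), intervalIntegral.integral_const,
            smul_eq_mul, mul_one, sub_zero]
      _ ≤ T + M := by grw [h.integral_le]
  rw [intervalIntegral.integral_const_mul] at hcmp
  linarith [mul_le_mul_of_nonneg_left hint hk]

lemma DissipationBound.p_le (h : s.DissipationBound A M) (ht : t ∈ Icc 0 T) (hy : y ∈ Icc 0 L) :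
    s.p y t ≤ s.p y 0 + γ ^ 2 / (4 * μ) * A * (T + M) := by
  have hμ := s.μ_pos
  refine h.le_add_of_hasDerivAt_le (by fun_prop) (s.hasDerivAt_p_time y)
    (mul_nonneg (by positivity) h.A_nonneg) (fun r hr => ?_) ht
  calc (-s.p y r ^ 2 + (γ - 2) * s.G y r * s.p y r + (γ - 1) * s.G y r ^ 2) / μ
      = γ ^ 2 / (4 * μ) * s.G y r ^ 2 - (s.p y r - (γ - 2) / 2 * s.G y r) ^ 2 / μ := by
        field_simp
        ring
    _ ≤ γ ^ 2 / (4 * μ) * s.G y r ^ 2 := sub_le_self _ (by positivity)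
    _ ≤ γ ^ 2 / (4 * μ) * (A * (1 + s.dissipation r)) := by
        grw [h.sq_G_le r (Ioo_subset_Icc_self hr) y hy]
    _ = γ ^ 2 / (4 * μ) * A * (1 + s.dissipation r) := by ring

lemma DissipationBound.J_le (h : s.DissipationBound A M)
    (hP : ∀ t ∈ Icc 0 T, ∀ y ∈ Icc 0 L, s.p y t ≤ P) (ht : t ∈ Icc 0 T) (hy : y ∈ Icc 0 L) :
    s.J y t ≤ s.J y 0 * Real.exp ((1 + P + A) * (T + M) / μ) := by
  have hμ := s.μ_pos
  have hA := h.A_nonneg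
  have hP0 : 0 ≤ P := (s.p_nonneg y ht).trans (hP t ht y hy)
  have hlog := h.le_add_of_hasDerivAt_le (k := 1 + P + A)
    (by fun_prop (disch := exact fun r => (s.J_pos y r).ne')) (fun r => s.hasDerivAt_mul_log_J y)
    (by positivity) (fun r hr => ?_) ht
  · rw [← Real.log_le_log_iff (s.J_pos y t) (mul_pos (s.J_pos y 0) (Real.exp_pos _)),
      Real.log_mul (s.J_pos y 0).ne' (Real.exp_pos _).ne', Real.log_exp, ← sub_le_iff_le_add',
      le_div_iff₀ hμ]
    linarith
  · have hr' := Ioo_subset_Icc_self hr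
    have hD := s.dissipation_nonneg r
    have hG : s.G y r ≤ 1 + s.G y r ^ 2 := by nlinarith [sq_nonneg (s.G y r - 1)]
    linarith [h.sq_G_le r hr' y hy, hP r hr' y hy, mul_nonneg (add_nonneg zero_le_one hP0) hD]

end UpperBound

section Gradient

/-- The logarithmic gradient `∂_y log J`, whose time derivative is `(ρ₀ ∂ₜv + ∂_y p) / μ`. -/
noncomputable def logJy (y t : ℝ) : ℝ := s.Jy y t / s.J y t

/-- The time derivative of `∂_y p`. -/
noncomputable def pyt (y t : ℝ) : ℝ :=
  (-(2 * s.p y t * s.py y t)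
    + (γ - 2) * (s.ρ y * s.vt y t * s.p y t + s.G y t * s.py y t)
    + 2 * (γ - 1) * s.G y t * (s.ρ y * s.vt y t)) / μ

/-- The gradient functional `∫ (∂_y log J)² + (∂_y p)²`, which satisfies a Grönwall inequality. -/
noncomputable def gradientNorm (t : ℝ) : ℝ :=
  ∫ y in (0 : ℝ)..L, (s.logJy y t ^ 2 + s.py y t ^ 2)

@[fun_prop] lemma continuous_logJy : Continuous fun q : ℝ × ℝ => s.logJy q.1 q.2 := by
  unfold logJy
  fun_prop (disch := exact fun q => (s.J_pos q.1 q.2).ne')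

@[fun_prop] lemma continuous_pyt : Continuous fun q : ℝ × ℝ => s.pyt q.1 q.2 := by
  unfold pyt; fun_prop

@[fun_prop] lemma continuous_gradientNorm : Continuous s.gradientNorm := by
  unfold gradientNorm; fun_prop

lemma gradientNorm_nonneg (t : ℝ) : 0 ≤ s.gradientNorm t :=
  intervalIntegral.integral_nonneg s.L_pos.le fun y _ => by positivity

lemma hasDerivAt_logJy (hy : y ∈ Ioo 0 L) (ht : t ∈ Ioo 0 T) :
    HasDerivAt (s.logJy y) ((s.ρ y * s.vt y t + s.py y t) / μ) t :=
  hasDerivAt_mixed_partial (f := fun y t => Real.log (s.J y t))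
    (ft := fun y t => (s.G y t + s.p y t) / μ)
    (fty := fun y t => (s.ρ y * s.vt y t + s.py y t) / μ) (by fun_prop) (by fun_prop)
    (fun y _ t ht => by
      simpa only [mul_div_cancel_left₀ _ s.μ_pos.ne']
        using (s.hasDerivAt_mul_log_J y ht).div_const μ)
    (fun y hy t _ => (s.hasDerivAt_J_space t y hy).log (s.J_pos y t).ne')
    (fun y hy t _ =>
      ((s.hasDerivAt_G_space t y hy).add (s.hasDerivAt_p_space t y hy)).div_const μ) hy ht

lemma hasDerivAt_py (hy : y ∈ Ioo 0 L) (ht : t ∈ Ioo 0 T) :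
    HasDerivAt (s.py y) (s.pyt y t) t := by
  refine hasDerivAt_mixed_partial (f := s.p) (ft := fun y t =>
      (-s.p y t ^ 2 + (γ - 2) * s.G y t * s.p y t + (γ - 1) * s.G y t ^ 2) / μ)
    (by fun_prop) s.continuous_pyt (fun y _ => s.hasDerivAt_p_time y)
    (fun y hy t _ => s.hasDerivAt_p_space t y hy) (fun y hy t _ => ?_) hy ht
  have hG := s.hasDerivAt_G_space t y hy
  have hp := s.hasDerivAt_p_space t y hy
  refine ((((hp.pow 2).neg.add ((hG.const_mul (γ - 2)).mul hp)).add
    ((hG.pow 2).const_mul (γ - 1))).div_const μ).congr_deriv ?_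
  unfold pyt
  push_cast
  ring

lemma hasDerivAt_gradientNorm (ht : t ∈ Ioo 0 T) : HasDerivAt s.gradientNorm
    (∫ y in (0 : ℝ)..L, (2 * s.logJy y t * ((s.ρ y * s.vt y t + s.py y t) / μ)
      + 2 * s.py y t * s.pyt y t)) t :=
  hasDerivAt_intervalIntegral_of_continuous (u := fun y t => s.logJy y t ^ 2 + s.py y t ^ 2)
    (u' := fun y t => 2 * s.logJy y t * ((s.ρ y * s.vt y t + s.py y t) / μ)
      + 2 * s.py y t * s.pyt y t) s.L_pos.le (by fun_prop) (by fun_prop)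
    (fun y hy r hr => (((s.hasDerivAt_logJy hy hr).pow 2).add
      ((s.hasDerivAt_py hy hr).pow 2)).congr_deriv (by push_cast; ring)) ht

variable {s} {A M P ρbar : ℝ}

lemma deriv_gradient_density_le {N : ℝ} (ht : t ∈ Icc 0 T) (hρ : s.ρ y ≤ ρbar)
    (hP : s.p y t ≤ P) (hN : 1 + s.G y t ^ 2 ≤ N) :
    2 * s.logJy y t * ((s.ρ y * s.vt y t + s.py y t) / μ) + 2 * s.py y t * s.pyt y t ≤
      (2 + γ * P + 3 * γ) / μ * (N * (s.logJy y t ^ 2 + s.py y t ^ 2)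
        + ρbar * (s.ρ y * s.vt y t ^ 2)) := by
  have hμ := s.μ_pos
  have hγ := s.one_lt_γ
  have hP0 : 0 ≤ P := (s.p_nonneg y ht).trans hP
  have hGy : (s.ρ y * s.vt y t) ^ 2 ≤ ρbar * (s.ρ y * s.vt y t ^ 2) :=
    calc (s.ρ y * s.vt y t) ^ 2 = s.ρ y * (s.ρ y * s.vt y t ^ 2) := by ring
      _ ≤ ρbar * (s.ρ y * s.vt y t ^ 2) :=
          mul_le_mul_of_nonneg_right hρ (mul_nonneg (s.ρ_pos y).le (sq_nonneg _))
  calc 2 * s.logJy y t * ((s.ρ y * s.vt y t + s.py y t) / μ) + 2 * s.py y t * s.pyt y t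
      = (2 * s.logJy y t * (s.ρ y * s.vt y t + s.py y t) + 2 * s.py y t *
          (-(2 * s.p y t * s.py y t)
            + (γ - 2) * (s.ρ y * s.vt y t * s.p y t + s.G y t * s.py y t)
            + 2 * (γ - 1) * s.G y t * (s.ρ y * s.vt y t))) / μ := by rw [pyt]; ring
    _ ≤ (2 + γ * P + 3 * γ) * ((1 + s.G y t ^ 2) * (s.logJy y t ^ 2 + s.py y t ^ 2)
          + (s.ρ y * s.vt y t) ^ 2) / μ := by
        gcongr
        exact quadratic_gradient_terms_le hγ (s.p_nonneg y ht) hP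
    _ ≤ (2 + γ * P + 3 * γ) * (N * (s.logJy y t ^ 2 + s.py y t ^ 2)
          + ρbar * (s.ρ y * s.vt y t ^ 2)) / μ := by gcongr
    _ = (2 + γ * P + 3 * γ) / μ * (N * (s.logJy y t ^ 2 + s.py y t ^ 2)
          + ρbar * (s.ρ y * s.vt y t ^ 2)) := by ring

lemma DissipationBound.deriv_gradientNorm_le (h : s.DissipationBound A M)
    (hρ : ∀ y, s.ρ y ≤ ρbar) (hP : ∀ t ∈ Icc 0 T, ∀ y ∈ Icc 0 L, s.p y t ≤ P)
    (ht : t ∈ Icc 0 T) :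
    ∫ y in (0 : ℝ)..L, (2 * s.logJy y t * ((s.ρ y * s.vt y t + s.py y t) / μ)
      + 2 * s.py y t * s.pyt y t) ≤
    (2 + γ * P + 3 * γ) / μ * ((1 + A) * (1 + s.dissipation t) * s.gradientNorm t
      + ρbar * s.dissipation t) := by
  have sq_G_le : ∀ y ∈ Icc 0 L, 1 + s.G y t ^ 2 ≤ (1 + A) * (1 + s.dissipation t) :=
    fun y hy => by linarith [h.sq_G_le t ht y hy, s.dissipation_nonneg t]
  refine (intervalIntegral.integral_mono_on s.L_pos.le
    (Continuous.intervalIntegrable (by fun_prop) _ _)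
    (Continuous.intervalIntegrable (by fun_prop) _ _) fun y hy =>
      deriv_gradient_density_le ht (hρ y) (hP t ht y hy) (sq_G_le y hy)).trans_eq ?_
  rw [intervalIntegral.integral_const_mul, intervalIntegral.integral_add,
    intervalIntegral.integral_const_mul, intervalIntegral.integral_const_mul, ← gradientNorm,
    ← dissipation]
  all_goals exact Continuous.intervalIntegrable (by fun_prop) _ _

lemma DissipationBound.one_add_gradientNorm_le (h : s.DissipationBound A M)
    (hρ : ∀ y, s.ρ y ≤ ρbar) (hP : ∀ t ∈ Icc 0 T, ∀ y ∈ Icc 0 L, s.p y t ≤ P)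
    (ht : t ∈ Icc 0 T) :
    1 + s.gradientNorm t ≤
      Real.exp ((2 + γ * P + 3 * γ) / μ * (1 + A + ρbar) * (T + M)) * (1 + s.gradientNorm 0) := by
  have hZ (r : ℝ) : 0 < 1 + s.gradientNorm r := by linarith [s.gradientNorm_nonneg r]
  have hμ := s.μ_pos
  have hγ := s.one_lt_γ
  have hA := h.A_nonneg
  have hρbar : 0 ≤ ρbar := (s.ρ_pos 0).le.trans (hρ 0)
  have hP0 : 0 ≤ P := (s.p_nonneg 0 ht).trans (hP t ht 0 ⟨le_rfl, s.L_pos.le⟩)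
  have hlog := h.le_add_of_hasDerivAt_le (k := (2 + γ * P + 3 * γ) / μ * (1 + A + ρbar))
    (by fun_prop (disch := exact fun r => (hZ r).ne'))
    (fun r hr => ((s.hasDerivAt_gradientNorm hr).const_add 1).log (hZ r).ne') (by positivity)
    (fun r hr => ?_) ht
  · rw [← Real.log_le_log_iff (hZ t) (mul_pos (Real.exp_pos _) (hZ 0)),
      Real.log_mul (Real.exp_pos _).ne' (hZ 0).ne', Real.log_exp]
    linarith
  · have hD := s.dissipation_nonneg r
    have hZr := s.gradientNorm_nonneg r
    have hrest : 0 ≤ (1 + A) * (1 + s.dissipation r)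
        + ρbar * (1 + s.gradientNorm r + s.dissipation r * s.gradientNorm r) := by positivity
    rw [div_le_iff₀ (hZ r)]
    calc _ ≤ (2 + γ * P + 3 * γ) / μ * ((1 + A) * (1 + s.dissipation r) * s.gradientNorm r
            + ρbar * s.dissipation r) := h.deriv_gradientNorm_le hρ hP (Ioo_subset_Icc_self hr)
      _ ≤ (2 + γ * P + 3 * γ) / μ *
            ((1 + A + ρbar) * (1 + s.dissipation r) * (1 + s.gradientNorm r)) :=
          mul_le_mul_of_nonneg_left (by linarith) (by positivity)
      _ = _ := by ring

end Gradient

section Estimate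

variable {s} {Jm ρbar ℓ₀ Jlow Jbar m₀ P₀ E₀ K₀ : ℝ}

lemma sqrt_integral_sq_Jy_le (hJm : 0 ≤ Jm) (hJ : ∀ y ∈ Icc 0 L, s.J y t ≤ Jm) :
    Real.sqrt (∫ y in (0 : ℝ)..L, s.Jy y t ^ 2) ≤ Jm * Real.sqrt (s.gradientNorm t) := by
  rw [← Real.sqrt_sq hJm, ← Real.sqrt_mul (sq_nonneg _), gradientNorm,
    ← intervalIntegral.integral_const_mul]
  refine Real.sqrt_le_sqrt (intervalIntegral.integral_mono_on s.L_pos.le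
    (Continuous.intervalIntegrable (by fun_prop) _ _)
    (Continuous.intervalIntegrable (by fun_prop) _ _) fun y hy => ?_)
  have hJy := s.J_pos y t
  calc s.Jy y t ^ 2 = s.J y t ^ 2 * s.logJy y t ^ 2 := by rw [logJy]; field_simp
    _ ≤ Jm ^ 2 * (s.logJy y t ^ 2 + s.py y t ^ 2) := by
        gcongr
        · exact hJ y hy
        · exact le_add_of_nonneg_right (sq_nonneg _)

variable (s t) in
lemma sqrt_integral_sq_py_le :
    Real.sqrt (∫ y in (0 : ℝ)..L, s.py y t ^ 2) ≤ Real.sqrt (s.gradientNorm t) :=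
  Real.sqrt_le_sqrt (intervalIntegral.integral_mono s.L_pos.le
    (Continuous.intervalIntegrable (by fun_prop) _ _)
    (Continuous.intervalIntegrable (by fun_prop) _ _)
    fun _ => le_add_of_nonneg_left (sq_nonneg _))

lemma gradientNorm_le (hJlow : 0 < Jlow) (hJ : ∀ y, Jlow ≤ s.J y t) :
    s.gradientNorm t ≤
      (∫ y in (0 : ℝ)..L, s.Jy y t ^ 2) / Jlow ^ 2 + ∫ y in (0 : ℝ)..L, s.py y t ^ 2 := by
  rw [← intervalIntegral.integral_div, ← intervalIntegral.integral_add]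
  · refine intervalIntegral.integral_mono s.L_pos.le
      (Continuous.intervalIntegrable (by fun_prop) _ _)
      (Continuous.intervalIntegrable (by fun_prop) _ _) fun y => ?_
    simp only [logJy, div_pow]
    gcongr
    exact hJ y
  all_goals exact Continuous.intervalIntegrable (by fun_prop) _ _

lemma sqrt_one_add_gradientNorm_le (hJlow : 0 < Jlow) (hJ : ∀ y, Jlow ≤ s.J y t) :
    Real.sqrt (1 + s.gradientNorm t) ≤
      (1 + 1 / Jlow) * (1 + Real.sqrt (∫ y in (0 : ℝ)..L, s.Jy y t ^ 2)
        + Real.sqrt (∫ y in (0 : ℝ)..L, s.py y t ^ 2)) := by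
  have hZ := gradientNorm_le hJlow hJ
  set x := Real.sqrt (∫ y in (0 : ℝ)..L, s.Jy y t ^ 2)
  set z := Real.sqrt (∫ y in (0 : ℝ)..L, s.py y t ^ 2)
  have hx : x ^ 2 = ∫ y in (0 : ℝ)..L, s.Jy y t ^ 2 :=
    Real.sq_sqrt (intervalIntegral.integral_nonneg s.L_pos.le fun y _ => sq_nonneg _)
  have hz : z ^ 2 = ∫ y in (0 : ℝ)..L, s.py y t ^ 2 :=
    Real.sq_sqrt (intervalIntegral.integral_nonneg s.L_pos.le fun y _ => sq_nonneg _)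
  have hx0 : 0 ≤ x := Real.sqrt_nonneg _
  have hz0 : 0 ≤ z := Real.sqrt_nonneg _
  calc Real.sqrt (1 + s.gradientNorm t) ≤ Real.sqrt ((1 + x / Jlow + z) ^ 2) := by
        refine Real.sqrt_le_sqrt ?_
        rw [← hx, ← hz, ← div_pow] at hZ
        have : 0 ≤ 2 * (x / Jlow + z + x / Jlow * z) := by positivity
        linarith
    _ = 1 + x / Jlow + z := Real.sqrt_sq (by positivity)
    _ ≤ 1 + x / Jlow + z + (x + (1 + z) / Jlow) := le_add_of_nonneg_right (by positivity)
    _ = (1 + 1 / Jlow) * (1 + x + z) := by ring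

variable (T μ γ ρbar ℓ₀ Jlow Jbar m₀ P₀ E₀ K₀) in
lemma exists_bounds : ∃ Jm E : ℝ, ∀ (L : ℝ) (s : ViscousFlow L T μ γ),
    s.DataBound ρbar ℓ₀ Jlow Jbar m₀ P₀ E₀ K₀ → ∀ t ∈ Icc 0 T,
      (∀ y ∈ Icc 0 L, s.J y t ≤ Jm) ∧ 1 + s.gradientNorm t ≤ E * (1 + s.gradientNorm 0) := by
  obtain ⟨A, M, hdiss⟩ := exists_dissipationBound T μ γ ρbar ℓ₀ Jlow Jbar m₀ P₀ E₀ K₀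
  let P := P₀ + γ ^ 2 / (4 * μ) * A * (T + M)
  refine ⟨Jbar * Real.exp ((1 + P + A) * (T + M) / μ),
    Real.exp ((2 + γ * P + 3 * γ) / μ * (1 + A + ρbar) * (T + M)), fun L s h t ht => ?_⟩
  have hs := hdiss L s h
  have hP : ∀ t ∈ Icc 0 T, ∀ y ∈ Icc 0 L, s.p y t ≤ P := fun t ht y hy =>
    (hs.p_le ht hy).trans (by grw [h.p_zero_le y])
  exact ⟨fun y hy => (hs.J_le hP ht hy).trans (by grw [h.J_zero_le y]),
    hs.one_add_gradientNorm_le h.ρ_le hP ht⟩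

variable (T μ γ ρbar ℓ₀ Jlow Jbar m₀ P₀ E₀ K₀) in
theorem exists_H1_estimate : ∃ C > 0, ∀ (L : ℝ) (s : ViscousFlow L T μ γ),
    s.DataBound ρbar ℓ₀ Jlow Jbar m₀ P₀ E₀ K₀ → ∀ t ∈ Icc 0 T,
      Real.sqrt (∫ y in (0 : ℝ)..L, s.Jy y t ^ 2) + Real.sqrt (∫ y in (0 : ℝ)..L, s.py y t ^ 2) ≤
        C * (1 + Real.sqrt (∫ y in (0 : ℝ)..L, s.Jy y 0 ^ 2)
          + Real.sqrt (∫ y in (0 : ℝ)..L, s.py y 0 ^ 2)) := by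
  obtain ⟨Jm, E, hbounds⟩ := exists_bounds T μ γ ρbar ℓ₀ Jlow Jbar m₀ P₀ E₀ K₀
  refine ⟨max ((Jm + 1) * Real.sqrt E * (1 + 1 / Jlow)) 1, by positivity, fun L s h t ht => ?_⟩
  obtain ⟨hJ, hZ⟩ := hbounds L s h t ht
  have hJm : 0 ≤ Jm := (s.J_pos 0 t).le.trans (hJ 0 ⟨le_rfl, s.L_pos.le⟩)
  have hE : Real.sqrt (s.gradientNorm t) ≤ Real.sqrt E * Real.sqrt (1 + s.gradientNorm 0) := by
    rw [← Real.sqrt_mul' _ (by linarith [s.gradientNorm_nonneg 0])]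
    exact Real.sqrt_le_sqrt (by linarith)
  calc Real.sqrt (∫ y in (0 : ℝ)..L, s.Jy y t ^ 2) + Real.sqrt (∫ y in (0 : ℝ)..L, s.py y t ^ 2)
      ≤ Jm * Real.sqrt (s.gradientNorm t) + Real.sqrt (s.gradientNorm t) :=
        add_le_add (sqrt_integral_sq_Jy_le hJm hJ) (s.sqrt_integral_sq_py_le t)
    _ = (Jm + 1) * Real.sqrt (s.gradientNorm t) := by ring
    _ ≤ (Jm + 1) * (Real.sqrt E * ((1 + 1 / Jlow) *
          (1 + Real.sqrt (∫ y in (0 : ℝ)..L, s.Jy y 0 ^ 2)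
            + Real.sqrt (∫ y in (0 : ℝ)..L, s.py y 0 ^ 2)))) := by
        grw [hE, sqrt_one_add_gradientNorm_le h.Jlow_pos h.le_J_zero]
    _ = (Jm + 1) * Real.sqrt E * (1 + 1 / Jlow) *
          (1 + Real.sqrt (∫ y in (0 : ℝ)..L, s.Jy y 0 ^ 2)
            + Real.sqrt (∫ y in (0 : ℝ)..L, s.py y 0 ^ 2)) := by ring
    _ ≤ _ := mul_le_mul_of_nonneg_right (le_max_left _ _) (by positivity)

end Estimate

end ViscousFlow

/-- A classical solution satisfying the hypotheses of the `H¹` estimate that do not involve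
constants: continuous positive density, `Jy = ∂_y J` continuous, `v = 0` at both ends, and
nonnegative initial pressure. -/
structure RegularSolution (L T μ γ : ℝ) (ρ₀ : ℝ → ℝ)
    (J v π Jt vy vt w πy πt Jy : ℝ → ℝ → ℝ) : Prop
    extends ClassicalSolution L T μ γ ρ₀ J v π Jt vy vt w πy πt where
  L_pos : 0 < L
  T_pos : 0 < T
  μ_pos : 0 < μ
  one_lt_γ : 1 < γ
  continuousOn_ρ : ContinuousOn ρ₀ (Icc 0 L)
  ρ_pos : ∀ y ∈ Icc 0 L, 0 < ρ₀ y
  hasDerivWithinAt_J_space : ∀ y ∈ Icc 0 L, ∀ t ∈ Icc 0 T,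
    HasDerivWithinAt (fun x => J x t) (Jy y t) (Icc 0 L) y
  continuousOn_Jy : ContinuousOn (fun q : ℝ × ℝ => Jy q.1 q.2) (Icc 0 L ×ˢ Icc 0 T)
  v_boundary : ∀ t ∈ Icc 0 T, v 0 t = 0 ∧ v L t = 0
  p_zero_nonneg : ∀ y ∈ Icc 0 L, 0 ≤ π y 0

namespace RegularSolution

variable {L T μ γ : ℝ} {ρ₀ : ℝ → ℝ} {J v π Jt vy vt w πy πt Jy : ℝ → ℝ → ℝ}

lemma velocity_gradient_eq (h : RegularSolution L T μ γ ρ₀ J v π Jt vy vt w πy πt Jy) {y t : ℝ}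
    (hy : y ∈ Icc 0 L) (ht : t ∈ Icc 0 T) :
    vy y t = J y t * (μ * (vy y t / J y t) - π y t + π y t) / μ := by
  have hJ := h.Jpos y hy t ht
  have hμ := h.μ_pos
  field_simp
  ring

lemma pressure_rate_eq (h : RegularSolution L T μ γ ρ₀ J v π Jt vy vt w πy πt Jy) {y t : ℝ}
    (hy : y ∈ Icc 0 L) (ht : t ∈ Icc 0 T) :
    πt y t = (-π y t ^ 2 + (γ - 2) * (μ * (vy y t / J y t) - π y t) * π y t
      + (γ - 1) * (μ * (vy y t / J y t) - π y t) ^ 2) / μ := by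
  have hμ := h.μ_pos
  rw [eq_sub_of_add_eq (h.eq3 y hy t ht), eq_div_iff hμ.ne']
  ring

/-- The `ViscousFlow` obtained by precomposing all fields with the projection of the plane onto
`[0,L] × [0,T]`. -/
noncomputable def toViscousFlow (h : RegularSolution L T μ γ ρ₀ J v π Jt vy vt w πy πt Jy) :
    ViscousFlow L T μ γ :=
  let Y := projIcc 0 L h.L_pos.le
  let S := projIcc 0 T h.T_pos.le
  have hS_zero : (S 0 : ℝ) = 0 := coe_projIcc_of_mem (left_mem_Icc.2 h.T_pos.le)
  have continuous_J : Continuous fun q : ℝ × ℝ => J (Y q.1) (S q.2) :=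
    continuous_comp_projIcc_projIcc h.contJ
  { ρ := fun y => ρ₀ (Y y)
    J := fun y t => J (Y y) (S t)
    v := fun y t => v (Y y) (S t)
    p := fun y t => π (Y y) (S t)
    G := fun y t => μ * (vy (Y y) (S t) / J (Y y) (S t)) - π (Y y) (S t)
    vt := fun y t => vt (Y y) (S t)
    Jy := fun y t => Jy (Y y) (S t)
    py := fun y t => πy (Y y) (S t)
    L_pos := h.L_pos
    T_pos := h.T_pos
    μ_pos := h.μ_pos
    one_lt_γ := h.one_lt_γ
    continuous_ρ := h.continuousOn_ρ.comp_continuous (by fun_prop) fun y => (Y y).2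
    continuous_J := continuous_J
    continuous_v := continuous_comp_projIcc_projIcc h.contv
    continuous_p := continuous_comp_projIcc_projIcc h.contPi
    continuous_G := (((continuous_comp_projIcc_projIcc h.contvy).div continuous_J
      fun q => (h.Jpos _ (Y q.1).2 _ (S q.2).2).ne').const_mul μ).sub
        (continuous_comp_projIcc_projIcc h.contPi)
    continuous_vt := continuous_comp_projIcc_projIcc h.contvt
    continuous_Jy := continuous_comp_projIcc_projIcc h.continuousOn_Jy
    continuous_py := continuous_comp_projIcc_projIcc h.contPiy
    ρ_pos := fun y => h.ρ_pos _ (Y y).2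
    J_pos := fun y t => h.Jpos _ (Y y).2 _ (S t).2
    p_zero_nonneg := fun y => by
      rw [hS_zero]
      exact h.p_zero_nonneg _ (Y y).2
    v_left := fun t => by
      rw [coe_projIcc_of_mem (left_mem_Icc.2 h.L_pos.le)]
      exact (h.v_boundary _ (S t).2).1
    v_right := fun t => by
      rw [coe_projIcc_of_mem (right_mem_Icc.2 h.L_pos.le)]
      exact (h.v_boundary _ (S t).2).2
    hasDerivAt_J_time := fun y t ht => (hasDerivAt_comp_projIcc (h.hJt _ (Y y).2 _ (S t).2)
      ht).congr_deriv
        ((h.eq1 _ (Y y).2 _ (S t).2).trans (h.velocity_gradient_eq (Y y).2 (S t).2))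
    hasDerivAt_v_time := fun y t ht => hasDerivAt_comp_projIcc (h.hvt _ (Y y).2 _ (S t).2) ht
    hasDerivAt_p_time := fun y t ht => (hasDerivAt_comp_projIcc (h.hPit _ (Y y).2 _ (S t).2)
      ht).congr_deriv (h.pressure_rate_eq (Y y).2 (S t).2)
    hasDerivAt_v_space := fun t y hy => (hasDerivAt_comp_projIcc (f := (v · (S t)))
      (h.hvy _ (Y y).2 _ (S t).2) hy).congr_deriv (h.velocity_gradient_eq (Y y).2 (S t).2)
    hasDerivAt_G_space := fun t y hy => (hasDerivAt_comp_projIcc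
      (f := fun x => μ * (vy x (S t) / J x (S t)) - π x (S t))
      (((h.hw _ (Y y).2 _ (S t).2).const_mul μ).sub (h.hPiy _ (Y y).2 _ (S t).2)) hy).congr_deriv
        (by linarith [h.eq2 _ (Y y).2 _ (S t).2])
    hasDerivAt_J_space := fun t y hy => hasDerivAt_comp_projIcc (f := (J · (S t)))
      (h.hasDerivWithinAt_J_space _ (Y y).2 _ (S t).2) hy
    hasDerivAt_p_space := fun t y hy => hasDerivAt_comp_projIcc (f := (π · (S t)))
      (h.hPiy _ (Y y).2 _ (S t).2) hy }

variable (h : RegularSolution L T μ γ ρ₀ J v π Jt vy vt w πy πt Jy)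

lemma integral_sq_toViscousFlow_Jy {t : ℝ} (ht : t ∈ Icc 0 T) :
    ∫ y in (0 : ℝ)..L, h.toViscousFlow.Jy y t ^ 2 = ∫ y in (0 : ℝ)..L, Jy y t ^ 2 := by
  simp only [toViscousFlow, coe_projIcc_of_mem ht]
  exact integral_comp_projIcc_eq fun y => Jy y t ^ 2

lemma integral_sq_toViscousFlow_py {t : ℝ} (ht : t ∈ Icc 0 T) :
    ∫ y in (0 : ℝ)..L, h.toViscousFlow.py y t ^ 2 = ∫ y in (0 : ℝ)..L, πy y t ^ 2 := by
  simp only [toViscousFlow, coe_projIcc_of_mem ht]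
  exact integral_comp_projIcc_eq fun y => πy y t ^ 2

lemma p_zero_le_sSup (h : RegularSolution L T μ γ ρ₀ J v π Jt vy vt w πy πt Jy) {y : ℝ}
    (hy : y ∈ Icc 0 L) :
    π y 0 ≤ sSup ((fun y => |π y 0|) '' Icc (0 : ℝ) L) := by
  have hcont : ContinuousOn (fun y => |π y 0|) (Icc 0 L) :=
    (h.contPi.comp (f := fun y : ℝ => (y, (0 : ℝ))) (by fun_prop)
      fun y hy => ⟨hy, left_mem_Icc.2 h.T_pos.le⟩).abs
  exact (le_abs_self _).trans
    (le_csSup (isCompact_Icc.image_of_continuousOn hcont).bddAbove ⟨y, hy, rfl⟩)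

lemma energy_toViscousFlow_zero : h.toViscousFlow.energy 0 =
    ∫ y in (0 : ℝ)..L, (ρ₀ y * v y 0 ^ 2 / 2 + J y 0 * π y 0 / (γ - 1)) := by
  have h0 : (0 : ℝ) ∈ Icc 0 T := left_mem_Icc.2 h.T_pos.le
  rw [ViscousFlow.energy, ViscousFlow.kinetic, ViscousFlow.pressure,
    ← intervalIntegral.integral_div, ← intervalIntegral.integral_add
      (Continuous.intervalIntegrable (by fun_prop) _ _)
      (Continuous.intervalIntegrable (by fun_prop) _ _)]
  simp only [toViscousFlow, coe_projIcc_of_mem h0]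
  exact integral_comp_projIcc_eq fun y => ρ₀ y * v y 0 ^ 2 / 2 + J y 0 * π y 0 / (γ - 1)

lemma dataBound_toViscousFlow {ρbar ℓ₀ Jlow Jbar m₀ P₀ E₀ K₀ : ℝ} (hℓ₀ : 0 < ℓ₀) (hJlow : 0 < Jlow)
    (hρ : ∀ y ∈ Icc 0 L, ρ₀ y ≤ ρbar) (hπ : sSup ((fun y => |π y 0|) '' Icc (0 : ℝ) L) ≤ P₀)
    (hJ : ∀ y ∈ Icc 0 L, Jlow ≤ J y 0 ∧ J y 0 ≤ Jbar)
    (hlength : ℓ₀ ≤ ∫ y in (0 : ℝ)..L, J y 0) (hmass : (∫ y in (0 : ℝ)..L, ρ₀ y) ≤ m₀)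
    (henergy : (∫ y in (0 : ℝ)..L, (ρ₀ y * v y 0 ^ 2 / 2 + J y 0 * π y 0 / (γ - 1))) ≤ E₀)
    (hG : Real.sqrt (∫ y in (0 : ℝ)..L, (μ * vy y 0 / J y 0 - π y 0) ^ 2) ≤ K₀) :
    h.toViscousFlow.DataBound ρbar ℓ₀ Jlow Jbar m₀ P₀ E₀ K₀ := by
  have h0 : (0 : ℝ) ∈ Icc 0 T := left_mem_Icc.2 h.T_pos.le
  refine ⟨hℓ₀, hJlow, fun y => hρ _ (Subtype.prop _), hlength.trans_eq ?_, Eq.trans_le ?_ hmass,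
    h.energy_toViscousFlow_zero.trans_le henergy, fun y => ?_, fun y => ?_, fun y => ?_,
    Eq.trans_le ?_ (Real.sqrt_le_iff.1 hG).2⟩
  · simp only [ViscousFlow.length, toViscousFlow, coe_projIcc_of_mem h0]
    exact (integral_comp_projIcc_eq (J · 0)).symm
  · exact integral_comp_projIcc_eq ρ₀
  · simp only [toViscousFlow, coe_projIcc_of_mem h0]
    exact (hJ _ (Subtype.prop _)).1
  · simp only [toViscousFlow, coe_projIcc_of_mem h0]
    exact (hJ _ (Subtype.prop _)).2
  · simp only [toViscousFlow, coe_projIcc_of_mem h0]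
    exact (h.p_zero_le_sSup (Subtype.prop _)).trans hπ
  · simp only [toViscousFlow, coe_projIcc_of_mem h0, ← mul_div_assoc]
    exact integral_comp_projIcc_eq fun y => (μ * vy y 0 / J y 0 - π y 0) ^ 2

end RegularSolution

theorem H1_estimate_J_pi_general (γ μ ρbar ℓ₀ Jlow Jbar m₀ P₀ E₀ K₀ T : ℝ)
    (hγ : 1 < γ) (hμ : 0 < μ) (hℓ₀ : 0 < ℓ₀) (hJlow : 0 < Jlow) (hT : 0 < T) :
    ∃ C > 0, ∀ L > 0, ∀ (ρ₀ : ℝ → ℝ) (J v π Jt vy vt w πy πt Jy : ℝ → ℝ → ℝ),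
      ContinuousOn ρ₀ (Icc 0 L) →
      (∀ y ∈ Icc (0 : ℝ) L, 0 < ρ₀ y ∧ ρ₀ y ≤ ρbar) →
      ClassicalSolution L T μ γ ρ₀ J v π Jt vy vt w πy πt →
      (∀ y ∈ Icc (0 : ℝ) L, ∀ t ∈ Icc (0 : ℝ) T,
        HasDerivWithinAt (fun x => J x t) (Jy y t) (Icc 0 L) y) →
      ContinuousOn (fun p : ℝ × ℝ => Jy p.1 p.2) (Icc 0 L ×ˢ Icc 0 T) →
      (∀ t ∈ Icc (0 : ℝ) T, v 0 t = 0 ∧ v L t = 0) →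
      (∀ y ∈ Icc (0 : ℝ) L, 0 ≤ π y 0) →
      sSup ((fun y => |π y 0|) '' Icc (0 : ℝ) L) ≤ P₀ →
      (∀ y ∈ Icc (0 : ℝ) L, Jlow ≤ J y 0 ∧ J y 0 ≤ Jbar) →
      ℓ₀ ≤ (∫ y in (0 : ℝ)..L, J y 0) →
      (∫ y in (0 : ℝ)..L, ρ₀ y) ≤ m₀ →
      (∫ y in (0 : ℝ)..L, (ρ₀ y * (v y 0) ^ 2 / 2 + J y 0 * π y 0 / (γ - 1))) ≤ E₀ →
      Real.sqrt (∫ y in (0 : ℝ)..L, (μ * vy y 0 / J y 0 - π y 0) ^ 2) ≤ K₀ →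
      sSup ((fun t => Real.sqrt (∫ y in (0 : ℝ)..L, (Jy y t) ^ 2)
              + Real.sqrt (∫ y in (0 : ℝ)..L, (πy y t) ^ 2)) '' Icc (0 : ℝ) T)
        ≤ C * (1 + Real.sqrt (∫ y in (0 : ℝ)..L, (Jy y 0) ^ 2)
              + Real.sqrt (∫ y in (0 : ℝ)..L, (πy y 0) ^ 2)) := by
  obtain ⟨C, hC, hestimate⟩ :=
    ViscousFlow.exists_H1_estimate T μ γ ρbar ℓ₀ Jlow Jbar m₀ P₀ E₀ K₀
  refine ⟨C, hC, fun L hL ρ₀ J v π Jt vy vt w πy πt Jy hρc hρ hsol hJy hJyc hv hπ0 hπ hJ hlength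
    hmass henergy hG => ?_⟩
  have h : RegularSolution L T μ γ ρ₀ J v π Jt vy vt w πy πt Jy :=
    ⟨hsol, hL, hT, hμ, hγ, hρc, fun y hy => (hρ y hy).1, hJy, hJyc, hv, hπ0⟩
  have hdata := h.dataBound_toViscousFlow hℓ₀ hJlow (fun y hy => (hρ y hy).2) hπ hJ hlength
    hmass henergy hG
  refine csSup_le ((nonempty_Icc.2 hT.le).image _) (forall_mem_image.2 fun t ht => ?_)
  have h0 : (0 : ℝ) ∈ Icc 0 T := left_mem_Icc.2 hT.le
  simpa only [h.integral_sq_toViscousFlow_Jy ht, h.integral_sq_toViscousFlow_py ht,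
    h.integral_sq_toViscousFlow_Jy h0, h.integral_sq_toViscousFlow_py h0]
    using hestimate L h.toViscousFlow hdata t ht

/-- (Proposition 2.6: `L^∞(0,T;H¹)`-type estimate on `∂_y J` and
`∂_y π`.) The constant `C` depends only on `γ, μ, ρ̄, ℓ₀, J̲, J̄, m₀, ‖π₀‖_∞, E₀, ‖G₀‖₂`
and `T`. -/
theorem H1_estimate_J_pi
    (L γ μ ρbar ℓ₀ Jlow Jbar m₀ P₀ E₀ K₀ T : ℝ)
    (hL : 0 < L) (hγ : 1 < γ) (hμ : 0 < μ) (hρbar : 0 < ρbar) (hℓ₀ : 0 < ℓ₀)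
    (hJlow : 0 < Jlow) (hJbar : 0 < Jbar) (hm₀ : 0 ≤ m₀) (hP₀ : 0 ≤ P₀)
    (hE₀ : 0 ≤ E₀) (hK₀ : 0 ≤ K₀) (hT : 0 < T) :
    ∃ C > 0, ∀ (ρ₀ ρ₀d : ℝ → ℝ) (J v π Jt vy vt w πy πt Jy : ℝ → ℝ → ℝ),
      (∀ y ∈ Icc (0:ℝ) L, HasDerivWithinAt ρ₀ (ρ₀d y) (Icc 0 L) y) →
      ContinuousOn ρ₀d (Icc 0 L) →
      (∀ y ∈ Icc (0:ℝ) L, 0 < ρ₀ y ∧ ρ₀ y ≤ ρbar) →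
      ClassicalSolution L T μ γ ρ₀ J v π Jt vy vt w πy πt →
      (∀ y ∈ Icc (0:ℝ) L, ∀ t ∈ Icc (0:ℝ) T,
        HasDerivWithinAt (fun x => J x t) (Jy y t) (Icc 0 L) y) →
      ContinuousOn (fun p : ℝ × ℝ => Jy p.1 p.2) (Icc 0 L ×ˢ Icc 0 T) →
      (∀ t ∈ Icc (0:ℝ) T, v 0 t = 0 ∧ v L t = 0) →
      (∀ y ∈ Icc (0:ℝ) L, 0 ≤ π y 0) →
      sSup ((fun y => |π y 0|) '' Icc (0:ℝ) L) ≤ P₀ →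
      (∀ y ∈ Icc (0:ℝ) L, Jlow ≤ J y 0 ∧ J y 0 ≤ Jbar) →
      (∫ y in (0:ℝ)..L, J y 0) = ℓ₀ →
      (∫ y in (0:ℝ)..L, ρ₀ y) = m₀ →
      (∫ y in (0:ℝ)..L, (ρ₀ y * (v y 0) ^ 2 / 2 + J y 0 * π y 0 / (γ - 1))) = E₀ →
      Real.sqrt (∫ y in (0:ℝ)..L, (μ * vy y 0 / J y 0 - π y 0) ^ 2) ≤ K₀ →
      sSup ((fun t => Real.sqrt (∫ y in (0:ℝ)..L, (Jy y t) ^ 2)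
              + Real.sqrt (∫ y in (0:ℝ)..L, (πy y t) ^ 2)) '' Icc (0:ℝ) T)
        ≤ C * (1 + Real.sqrt (∫ y in (0:ℝ)..L, (Jy y 0) ^ 2)
              + Real.sqrt (∫ y in (0:ℝ)..L, (πy y 0) ^ 2)) := by
  obtain ⟨C, hC, hestimate⟩ :=
    H1_estimate_J_pi_general γ μ ρbar ℓ₀ Jlow Jbar m₀ P₀ E₀ K₀ T hγ hμ hℓ₀ hJlow hT
  exact ⟨C, hC, fun ρ₀ _ J v π Jt vy vt w πy πt Jy hρd _ hρ hsol hJy hJyc hv hπ0 hπ hJ hlength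
    hmass henergy => hestimate L hL ρ₀ J v π Jt vy vt w πy πt Jy
      (fun y hy => (hρd y hy).continuousWithinAt) hρ hsol hJy hJyc hv hπ0 hπ hJ hlength.ge
      hmass.le henergy.le⟩
end
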